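/- arXiv:1909.05924 — 2 statements merged into one kernel-verified Lean document; each statement's English description precedes it below -/
import Mathlib

section
/- For every even n ≥ 2 and every m > 1, the n-th symmetrized topological complexity of the m-sphere equals n+1: TC^Σ_n(S^m) = n+1, where S^m is the unit sphere in ℝ^{m+1}. -/
open unitInterval

noncomputable section

/-- The point `j/(n-1)` of the unit interval, for `j : Fin n`.
These are the `n` evaluation points `0, 1/(n-1), …, (n-2)/(n-1), 1`. -/
def evalPt (n : ℕ) (j : Fin n) : unitInterval :=
  ⟨(j : ℝ) / ((n : ℝ) - 1), by
    have hn : 1 ≤ n := j.pos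
    rcases eq_or_lt_of_le hn with h | h
    · have hn1 : n = 1 := h.symm
      subst hn1
      simp [Fin.fin_one_eq_zero j]
    · have h1 : (0 : ℝ) < (n : ℝ) - 1 := by
        have : (1 : ℝ) < (n : ℝ) := by exact_mod_cast h
        linarith
      constructor
      · exact div_nonneg (Nat.cast_nonneg _) h1.le
      · rw [div_le_one h1]
        have hj : (j : ℕ) + 1 ≤ n := j.is_lt
        have : ((j : ℕ) : ℝ) + 1 ≤ (n : ℝ) := by exact_mod_cast hj
        linarith⟩

/-- Coordinate reversal (the involution `β`) on `n`-tuples: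
`β·(x_1,…,x_n) = (x_n,…,x_1)`. -/
def rtuple {X : Type*} {n : ℕ} (x : Fin n → X) : Fin n → X := fun j => x j.rev

/-- Path reversal (the involution `β`) on the free path space `C(I,X)`:
`(β·γ)(t) = γ(1-t)`. -/
def rpath {X : Type*} [TopologicalSpace X] (γ : C(unitInterval, X)) : C(unitInterval, X) :=
  γ.comp ⟨unitInterval.symm, unitInterval.continuous_symm⟩

/-- `X^n` can be covered by `k` open sets, on each of which there is a continuous
section of the evaluation map `e_n : C(I,X) → X^n`,
`γ ↦ (γ(0), γ(1/(n-1)), …, γ(1))`. -/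
def HasPlanners (X : Type*) [TopologicalSpace X] (n k : ℕ) : Prop :=
  ∃ U : Fin k → Set (Fin n → X),
    (∀ i, IsOpen (U i)) ∧ (⋃ i, U i) = Set.univ ∧
    (∀ i, ∃ s : C(U i, C(unitInterval, X)),
      ∀ x : U i, ∀ j : Fin n, s x (evalPt n j) = (x : Fin n → X) j)

/-- The `n`-th (ordinary, higher) topological complexity `TC_n(X)`, as a value in `ℕ∞`. -/
def TCn (X : Type*) [TopologicalSpace X] (n : ℕ) : ℕ∞ :=
  sInf {k : ℕ∞ | ∃ m : ℕ, (m : ℕ∞) = k ∧ HasPlanners X n m}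

/-- `X^n` can be covered by `k` β-invariant open sets, on each of which there is a
continuous β-equivariant section of the evaluation map `e_n : C(I,X) → X^n`
(a bidirectional motion planner). -/
def HasBidirPlanners (X : Type*) [TopologicalSpace X] (n k : ℕ) : Prop :=
  ∃ U : Fin k → Set (Fin n → X),
    (∀ i, IsOpen (U i)) ∧ (⋃ i, U i) = Set.univ ∧
    (∀ i, ∀ x ∈ U i, rtuple x ∈ U i) ∧
    (∀ i, ∃ s : C(U i, C(unitInterval, X)),
      (∀ x : U i, ∀ j : Fin n, s x (evalPt n j) = (x : Fin n → X) j) ∧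
      (∀ x : U i, ∀ hx : rtuple (x : Fin n → X) ∈ U i,
        s ⟨rtuple (x : Fin n → X), hx⟩ = rpath (s x)))

/-- The `n`-th bidirectional topological complexity `TC^β_n(X)`, as a value in `ℕ∞`. -/
def TCbeta (X : Type*) [TopologicalSpace X] (n : ℕ) : ℕ∞ :=
  sInf {k : ℕ∞ | ∃ m : ℕ, (m : ℕ∞) = k ∧ HasBidirPlanners X n m}

/-- The action of a permutation `sg ∈ Σ_n` on `n`-tuples (by permuting coordinates). -/
def permTuple {X : Type*} {n : ℕ} (sg : Equiv.Perm (Fin n)) (x : Fin n → X) : Fin n → X :=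
  fun j => x (sg j)

/-- `X^n` can be covered by `k` `Σ_n`-invariant open sets, on each of which there is a
continuous `Σ_n`-equivariant section of `E_n : X^{J_n} → X^n`,
`(α_1,…,α_n) ↦ (α_1(1),…,α_n(1))`, where `X^{J_n}` is the space of `n`-tuples of paths
with a common initial point. -/
def HasSymPlanners (X : Type*) [TopologicalSpace X] (n k : ℕ) : Prop :=
  ∃ U : Fin k → Set (Fin n → X),
    (∀ i, IsOpen (U i)) ∧ (⋃ i, U i) = Set.univ ∧
    (∀ i, ∀ sg : Equiv.Perm (Fin n), ∀ x ∈ U i, permTuple sg x ∈ U i) ∧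
    (∀ i, ∃ s : C(U i, Fin n → C(unitInterval, X)),
      (∀ x : U i, ∀ j j' : Fin n, s x j 0 = s x j' 0) ∧
      (∀ x : U i, ∀ j : Fin n, s x j 1 = (x : Fin n → X) j) ∧
      (∀ x : U i, ∀ sg : Equiv.Perm (Fin n),
        ∀ hx : permTuple sg (x : Fin n → X) ∈ U i,
        s ⟨permTuple sg (x : Fin n → X), hx⟩ = permTuple sg (s x)))

/-- The `n`-th symmetrized topological complexity `TC^Σ_n(X)`, as a value in `ℕ∞`. -/
def TCsym (X : Type*) [TopologicalSpace X] (n : ℕ) : ℕ∞ :=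
  sInf {k : ℕ∞ | ∃ m : ℕ, (m : ℕ∞) = k ∧ HasSymPlanners X n m}

/-- The unit sphere `S^m ⊂ ℝ^{m+1}`. -/
abbrev Sph (m : ℕ) : Type :=
  Metric.sphere (0 : EuclideanSpace ℝ (Fin (m + 1))) 1

end

/-!
Upper bound: for distinct points `q_0, …, q_n` the sets `{x | ∀ j, x j ≠ q_i}` cover `(S^m)^n` by
the pigeonhole principle, and a contraction of `S^m ∖ {q_i}` gives a symmetric planner on each of
them.

Lower bound: let `ξ` be a mod 2 Alexander–Spanier cocycle that represents the generator of
`H^m(S^m)`. The cocycle `y = ∑ j, pr_j^* ξ` is `Σ_n`-invariant. A symmetric planner deforms the `n`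
coordinates equivariantly to a common point, where `y` becomes `n * ξ = 0` as `n` is even, so `y` is
the coboundary of an invariant cochain on each set of the cover. If there are at most `n` sets, then
the cup power `y ^ n` is the coboundary of an invariant cochain on small simplices. Pull this back
along `(S^1)^(n * m) → (S^m)^n` to a fine triangulation of the torus, and sum over the
`Σ_n`-orbits of top simplices. The coboundary of an invariant cochain sums to zero: since `1 < m`,
no permutation in `Σ_n` acts on the `n * m` circles as a transposition, so the two simplices at an
inner face lie in different orbits and cancel. On the other hand `y ^ n` is nonzero on exactly one
orbit.
-/

namespace SymTC

open Finset

/-! ### Cochains -/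

/-- Mod 2 Alexander–Spanier cochains of all degrees at once, as functions of an infinite sequence of
points: a cochain of degree `a - 1` is one with `DependsOn f (Set.Iio a)`, and `a` is its *size*. -/
abbrev Cochain (X : Type*) := (ℕ → X) → ZMod 2

section Cochain

variable {X : Type*}

/-- The sequence `x` with its `k`-th term removed. -/
def face (k : ℕ) (x : ℕ → X) : ℕ → X := fun i => x (if i < k then i else i + 1)

/-- The sequence `x` without its first `d` terms. -/
def tail (d : ℕ) (x : ℕ → X) : ℕ → X := fun i => x (d + i)

/-- The coboundary of cochains of size `a`. -/
def coboundary (a : ℕ) : Cochain X →+ Cochain X where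
  toFun f x := ∑ k ∈ range (a + 1), f (face k x)
  map_zero' := funext fun _ => sum_const_zero
  map_add' _ _ := funext fun _ => sum_add_distrib

/-- The cup product, for a first factor of degree `d`. -/
def cup (d : ℕ) (f g : Cochain X) : Cochain X := fun x => f x * g (tail d x)

/-- The iterated cup product of the first `i` terms of a sequence of cochains of degree `m`. -/
def cupProd (m : ℕ) (z : ℕ → Cochain X) (i : ℕ) : Cochain X :=
  fun x => ∏ j ∈ range i, z j (tail (j * m) x)

lemma coboundary_apply (a : ℕ) (f : Cochain X) (x : ℕ → X) :
    coboundary a f x = ∑ k ∈ range (a + 1), f (face k x) := rfl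

lemma face_apply_of_lt {k i : ℕ} (h : i < k) (x : ℕ → X) : face k x i = x i := by
  simp [face, h]

lemma face_apply_of_le {k i : ℕ} (h : k ≤ i) (x : ℕ → X) : face k x i = x (i + 1) := by
  simp [face, h.not_gt]

lemma tail_zero (x : ℕ → X) : tail 0 x = x := by
  funext i; simp [tail]

lemma tail_face_of_le {d k : ℕ} (h : k ≤ d) (x : ℕ → X) : tail d (face k x) = tail (d + 1) x := by
  funext i
  simp only [tail]
  rw [face_apply_of_le (by omega), add_right_comm]

lemma tail_face_add (d k : ℕ) (x : ℕ → X) : tail d (face (d + k) x) = face k (tail d x) := by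
  funext i
  simp only [tail, face, add_lt_add_iff_left]
  split_ifs <;> rfl

lemma face_face {k l : ℕ} (h : k ≤ l) (x : ℕ → X) :
    face l (face k x) = face k (face (l + 1) x) := by
  funext i
  simp only [face]
  congr 1
  split_ifs <;> omega

lemma apply_face_of_le {a k : ℕ} {f : Cochain X} (hf : DependsOn f (Set.Iio a)) (h : a ≤ k)
    (x : ℕ → X) : f (face k x) = f x :=
  hf fun _ hi => face_apply_of_lt (lt_of_lt_of_le hi h) x

lemma dependsOn_coboundary {a : ℕ} {f : Cochain X} (hf : DependsOn f (Set.Iio a)) :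
    DependsOn (coboundary a f) (Set.Iio (a + 1)) := by
  intro x y hxy
  simp only [coboundary_apply]
  refine sum_congr rfl fun k _ => hf fun i (hi : i < a) => hxy _ ?_
  rw [Set.mem_Iio]
  split_ifs <;> omega

lemma dependsOn_add {a : ℕ} {f g : Cochain X} (hf : DependsOn f (Set.Iio a))
    (hg : DependsOn g (Set.Iio a)) : DependsOn (f + g) (Set.Iio a) :=
  fun _ _ hxy => congrArg₂ (· + ·) (hf hxy) (hg hxy)

lemma dependsOn_cup {d b : ℕ} {f g : Cochain X} (hf : DependsOn f (Set.Iio (d + 1)))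
    (hg : DependsOn g (Set.Iio b)) (hb : 0 < b) : DependsOn (cup d f g) (Set.Iio (d + b)) :=
  fun _ _ hxy => congrArg₂ (· * ·)
    (hf fun i (hi : i < d + 1) => hxy i (by simp only [Set.mem_Iio]; omega))
    (hg fun i (hi : i < b) => hxy (d + i) (by simp only [Set.mem_Iio]; omega))

theorem coboundary_cup {d : ℕ} (b : ℕ) {f : Cochain X} (g : Cochain X)
    (hf : DependsOn f (Set.Iio (d + 1))) :
    coboundary (d + b) (cup d f g) = cup (d + 1) (coboundary (d + 1) f) g
      + cup d f (coboundary b g) := by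
  funext x
  have first_faces : ∑ k ∈ range (d + 1), cup d f g (face k x)
      = (∑ k ∈ range (d + 1), f (face k x)) * g (tail (d + 1) x) := by
    rw [sum_mul]
    refine sum_congr rfl fun k hk => ?_
    rw [cup, tail_face_of_le (by simpa [Nat.lt_succ_iff] using hk)]
  have last_faces : ∑ k ∈ range b, cup d f g (face (d + 1 + k) x)
      = f x * ∑ k ∈ range b, g (face (k + 1) (tail d x)) := by
    rw [mul_sum]
    refine sum_congr rfl fun k _ => ?_
    rw [cup, apply_face_of_le hf (by omega), add_assoc, add_comm 1, tail_face_add]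
  have middle : face 0 (tail d x) = tail (d + 1) x := by
    rw [← tail_face_add, add_zero, tail_face_of_le le_rfl]
  rw [coboundary_apply, show d + b + 1 = d + 1 + b by omega, sum_range_add, first_faces, last_faces]
  simp only [Pi.add_apply, cup, coboundary_apply]
  rw [sum_range_succ _ (d + 1), sum_range_succ' _ b, apply_face_of_le hf le_rfl, middle]
  linear_combination -CharTwo.add_self_eq_zero (f x * g (tail (d + 1) x))

theorem coboundary_coboundary (a : ℕ) (f : Cochain X) :
    coboundary (a + 1) (coboundary a f) = 0 := by
  funext x
  simp only [coboundary_apply, Pi.zero_apply]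
  rw [← sum_product']
  refine sum_involution (fun p _ => if p.1 ≤ p.2 then (p.2 + 1, p.1) else (p.2, p.1 - 1))
    ?_ ?_ ?_ ?_
  · rintro ⟨k, l⟩ _
    dsimp only
    split_ifs with h
    · rw [face_face h]
      exact CharTwo.add_self_eq_zero _
    · obtain ⟨k, rfl⟩ : ∃ j, k = j + 1 := ⟨k - 1, by omega⟩
      rw [Nat.add_sub_cancel, face_face (k := l) (by omega)]
      exact CharTwo.add_self_eq_zero _
  · rintro ⟨k, l⟩ _ _
    dsimp only
    split_ifs <;> simp only [ne_eq, Prod.mk.injEq] <;> omega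
  · rintro ⟨k, l⟩ hkl
    simp only [mem_product, mem_range] at hkl
    dsimp only
    split_ifs <;> simp only [mem_product, mem_range] <;> omega
  · rintro ⟨k, l⟩ _
    dsimp only
    by_cases h : k ≤ l
    · simp [h]
    · simp [h, show l ≤ k - 1 by omega, show k - 1 + 1 = k by omega]

lemma cupProd_zero (m : ℕ) (z : ℕ → Cochain X) : cupProd m z 0 = 1 :=
  funext fun _ => prod_range_zero _

lemma cupProd_one (m : ℕ) (z : ℕ → Cochain X) : cupProd m z 1 = z 0 := by
  funext x; simp [cupProd, tail_zero]

lemma cupProd_succ (m : ℕ) (z : ℕ → Cochain X) (i : ℕ) :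
    cupProd m z (i + 1) = cup (i * m) (cupProd m z i) (z i) := by
  funext x; simp only [cupProd, cup, prod_range_succ]

end Cochain

/-! ### Invariant cohomology -/

section Invariant

variable {X G : Type*} {A : G → X → X} {S : Set (ℕ → X)}

/-- Invariance of a cochain under a family of self-maps. -/
def IsInvariant (A : G → X → X) (f : Cochain X) : Prop := ∀ g x, f (A g ∘ x) = f x

/-- `f` is an invariant cocycle of degree `a`, where only sequences in `S` are required to satisfy
the cocycle identity. -/
structure IsInvariantCocycle (A : G → X → X) (S : Set (ℕ → X)) (a : ℕ) (f : Cochain X) : Prop where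
  dependsOn : DependsOn f (Set.Iio (a + 1))
  invariant : IsInvariant A f
  coboundary_eq_zero : ∀ x ∈ S, coboundary (a + 1) f x = 0

/-- On sequences in `S`, the cochains `f` and `f'` of degree `a` differ by the coboundary of an
invariant cochain. -/
def Cohomologous (A : G → X → X) (S : Set (ℕ → X)) (a : ℕ) (f f' : Cochain X) : Prop :=
  ∃ t : Cochain X, DependsOn t (Set.Iio a) ∧ IsInvariant A t ∧
    ∀ x ∈ S, f x + f' x = coboundary a t x

/-- A set of sequences is tail-closed if it contains all tails of its members. -/
def TailClosed (S : Set (ℕ → X)) : Prop := ∀ d, ∀ x ∈ S, tail d x ∈ S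

lemma isInvariant_coboundary {f : Cochain X} (hf : IsInvariant A f) (a : ℕ) :
    IsInvariant A (coboundary a f) := by
  intro g x
  simp only [coboundary_apply]
  exact sum_congr rfl fun k _ => hf g (face k x)

lemma isInvariant_add {f f' : Cochain X} (hf : IsInvariant A f) (hf' : IsInvariant A f') :
    IsInvariant A (f + f') := fun g x => congrArg₂ (· + ·) (hf g x) (hf' g x)

lemma isInvariant_cup {f f' : Cochain X} (hf : IsInvariant A f) (hf' : IsInvariant A f') (d : ℕ) :
    IsInvariant A (cup d f f') := fun g x => congrArg₂ (· * ·) (hf g x) (hf' g (tail d x))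

lemma isInvariant_cupProd {z : ℕ → Cochain X} (hz : ∀ j, IsInvariant A (z j)) (m i : ℕ) :
    IsInvariant A (cupProd m z i) := fun g x => prod_congr rfl fun j _ => hz j g (tail (j * m) x)

lemma IsInvariantCocycle.cup {p q : ℕ} {f g : Cochain X} (hS : TailClosed S)
    (hf : IsInvariantCocycle A S p f) (hg : IsInvariantCocycle A S q g) :
    IsInvariantCocycle A S (p + q) (cup p f g) where
  dependsOn := dependsOn_cup hf.dependsOn hg.dependsOn q.succ_pos
  invariant := isInvariant_cup hf.invariant hg.invariant p
  coboundary_eq_zero x hx := by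
    rw [add_assoc, coboundary_cup _ _ hf.dependsOn, Pi.add_apply, SymTC.cup, SymTC.cup,
      hf.coboundary_eq_zero x hx, hg.coboundary_eq_zero _ (hS p x hx), zero_mul, mul_zero, add_zero]

lemma IsInvariantCocycle.cupProd {m : ℕ} {z : ℕ → Cochain X} (hS : TailClosed S)
    (hz : ∀ j, IsInvariantCocycle A S m (z j)) (i : ℕ) :
    IsInvariantCocycle A S (i * m) (cupProd m z i) := by
  induction i with
  | zero =>
    rw [cupProd_zero, zero_mul]
    exact ⟨fun _ _ _ => rfl, fun _ _ => rfl, fun _ _ => CharTwo.add_self_eq_zero 1⟩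
  | succ i ih =>
    rw [cupProd_succ, Nat.succ_mul]
    exact ih.cup hS (hz i)

lemma IsInvariantCocycle.add_coboundary {m : ℕ} {f h : Cochain X} (hf : IsInvariantCocycle A S m f)
    (hh : DependsOn h (Set.Iio m)) (hA : IsInvariant A h) :
    IsInvariantCocycle A S m (f + coboundary m h) where
  dependsOn := dependsOn_add hf.dependsOn (dependsOn_coboundary hh)
  invariant := isInvariant_add hf.invariant (isInvariant_coboundary hA m)
  coboundary_eq_zero x hx := by
    rw [map_add, coboundary_coboundary, add_zero, hf.coboundary_eq_zero x hx]

lemma cohomologous_add_coboundary {m : ℕ} (f : Cochain X) {h : Cochain X}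
    (hh : DependsOn h (Set.Iio m)) (hA : IsInvariant A h) :
    Cohomologous A S m f (f + coboundary m h) :=
  ⟨h, hh, hA, fun x _ => by rw [Pi.add_apply, CharTwo.add_cancel_left]⟩

theorem Cohomologous.cup {p q : ℕ} (hp : 0 < p) (hq : 0 < q) {f f' g g' : Cochain X}
    (hS : TailClosed S) (hf : Cohomologous A S p f f') (hg : Cohomologous A S q g g')
    (hf' : IsInvariantCocycle A S p f') (hg₀ : IsInvariantCocycle A S q g) :
    Cohomologous A S (p + q) (cup p f g) (cup p f' g') := by
  obtain ⟨t, t_dep, t_inv, ht⟩ := hf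
  obtain ⟨s, s_dep, s_inv, hs⟩ := hg
  obtain ⟨d, rfl⟩ : ∃ d, p = d + 1 := ⟨p - 1, by omega⟩
  have hsize : d + 1 + q = d + (q + 1) := by omega
  refine ⟨SymTC.cup d t g + SymTC.cup (d + 1) f' s, dependsOn_add ?_ ?_,
    isInvariant_add (isInvariant_cup t_inv hg₀.invariant _)
      (isInvariant_cup hf'.invariant s_inv _), fun x hx => ?_⟩
  · rw [hsize]
    exact dependsOn_cup t_dep hg₀.dependsOn q.succ_pos
  · exact dependsOn_cup hf'.dependsOn s_dep hq
  · rw [map_add, coboundary_cup q s hf'.dependsOn, hsize, coboundary_cup (q + 1) g t_dep]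
    simp only [SymTC.cup, Pi.add_apply]
    rw [← ht x hx, ← hs _ (hS _ x hx), hf'.coboundary_eq_zero x hx,
      hg₀.coboundary_eq_zero _ (hS d x hx)]
    linear_combination -CharTwo.add_self_eq_zero (f' x * g (tail (d + 1) x))

theorem Cohomologous.cupProd {m : ℕ} (hm : 0 < m) {y z : ℕ → Cochain X} (hS : TailClosed S)
    (hy : ∀ j, IsInvariantCocycle A S m (y j)) (hz : ∀ j, IsInvariantCocycle A S m (z j))
    (hyz : ∀ j, Cohomologous A S m (y j) (z j)) {i : ℕ} (hi : 1 ≤ i) :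
    Cohomologous A S (i * m) (cupProd m y i) (cupProd m z i) := by
  induction i, hi using Nat.le_induction with
  | base => simpa only [cupProd_one, one_mul] using hyz 0
  | succ i hi ih =>
    simp only [cupProd_succ, Nat.succ_mul]
    exact ih.cup (Nat.mul_pos hi hm) hm hS (hyz i) (.cupProd hS hz i) (hy i)

/-- The sequences with all mutual distances less than `ε`. -/
def smallSeqs (X : Type*) [PseudoMetricSpace X] (ε : ℝ) : Set (ℕ → X) :=
  {x | ∀ i j, dist (x i) (x j) < ε}

lemma tailClosed_smallSeqs (X : Type*) [PseudoMetricSpace X] (ε : ℝ) :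
    TailClosed (smallSeqs X ε) := fun _ _ hx _ _ => hx _ _

end Invariant

/-! ### The prism operator -/

section Prism

variable {X Y : Type*}

/-- The vertices `f x₀, …, f x_a, g x_a, g x_{a+1}, …` of the `a`-th simplex of the prism spanned by
`f ∘ x` and `g ∘ x`. -/
def prismVertices (f g : X → Y) (a : ℕ) (x : ℕ → X) : ℕ → Y :=
  fun i => if i ≤ a then f (x i) else g (x (i - 1))

/-- The prism operator on cochains of degree `m`, which is a chain homotopy between the pullbacks
along `f` and `g`. -/
def prism (m : ℕ) (f g : X → Y) (ξ : Cochain Y) : Cochain X :=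
  fun x => ∑ a ∈ range m, ξ (prismVertices f g a x)

lemma face_prismVertices_succ {a k : ℕ} (h : k ≤ a) (f g : X → Y) (x : ℕ → X) :
    face k (prismVertices f g (a + 1) x) = prismVertices f g a (face k x) := by
  funext i
  simp only [face, prismVertices]
  split_ifs <;> first | rfl | omega | (congr 2; omega)

lemma face_succ_prismVertices {a k : ℕ} (h : a < k) (f g : X → Y) (x : ℕ → X) :
    face (k + 1) (prismVertices f g a x) = prismVertices f g a (face k x) := by
  funext i
  simp only [face, prismVertices]
  split_ifs <;> first | rfl | omega | (congr 2; omega)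

lemma face_self_prismVertices (f g : X → Y) (a : ℕ) (x : ℕ → X) :
    face a (prismVertices f g a x) = fun i => if i < a then f (x i) else g (x i) := by
  funext i
  simp only [face, prismVertices]
  split_ifs <;> first | rfl | omega

lemma face_self_succ_prismVertices (f g : X → Y) (a : ℕ) (x : ℕ → X) :
    face (a + 1) (prismVertices f g a x) = fun i => if i < a + 1 then f (x i) else g (x i) := by
  funext i
  simp only [face, prismVertices]
  split_ifs <;> first | rfl | omega

lemma coboundary_prismVertices {m a : ℕ} (ha : a ≤ m) (f g : X → Y) (ξ : Cochain Y) (x : ℕ → X) :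
    coboundary (m + 1) ξ (prismVertices f g a x)
      = ∑ k ∈ range a, ξ (face k (prismVertices f g a x))
        + (ξ (fun i => if i < a then f (x i) else g (x i))
          + ξ (fun i => if i < a + 1 then f (x i) else g (x i)))
        + ∑ k ∈ range (m - a), ξ (prismVertices f g a (face (a + 1 + k) x)) := by
  rw [coboundary_apply, show m + 1 + 1 = a + 2 + (m - a) by omega, sum_range_add, sum_range_succ,
    sum_range_succ, face_self_prismVertices, face_self_succ_prismVertices, add_assoc (∑ _ ∈ _, _)]
  refine congrArg _ (sum_congr rfl fun k _ => ?_)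
  rw [← face_succ_prismVertices (by omega), show a + 1 + k + 1 = a + 2 + k by omega]

lemma coboundary_prism (m : ℕ) (f g : X → Y) (ξ : Cochain Y) (x : ℕ → X) :
    coboundary m (prism m f g ξ) x
      = ∑ a ∈ range m, ∑ k ∈ range (a + 1), ξ (prismVertices f g a (face k x))
        + ∑ a ∈ range m, ∑ k ∈ range (m - a), ξ (prismVertices f g a (face (a + 1 + k) x)) := by
  simp only [coboundary_apply, prism]
  rw [sum_comm, ← sum_add_distrib]
  refine sum_congr rfl fun a ha => ?_
  rw [← sum_range_add (fun k => ξ (prismVertices f g a (face k x)))]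
  rw [mem_range] at ha
  congr 2
  omega

theorem coboundary_prism_add {m : ℕ} {ξ : Cochain Y} (hξ : DependsOn ξ (Set.Iio (m + 1)))
    (f g : X → Y) (x : ℕ → X) :
    coboundary m (prism m f g ξ) x
      + ∑ a ∈ range (m + 1), coboundary (m + 1) ξ (prismVertices f g a x)
      = ξ (f ∘ x) + ξ (g ∘ x) := by
  set mixed : ℕ → ZMod 2 := fun a => ξ (fun i => if i < a then f (x i) else g (x i))
  have mixed_zero : mixed 0 = ξ (g ∘ x) := rfl
  have mixed_last : mixed (m + 1) = ξ (f ∘ x) := hξ fun i (hi : i < m + 1) => by simp [hi]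
  have telescope : ∑ a ∈ range (m + 1), (mixed a + mixed (a + 1)) = ξ (f ∘ x) + ξ (g ∘ x) := by
    rw [← mixed_zero, ← mixed_last, ← CharTwo.sub_eq_add, ← sum_range_sub mixed]
    exact sum_congr rfl fun a _ => by rw [add_comm, CharTwo.sub_eq_add]
  have lower : ∑ a ∈ range (m + 1), ∑ k ∈ range a, ξ (face k (prismVertices f g a x))
      = ∑ a ∈ range m, ∑ k ∈ range (a + 1), ξ (prismVertices f g a (face k x)) := by
    rw [sum_range_succ', sum_range_zero, add_zero]
    refine sum_congr rfl fun a _ => sum_congr rfl fun k hk => ?_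
    rw [face_prismVertices_succ (Nat.lt_succ_iff.mp (mem_range.mp hk))]
  have upper : ∑ a ∈ range (m + 1), ∑ k ∈ range (m - a),
        ξ (prismVertices f g a (face (a + 1 + k) x))
      = ∑ a ∈ range m, ∑ k ∈ range (m - a), ξ (prismVertices f g a (face (a + 1 + k) x)) := by
    rw [sum_range_succ, Nat.sub_self, sum_range_zero, add_zero]
  rw [sum_congr rfl fun a ha => coboundary_prismVertices (Nat.lt_succ_iff.mp (mem_range.mp ha))
    f g ξ x, sum_add_distrib, sum_add_distrib, telescope, lower, upper, coboundary_prism]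
  set p := ∑ a ∈ range m, ∑ k ∈ range (a + 1), ξ (prismVertices f g a (face k x))
  set q := ∑ a ∈ range m, ∑ k ∈ range (m - a), ξ (prismVertices f g a (face (a + 1 + k) x))
  linear_combination CharTwo.add_self_eq_zero p + CharTwo.add_self_eq_zero q

theorem coboundary_sum_prism {m : ℕ} {ξ : Cochain Y} (hξ : DependsOn ξ (Set.Iio (m + 1)))
    (f : ℕ → X → Y) (M : ℕ) (x : ℕ → X)
    (hx : ∀ l < M, ∀ a, coboundary (m + 1) ξ (prismVertices (f (l + 1)) (f l) a x) = 0) :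
    coboundary m (∑ l ∈ range M, prism m (f (l + 1)) (f l) ξ) x
      = ξ (f M ∘ x) + ξ (f 0 ∘ x) := by
  have one_step : ∀ l < M, coboundary m (prism m (f (l + 1)) (f l) ξ) x
      = ξ (f (l + 1) ∘ x) - ξ (f l ∘ x) := fun l hl => by
    rw [CharTwo.sub_eq_add, ← coboundary_prism_add hξ, sum_eq_zero fun a _ => hx l hl a, add_zero]
  rw [map_sum, Finset.sum_apply, sum_congr rfl fun l hl => one_step l (mem_range.mp hl),
    sum_range_sub (fun l => ξ (f l ∘ x)), CharTwo.sub_eq_add]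

lemma dependsOn_prism {m : ℕ} {ξ : Cochain Y} (hξ : DependsOn ξ (Set.Iio (m + 1))) (f g : X → Y) :
    DependsOn (prism m f g ξ) (Set.Iio m) := by
  intro x y hxy
  refine sum_congr rfl fun a ha => hξ fun i (hi : i < m + 1) => ?_
  have ha := mem_range.mp ha
  simp only [prismVertices]
  split_ifs
  · rw [hxy i (show i < m by omega)]
  · rw [hxy (i - 1) (show i - 1 < m by omega)]

end Prism

/-! ### Symmetric motion planners -/

section Planner

lemma exists_subdivision {δ : ℝ} (hδ : 0 < δ) :
    ∃ (τ : ℕ → I) (M : ℕ), τ 0 = 0 ∧ τ M = 1 ∧ ∀ l, dist (τ l) (τ (l + 1)) < δ := by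
  obtain ⟨M, hM⟩ := Set.Icc.addNSMul_eq_right (zero_le_one' ℝ) (half_pos hδ)
  refine ⟨Set.Icc.addNSMul (zero_le_one' ℝ) (δ / 2), M, Subtype.ext (Set.Icc.addNSMul_zero _),
    Subtype.ext (hM M le_rfl), fun l => ?_⟩
  rw [dist_comm]
  exact (Set.Icc.abs_sub_addNSMul_le _ (half_pos hδ).le l
    ⟨Set.Icc.monotone_addNSMul _ (half_pos hδ).le l.le_succ, le_rfl⟩).trans_lt (half_lt_self hδ)

/-- A `Σ_n`-equivariant section over `U` of the map sending `n` paths with a common source to the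
`n`-tuple of their targets. -/
structure IsSymPlanner {Y : Type*} [TopologicalSpace Y] {n : ℕ} (U : Set (Fin n → Y))
    (s : C(U, Fin n → C(I, Y))) : Prop where
  source_eq : ∀ (x : U) (j j' : Fin n), s x j 0 = s x j' 0
  target_eq : ∀ (x : U) (j : Fin n), s x j 1 = (x : Fin n → Y) j
  equivariant : ∀ (x : U) (g : Equiv.Perm (Fin n)) (hx : permTuple g (x : Fin n → Y) ∈ U),
    s ⟨permTuple g (x : Fin n → Y), hx⟩ = permTuple g (s x)

section TotalPlanner

variable {Y : Type*} [TopologicalSpace Y] {n : ℕ} {U : Set (Fin n → Y)}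
  {s : C(U, Fin n → C(I, Y))}

open Classical in
/-- The planner `s` as a homotopy between self-maps of the whole of `Y^n`, with the junk value `x`
at points `x ∉ U`. -/
noncomputable def planPoint (s : C(U, Fin n → C(I, Y))) (x : Fin n → Y) (t : I) (j : Fin n) : Y :=
  if hx : x ∈ U then s ⟨x, hx⟩ j t else x j

lemma planPoint_of_mem {x : Fin n → Y} (hx : x ∈ U) (t : I) (j : Fin n) :
    planPoint s x t j = s ⟨x, hx⟩ j t := dif_pos hx

lemma planPoint_of_notMem {x : Fin n → Y} (hx : x ∉ U) (t : I) (j : Fin n) :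
    planPoint s x t j = x j := dif_neg hx

lemma IsSymPlanner.planPoint_one (hs : IsSymPlanner U s) (x : Fin n → Y) (j : Fin n) :
    planPoint s x 1 j = x j := by
  by_cases hx : x ∈ U
  · rw [planPoint_of_mem hx, hs.target_eq]
  · rw [planPoint_of_notMem hx]

lemma IsSymPlanner.planPoint_permTuple (hs : IsSymPlanner U s)
    (hU : ∀ g : Equiv.Perm (Fin n), ∀ x ∈ U, permTuple g x ∈ U) (g : Equiv.Perm (Fin n))
    (x : Fin n → Y) (t : I) (j : Fin n) :
    planPoint s (permTuple g x) t j = planPoint s x t (g j) := by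
  by_cases hx : x ∈ U
  · rw [planPoint_of_mem hx, planPoint_of_mem (hU g x hx), hs.equivariant ⟨x, hx⟩, permTuple]
  · have hgx : permTuple g x ∉ U := fun h => hx <| by
      have undo : permTuple g⁻¹ (permTuple g x) = x := by funext j; simp [permTuple]
      exact undo ▸ hU g⁻¹ _ h
    rw [planPoint_of_notMem hx, planPoint_of_notMem hgx, permTuple]

lemma IsSymPlanner.sum_planPoint_zero (hs : IsSymPlanner U s) (hn : Even n) (ξ : Cochain Y)
    {x : ℕ → Fin n → Y} (hx : ∀ i, x i ∈ U) : ∑ j, ξ ((planPoint s · 0 j) ∘ x) = 0 := by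
  have common : ∀ j j', ξ ((planPoint s · 0 j) ∘ x) = ξ ((planPoint s · 0 j') ∘ x) := fun j j' => by
    refine congrArg ξ (funext fun i => ?_)
    simp only [Function.comp_apply, planPoint_of_mem (hx i)]
    exact hs.source_eq _ j j'
  obtain rfl | hpos := n.eq_zero_or_pos
  · exact Fintype.sum_empty _
  · rw [sum_congr rfl fun j _ => common j ⟨0, hpos⟩, sum_const, card_univ, Fintype.card_fin,
      nsmul_eq_mul, hn.natCast_zmod_two, zero_mul]

lemma continuousOn_planPoint (s : C(U, Fin n → C(I, Y))) :
    ContinuousOn (fun p : (Fin n → Y) × I => planPoint s p.1 p.2) (U ×ˢ Set.univ) := by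
  rw [continuousOn_iff_continuous_domRestrict]
  have on_U : (U ×ˢ (Set.univ : Set I)).domRestrict (fun p => planPoint s p.1 p.2)
      = fun p j => s ⟨p.1.1, p.2.1⟩ j p.1.2 :=
    funext fun p => funext fun j => planPoint_of_mem p.2.1 _ _
  rw [on_U]
  fun_prop

end TotalPlanner

variable {Y : Type*} [PseudoMetricSpace Y] {n : ℕ}

lemma exists_dist_planPoint_lt {U K : Set (Fin n → Y)} (s : C(U, Fin n → C(I, Y)))
    (hK : IsCompact K) (hKU : K ⊆ U) {ε : ℝ} (hε : 0 < ε) :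
    ∃ δ > 0, ∀ x ∈ K, ∀ x' ∈ K, dist x x' < δ → ∀ t t' : I, dist t t' < δ →
      ∀ j, dist (planPoint s x t j) (planPoint s x' t' j) < ε := by
  have unif := (hK.prod isCompact_univ).uniformContinuousOn_of_continuous
    ((continuousOn_planPoint s).mono (Set.prod_mono_left hKU))
  obtain ⟨δ, hδ, close⟩ := Metric.uniformContinuousOn_iff.mp unif ε hε
  refine ⟨δ, hδ, fun x hx x' hx' hxx' t t' htt' j => (dist_le_pi_dist _ _ j).trans_lt ?_⟩
  exact close (x, t) ⟨hx, trivial⟩ (x', t') ⟨hx', trivial⟩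
    ((Prod.dist_eq ..).trans_lt (max_lt hxx' htt'))

lemma prismVertices_mem_smallSeqs {X : Type*} {f g : X → Y} {x : ℕ → X} {ε : ℝ}
    (hf : ∀ i j, dist (f (x i)) (f (x j)) < ε) (hg : ∀ i j, dist (g (x i)) (g (x j)) < ε)
    (hfg : ∀ i j, dist (f (x i)) (g (x j)) < ε) (a : ℕ) :
    prismVertices f g a x ∈ smallSeqs Y ε := by
  intro i i'
  simp only [prismVertices]
  split_ifs
  · exact hf _ _
  · exact hfg _ _
  · exact dist_comm (f _) _ ▸ hfg _ _
  · exact hg _ _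

/-- The sum of the pullbacks of `ξ` along the coordinate projections `Y^n → Y`. -/
def coordSum (n : ℕ) {Y : Type*} (ξ : Cochain Y) : Cochain (Fin n → Y) :=
  fun x => ∑ j, ξ (fun i => x i j)

/-- The planner deforms the coordinates of a point of `U` to a common point of `Y`, where the `n`
summands of `coordSum n ξ` cancel. -/
theorem IsSymPlanner.exists_coboundary_eq (hn : Even n) {m : ℕ} {ξ : Cochain Y}
    (hξ : DependsOn ξ (Set.Iio (m + 1))) {ε : ℝ} (hε : 0 < ε)
    (hd : ∀ x ∈ smallSeqs Y ε, coboundary (m + 1) ξ x = 0) {U K : Set (Fin n → Y)}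
    {s : C(U, Fin n → C(I, Y))} (hs : IsSymPlanner U s)
    (hU : ∀ g : Equiv.Perm (Fin n), ∀ x ∈ U, permTuple g x ∈ U) (hK : IsCompact K) (hKU : K ⊆ U) :
    ∃ δ > 0, ∃ h : Cochain (Fin n → Y), DependsOn h (Set.Iio m) ∧ IsInvariant permTuple h ∧
      ∀ x ∈ smallSeqs (Fin n → Y) δ, (∀ i, x i ∈ K) → coordSum n ξ x = coboundary m h x := by
  obtain ⟨δ, hδ, close⟩ := exists_dist_planPoint_lt s hK hKU hε
  obtain ⟨τ, M, τ_zero, τ_last, τ_step⟩ := exists_subdivision hδ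
  set F : Fin n → ℕ → (Fin n → Y) → Y := fun j l x => planPoint s x (τ l) j
  set P : Fin n → Cochain (Fin n → Y) := fun j => ∑ l ∈ range M, prism m (F j (l + 1)) (F j l) ξ
  refine ⟨δ, hδ, ∑ j, P j, ?_, ?_, ?_⟩
  · intro x y hxy
    simp only [P, Finset.sum_apply]
    exact sum_congr rfl fun j _ => sum_congr rfl fun l _ => dependsOn_prism hξ _ _ hxy
  · intro g x
    simp only [P, Finset.sum_apply]
    refine Eq.trans ?_ (Equiv.sum_comp g _)
    refine sum_congr rfl fun j _ => sum_congr rfl fun l _ => sum_congr rfl fun a _ =>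
      congrArg ξ (funext fun i => ?_)
    simp only [prismVertices, F, Function.comp_apply, hs.planPoint_permTuple hU]
  · intro x hx hxK
    have small : ∀ j l a, prismVertices (F j (l + 1)) (F j l) a x ∈ smallSeqs Y ε := by
      intro j l
      have near : ∀ t t' : I, dist t t' < δ → ∀ i i',
          dist (planPoint s (x i) t j) (planPoint s (x i') t' j) < ε :=
        fun t t' htt' i i' => close _ (hxK i) _ (hxK i') (hx i i') t t' htt' j
      have near_self : ∀ t : I, dist t t < δ := fun t => (dist_self t).trans_lt hδ
      exact prismVertices_mem_smallSeqs (near _ _ (near_self _)) (near _ _ (near_self _))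
        (near _ _ (dist_comm (τ l) _ ▸ τ_step l))
    have target : ∀ j, F j M ∘ x = fun i => x i j := fun j => funext fun i => by
      simp only [F, Function.comp_apply, τ_last, hs.planPoint_one]
    have source : ∑ j, ξ (F j 0 ∘ x) = 0 := by
      simp only [F, τ_zero]
      exact hs.sum_planPoint_zero hn ξ fun i => hKU (hxK i)
    rw [map_sum, Finset.sum_apply, sum_congr rfl fun j _ => coboundary_sum_prism hξ (F j) M x
      fun l _ a => hd _ (small j l a), sum_add_distrib, source, add_zero]
    simp only [coordSum, target]

end Planner

section CoordSum

variable {Y : Type*} {n m : ℕ} {ξ : Cochain Y}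

lemma smallSeqs_mono {X : Type*} [PseudoMetricSpace X] {δ ε : ℝ} (h : δ ≤ ε) :
    smallSeqs X δ ⊆ smallSeqs X ε := fun _ hx i j => (hx i j).trans_le h

lemma coboundary_coordSum (a : ℕ) (ξ : Cochain Y) (x : ℕ → Fin n → Y) :
    coboundary a (coordSum n ξ) x = ∑ j, coboundary a ξ (fun i => x i j) := by
  simp only [coboundary_apply, coordSum]
  exact sum_comm

lemma isInvariant_coordSum (n : ℕ) (ξ : Cochain Y) : IsInvariant permTuple (coordSum n ξ) :=
  fun g x => Equiv.sum_comp g fun j => ξ (fun i => x i j)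

lemma isInvariantCocycle_coordSum [PseudoMetricSpace Y] {ε : ℝ}
    (hξ : DependsOn ξ (Set.Iio (m + 1))) (hd : ∀ x ∈ smallSeqs Y ε, coboundary (m + 1) ξ x = 0) :
    IsInvariantCocycle permTuple (smallSeqs (Fin n → Y) ε) m (coordSum n ξ) where
  dependsOn _ _ hxy := sum_congr rfl fun j _ => hξ fun i hi => congrFun (hxy i hi) j
  invariant := isInvariant_coordSum n ξ
  coboundary_eq_zero x hx := by
    rw [coboundary_coordSum]
    exact sum_eq_zero fun j _ => hd _ fun i i' => (dist_le_pi_dist _ _ j).trans_lt (hx i i')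

variable [PseudoMetricSpace Y] [CompactSpace Y] {ε : ℝ} {k : ℕ}

lemma exists_coboundary_eq_of_hasSymPlanners (hn : Even n) (hξ : DependsOn ξ (Set.Iio (m + 1)))
    (hε : 0 < ε) (hd : ∀ x ∈ smallSeqs Y ε, coboundary (m + 1) ξ x = 0)
    (H : HasSymPlanners Y n k) :
    ∃ δ > 0, ∃ h : Fin k → Cochain (Fin n → Y), (∀ i, DependsOn (h i) (Set.Iio m)) ∧
      (∀ i, IsInvariant permTuple (h i)) ∧
      ∀ x ∈ smallSeqs (Fin n → Y) δ, ∃ i, ∀ d,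
        coordSum n ξ (tail d x) = coboundary m (h i) (tail d x) := by
  obtain ⟨U, U_open, U_cover, U_inv, planners⟩ := H
  obtain ⟨V, V_cover, V_open, V_sub⟩ :=
    exists_iUnion_eq_closure_subset U_open (fun _ => Set.toFinite _) U_cover
  have on_closure : ∀ i, ∃ δ > 0, ∃ h : Cochain (Fin n → Y), DependsOn h (Set.Iio m) ∧
      IsInvariant permTuple h ∧ ∀ x ∈ smallSeqs (Fin n → Y) δ, (∀ a, x a ∈ closure (V i)) →
        coordSum n ξ x = coboundary m h x := fun i => by
    obtain ⟨s, source_eq, target_eq, equivariant⟩ := planners i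
    exact IsSymPlanner.exists_coboundary_eq hn hξ hε hd ⟨source_eq, target_eq, equivariant⟩
      (U_inv i) isClosed_closure.isCompact (V_sub i)
  choose d d_pos h h_dep h_inv hh using on_closure
  obtain ⟨r, r_pos, hr⟩ :=
    lebesgue_number_lemma_of_metric (isCompact_univ (X := Fin n → Y)) V_open V_cover.ge
  have eventually_lt : ∀ a : ℝ, 0 < a → ∀ᶠ δ in nhdsWithin (0 : ℝ) (Set.Ioi 0), δ < a :=
    fun a ha => nhdsWithin_le_nhds (eventually_lt_nhds ha)
  obtain ⟨δ, ⟨δ_lt_d, δ_lt_r⟩, δ_pos⟩ :=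
    (((Filter.eventually_all.2 fun i => eventually_lt _ (d_pos i)).and
      (eventually_lt r r_pos)).and self_mem_nhdsWithin).exists
  refine ⟨δ, δ_pos, h, h_dep, h_inv, fun x hx => ?_⟩
  obtain ⟨i, hi⟩ := hr (x 0) (Set.mem_univ _)
  refine ⟨i, fun c => hh i _ (tailClosed_smallSeqs _ _ c _ (smallSeqs_mono (δ_lt_d i).le hx))
    fun a => subset_closure (hi ?_)⟩
  exact (hx _ _).trans δ_lt_r

/-- On each member of a cover by `k` invariant open sets with planners, `coordSum n ξ` is the
coboundary of an invariant cochain; modifying one factor of its `l`-th cup power by each of these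
coboundaries makes the power vanish. -/
theorem exists_cupProd_coordSum_eq_coboundary [Nonempty Y] (hn : Even n) (hm : 0 < m)
    (hξ : DependsOn ξ (Set.Iio (m + 1))) (hε : 0 < ε)
    (hd : ∀ x ∈ smallSeqs Y ε, coboundary (m + 1) ξ x = 0) (H : HasSymPlanners Y n k)
    {l : ℕ} (hkl : k ≤ l) :
    ∃ δ > 0, ∃ t : Cochain (Fin n → Y), DependsOn t (Set.Iio (l * m)) ∧ IsInvariant permTuple t ∧
      ∀ x ∈ smallSeqs (Fin n → Y) δ,
        cupProd m (fun _ => coordSum n ξ) l x = coboundary (l * m) t x := by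
  obtain ⟨δ, δ_pos, h, h_dep, h_inv, hh⟩ := exists_coboundary_eq_of_hasSymPlanners hn hξ hε hd H
  have k_pos : 0 < k := by
    obtain ⟨U, -, U_cover, -⟩ := H
    obtain ⟨i, -⟩ := Set.mem_iUnion.mp (U_cover.ge (Set.mem_univ fun _ => Classical.arbitrary Y))
    exact i.pos
  have : NeZero k := ⟨k_pos.ne'⟩
  have cocycle : IsInvariantCocycle permTuple (smallSeqs (Fin n → Y) (min δ ε)) m (coordSum n ξ) :=
    isInvariantCocycle_coordSum hξ fun x hx => hd x (smallSeqs_mono (min_le_right _ _) hx)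
  obtain ⟨t, t_dep, t_inv, ht⟩ := Cohomologous.cupProd hm (tailClosed_smallSeqs _ (min δ ε))
    (fun _ => cocycle)
    (fun j => cocycle.add_coboundary (h_dep (Fin.ofNat k j)) (h_inv (Fin.ofNat k j)))
    (fun j => cohomologous_add_coboundary _ (h_dep _) (h_inv _)) (k_pos.trans_le hkl)
  refine ⟨min δ ε, lt_min δ_pos hε, t, t_dep, t_inv, fun x hx => ?_⟩
  have vanish : cupProd m (fun j => coordSum n ξ + coboundary m (h (Fin.ofNat k j))) l x = 0 := by
    obtain ⟨i, hi⟩ := hh x (smallSeqs_mono (min_le_left _ _) hx)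
    refine prod_eq_zero (mem_range.mpr (i.isLt.trans_le hkl)) ?_
    simp only [Fin.ofNat_eq_cast, Fin.cast_val_eq_self, Pi.add_apply, hi]
    exact CharTwo.add_self_eq_zero _
  rw [← ht x hx, vanish, add_zero]

end CoordSum

/-! ### Sums over orbits -/

section OrbitSum

variable {G α R : Type*} [Group G] [MulAction G α]

lemma apply_out_eq {φ : α → R} (hφ : ∀ (g : G) a, φ (g • a) = φ a) (a : α) :
    φ (Quotient.out (Quotient.mk (MulAction.orbitRel G α) a)) = φ a := by
  obtain ⟨g, hg⟩ := MulAction.orbitRel_apply.mp (Quotient.mk_out (s := MulAction.orbitRel G α) a)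
  rw [← hg]
  exact hφ g a

variable (G) [Fintype (MulAction.orbitRel.Quotient G α)]

/-- The sum of `φ` over representatives of the orbits, which is intended for invariant `φ`. -/
noncomputable def orbitSum [AddCommMonoid R] (φ : α → R) : R :=
  ∑ q : MulAction.orbitRel.Quotient G α, φ (Quotient.out q)

lemma orbitSum_sum [AddCommMonoid R] {ι : Type*} (s : Finset ι) (φ : ι → α → R) :
    orbitSum G (fun a => ∑ i ∈ s, φ i a) = ∑ i ∈ s, orbitSum G (φ i) := sum_comm

theorem orbitSum_comp [AddCommMonoid R] {φ : α → R} (hφ : ∀ (g : G) a, φ (g • a) = φ a)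
    (e : α ≃ α) (he : ∀ (g : G) a, e (g • a) = g • e a) :
    orbitSum G (φ ∘ e) = orbitSum G φ := by
  have rel_iff : ∀ a b, MulAction.orbitRel G α a b ↔ MulAction.orbitRel G α (e a) (e b) := by
    intro a b
    simp only [MulAction.orbitRel_apply, MulAction.mem_orbit_iff, ← he, e.apply_eq_iff_eq]
  refine Fintype.sum_equiv (Quotient.congr e rel_iff) _ _ fun q => ?_
  induction q using Quotient.inductionOn with | _ a => ?_
  rw [Quotient.congr_mk, apply_out_eq hφ]
  exact apply_out_eq (φ := φ ∘ e) (fun g b => (congrArg φ (he g b)).trans (hφ g (e b))) a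

theorem orbitSum_eq_zero_of_involutive [Semiring R] [CharP R 2] {φ : α → R}
    (hφ : ∀ (g : G) a, φ (g • a) = φ a) {r : α → α} (hr : Function.Involutive r)
    (hrG : ∀ (g : G) a, r (g • a) = g • r a) (hφr : ∀ a, φ (r a) = φ a)
    (free : ∀ (g : G) a, r a ≠ g • a) : orbitSum G φ = 0 := by
  set r' : MulAction.orbitRel.Quotient G α → MulAction.orbitRel.Quotient G α :=
    Quotient.map r (by rintro a _ ⟨g, rfl⟩; exact ⟨g, (hrG g _).symm⟩)
  have r'_mk : ∀ a, r' (Quotient.mk _ a) = Quotient.mk _ (r a) := fun _ => rfl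
  refine sum_involution (fun q _ => r' q) ?_ ?_ (fun _ _ => mem_univ _) ?_ <;>
    intro q _ <;> induction q using Quotient.inductionOn with | _ a => ?_
  · rw [r'_mk, apply_out_eq hφ, apply_out_eq hφ, hφr, CharTwo.add_self_eq_zero]
  · intro _ h
    obtain ⟨g, hg⟩ := MulAction.orbitRel_apply.mp (Quotient.exact h)
    exact free g a hg.symm
  · rw [r'_mk, r'_mk, hr a]

theorem orbitSum_eq_of_support [AddCommMonoid R] {φ : α → R} (hφ : ∀ (g : G) a, φ (g • a) = φ a)
    (a₀ : α) (h : ∀ a, φ a ≠ 0 → ∃ g : G, g • a₀ = a) : orbitSum G φ = φ a₀ := by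
  rw [orbitSum, Fintype.sum_eq_single (Quotient.mk _ a₀), apply_out_eq hφ]
  intro q hq
  by_contra hne
  refine hq ?_
  rw [← Quotient.out_eq q]
  exact Quotient.sound (h _ hne)

end OrbitSum

/-! ### The Freudenthal triangulation of the discrete torus -/

/-- A top-dimensional simplex of the Freudenthal triangulation of the torus `(ℤ/N)^ι`: starting from
`base`, the coordinates are increased by `1` one after another, in the given `order`. -/
@[ext]
structure Simplex (ι : Type*) (N L : ℕ) where
  base : ι → ZMod N
  order : ι ≃ Fin L

namespace Simplex

variable {ι : Type*} {N L : ℕ}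

/-- The `i`-th vertex of a simplex, for `i ≤ L`. -/
def vertex (T : Simplex ι N L) (i : ℕ) : ι → ZMod N :=
  fun c => T.base c + if (T.order c : ℕ) < i then 1 else 0

instance [Finite ι] [NeZero N] : Finite (Simplex ι N L) :=
  .of_injective (fun T => (T.base, T.order)) fun _ _ h =>
    Simplex.ext (congrArg Prod.fst h) (congrArg Prod.snd h)

instance : MulAction (Equiv.Perm ι) (Simplex ι N L) where
  smul g T := ⟨T.base ∘ g.symm, g.symm.trans T.order⟩
  one_smul _ := rfl
  mul_smul _ _ _ := rfl

/-- The simplex with the same `base` in which the `a`-th and `b`-th steps are exchanged. -/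
def swapSteps (a b : Fin L) (T : Simplex ι N L) : Simplex ι N L :=
  ⟨T.base, T.order.trans (Equiv.swap a b)⟩

lemma swapSteps_involutive (a b : Fin L) :
    Function.Involutive (swapSteps a b : Simplex ι N L → Simplex ι N L) := fun _ =>
  Simplex.ext rfl (Equiv.ext fun _ => Equiv.swap_apply_self a b _)

lemma isSwap_of_swapSteps_eq_smul [DecidableEq ι] {a b : Fin L} (hab : a ≠ b)
    {g : Equiv.Perm ι} {T : Simplex ι N L} (h : swapSteps a b T = g • T) : g.IsSwap := by
  have order_eq : T.order.trans (Equiv.swap a b) = g.symm.trans T.order :=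
    congrArg Simplex.order h
  have symm_eq : g.symm = Equiv.swap (T.order.symm a) (T.order.symm b) := by
    rw [← Equiv.symm_trans_swap_trans, Equiv.symm_symm, order_eq, Equiv.trans_assoc,
      Equiv.self_trans_symm, Equiv.trans_refl]
  refine ⟨T.order.symm a, T.order.symm b, T.order.symm.injective.ne hab, ?_⟩
  rw [← g.symm_symm, symm_eq, Equiv.symm_swap]

lemma vertex_swapSteps {k : ℕ} (hk : k + 1 < L) (T : Simplex ι N L) {i : ℕ} (hi : i ≠ k + 1) :
    (swapSteps ⟨k, by omega⟩ ⟨k + 1, hk⟩ T).vertex i = T.vertex i := by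
  funext c
  simp only [vertex, swapSteps, Equiv.trans_apply, Equiv.swap_apply_def]
  congr 2
  split_ifs with h h' <;> simp only [*, Fin.ext_iff, eq_iff_iff] at * <;> omega

lemma face_vertex_swapSteps {k : ℕ} (hk : k + 1 < L) (T : Simplex ι N L) :
    face (k + 1) (swapSteps ⟨k, by omega⟩ ⟨k + 1, hk⟩ T).vertex = face (k + 1) T.vertex := by
  funext i
  exact vertex_swapSteps hk T (by split_ifs <;> omega)

lemma finRotate_apply_eq_zero_iff (x : Fin L) : (finRotate L x : ℕ) = 0 ↔ (x : ℕ) + 1 = L := by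
  cases L with
  | zero => exact x.elim0
  | succ L =>
    rw [coe_finRotate]
    simp only [Fin.ext_iff, Fin.val_last]
    split_ifs <;> simp [*]

/-- The simplex with the vertices `v_{-1}, v_0, …, v_{L-1}`, where `v_{-1}` is obtained from the
last vertex but one of `T` by subtracting `1` from all coordinates. -/
def rotate : Simplex ι N L ≃ Simplex ι N L where
  toFun T := ⟨fun c => T.base c - if (T.order c : ℕ) + 1 = L then 1 else 0,
    T.order.trans (finRotate L)⟩
  invFun T := ⟨fun c => T.base c + if (T.order c : ℕ) = 0 then 1 else 0,
    T.order.trans (finRotate L).symm⟩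
  left_inv T := Simplex.ext
    (funext fun c => by simp only [Equiv.trans_apply, finRotate_apply_eq_zero_iff, sub_add_cancel])
    (Equiv.ext fun c => (finRotate L).symm_apply_apply _)
  right_inv T := Simplex.ext
    (funext fun c => by
      simp only [Equiv.trans_apply, ← finRotate_apply_eq_zero_iff, Equiv.apply_symm_apply,
        add_sub_cancel_right])
    (Equiv.ext fun c => (finRotate L).apply_symm_apply _)

lemma vertex_rotate_succ {i : ℕ} (hi : i < L) (T : Simplex ι N L) :
    (rotate T).vertex (i + 1) = T.vertex i := by
  funext c
  obtain ⟨L, rfl⟩ : ∃ L', L = L' + 1 := ⟨L - 1, by omega⟩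
  simp only [vertex, rotate, Equiv.coe_fn_mk, Equiv.trans_apply, coe_finRotate, Fin.ext_iff,
    Fin.val_last]
  split_ifs <;> first | omega | simp

theorem orbitSum_coboundary_eq_zero [DecidableEq ι]
    {H : Subgroup (Equiv.Perm ι)} (hH : ∀ g ∈ H, ¬ g.IsSwap)
    [Fintype (MulAction.orbitRel.Quotient H (Simplex ι N L))] (hL : L ≠ 0)
    {t : Cochain (ι → ZMod N)} (ht : DependsOn t (Set.Iio L))
    (htH : IsInvariant (fun (g : H) v => v ∘ (g : Equiv.Perm ι)) t) :
    orbitSum H (fun T : Simplex ι N L => coboundary L t T.vertex) = 0 := by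
  have inv : ∀ k, ∀ (g : H) (T : Simplex ι N L),
      t (face k (g • T).vertex) = t (face k T.vertex) := fun k g T => htH g⁻¹ (face k T.vertex)
  have inner : ∀ k, k + 1 < L →
      orbitSum H (fun T : Simplex ι N L => t (face (k + 1) T.vertex)) = 0 := fun k hk =>
    orbitSum_eq_zero_of_involutive H (inv _) (swapSteps_involutive ⟨k, by omega⟩ ⟨k + 1, hk⟩)
      (fun _ _ => rfl) (fun T => congrArg t (face_vertex_swapSteps hk T))
      fun g T h => hH g g.2 (isSwap_of_swapSteps_eq_smul (by simp) h)
  have outer : orbitSum H (fun T : Simplex ι N L => t (face L T.vertex))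
      = orbitSum H (fun T : Simplex ι N L => t (face 0 T.vertex)) := by
    refine Eq.trans ?_ (orbitSum_comp H (inv 0) rotate fun _ _ => rfl)
    refine congrArg (orbitSum H) (funext fun T => ht fun i (hi : i < L) => ?_)
    rw [face_apply_of_lt hi, face_apply_of_le i.zero_le, vertex_rotate_succ hi]
  obtain ⟨L, rfl⟩ := Nat.exists_eq_succ_of_ne_zero hL
  simp only [coboundary_apply]
  rw [orbitSum_sum, sum_range_succ, sum_range_succ', outer,
    sum_eq_zero fun k hk => inner k (by simpa using hk), zero_add, CharTwo.add_self_eq_zero]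

end Simplex

/-- The permutations of `α × β` that permute the blocks `{a} × β`. -/
def blockPerms (α β : Type*) : Subgroup (Equiv.Perm (α × β)) where
  carrier := Set.range fun g : Equiv.Perm α => g.prodCongr (Equiv.refl β)
  one_mem' := ⟨1, rfl⟩
  mul_mem' := by
    rintro _ _ ⟨g, rfl⟩ ⟨h, rfl⟩
    exact ⟨g * h, rfl⟩
  inv_mem' := by
    rintro _ ⟨g, rfl⟩
    exact ⟨g⁻¹, rfl⟩

lemma not_isSwap_of_mem_blockPerms {α β : Type*} [DecidableEq α] [DecidableEq β] [Nontrivial β]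
    {g : Equiv.Perm (α × β)} (hg : g ∈ blockPerms α β) : ¬ g.IsSwap := by
  obtain ⟨g, rfl⟩ := hg
  rintro ⟨⟨a, b⟩, y, hne, h⟩
  obtain ⟨b', hb⟩ := exists_ne b
  have y_eq : (g a, b) = y := (DFunLike.congr_fun h (a, b)).trans (Equiv.swap_apply_left _ _)
  have moved : (a, b') ≠ (g a, b') := fun h' =>
    hne ((congrArg (fun z => (z.1, b)) h').trans y_eq)
  have fixed : (g a, b') = (a, b') := (DFunLike.congr_fun h (a, b')).trans <|
    Equiv.swap_apply_of_ne_of_ne (fun h' => hb (congrArg Prod.snd h'))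
      fun h' => hb (congrArg Prod.snd (h'.trans y_eq.symm))
  exact moved fixed.symm

/-! ### The fundamental cocycle of the sphere -/

section Flag

variable {X : Type*}

open Classical in
/-- The indicator function of `A`, as a cochain of degree `0`. -/
noncomputable def vertexIndicator (A : Set X) : Cochain X := fun x => if x 0 ∈ A then 1 else 0

lemma dependsOn_vertexIndicator (A : Set X) : DependsOn (vertexIndicator A) (Set.Iio 1) :=
  fun _ _ h => by rw [vertexIndicator, vertexIndicator, h 0 (Set.mem_Iio.mpr zero_lt_one)]

lemma vertexIndicator_ne_zero_iff {A : Set X} {x : ℕ → X} : vertexIndicator A x ≠ 0 ↔ x 0 ∈ A := by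
  simp [vertexIndicator]

lemma coboundary_vertexIndicator_ne_zero_iff {A : Set X} {x : ℕ → X} :
    coboundary 1 (vertexIndicator A) x ≠ 0 ↔ ¬ (x 0 ∈ A ↔ x 1 ∈ A) := by
  have two : (1 : ZMod 2) + 1 = 0 := CharTwo.add_self_eq_zero 1
  by_cases h₀ : x 0 ∈ A <;> by_cases h₁ : x 1 ∈ A <;>
    simp [coboundary_apply, sum_range_succ, vertexIndicator, face, h₀, h₁, two]

/-- The cochain of degree `m` that is dual to a chain of sets `A 0, …, A m`: it counts the simplices
that start in `A 0` and whose `k`-th edge crosses the boundary of `A (k + 1)`. -/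
noncomputable def flagCochain (A : ℕ → Set X) (m : ℕ) : Cochain X :=
  cup 0 (vertexIndicator (A 0)) (cupProd 1 (fun k => coboundary 1 (vertexIndicator (A (k + 1)))) m)

lemma flagCochain_ne_zero_iff {A : ℕ → Set X} {m : ℕ} {x : ℕ → X} :
    flagCochain A m x ≠ 0 ↔
      x 0 ∈ A 0 ∧ ∀ k < m, ¬ (x k ∈ A (k + 1) ↔ x (k + 1) ∈ A (k + 1)) := by
  simp only [flagCochain, cup, cupProd, tail_zero, mul_ne_zero_iff, prod_ne_zero_iff, mem_range,
    vertexIndicator_ne_zero_iff, coboundary_vertexIndicator_ne_zero_iff, tail, mul_one, add_zero]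

lemma isInvariantCocycle_cupProd_coboundary (A : ℕ → Set X) (m : ℕ) :
    IsInvariantCocycle (fun _ : Unit => id) Set.univ m
      (cupProd 1 (fun k => coboundary 1 (vertexIndicator (A k))) m) := by
  have cocycle : ∀ k, IsInvariantCocycle (fun _ : Unit => id) Set.univ 1
      (coboundary 1 (vertexIndicator (A k))) := fun k =>
    ⟨dependsOn_coboundary (dependsOn_vertexIndicator _), fun _ _ => rfl,
      fun x _ => congrFun (coboundary_coboundary 1 _) x⟩
  simpa only [mul_one] using IsInvariantCocycle.cupProd (fun _ _ _ => Set.mem_univ _) cocycle m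

lemma dependsOn_flagCochain (A : ℕ → Set X) (m : ℕ) :
    DependsOn (flagCochain A m) (Set.Iio (m + 1)) := by
  have := dependsOn_cup (dependsOn_vertexIndicator (A 0))
    (isInvariantCocycle_cupProd_coboundary (fun k => A (k + 1)) m).dependsOn m.succ_pos
  rwa [zero_add] at this

theorem coboundary_flagCochain (A : ℕ → Set X) (m : ℕ) :
    coboundary (m + 1) (flagCochain A m)
      = cupProd 1 (fun k => coboundary 1 (vertexIndicator (A k))) (m + 1) := by
  have leibniz := coboundary_cup (m + 1)
    (cupProd 1 (fun k => coboundary 1 (vertexIndicator (A (k + 1)))) m)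
    (dependsOn_vertexIndicator (A 0))
  rw [zero_add] at leibniz
  funext x
  rw [flagCochain, leibniz, Pi.add_apply, cup, cup,
    (isInvariantCocycle_cupProd_coboundary (fun k => A (k + 1)) m).coboundary_eq_zero _ trivial,
    mul_zero, add_zero, cupProd, cupProd, prod_range_succ', mul_comm, zero_mul, tail_zero]
  congr 1
  refine prod_congr rfl fun k _ => congrArg _ (funext fun i => ?_)
  simp only [tail]
  congr 1
  ring

end Flag

section Sphere

variable {m : ℕ}

/-- The open hemisphere of `S^m` on which the `k`-th coordinate is negative. -/
def hemisphere (m k : ℕ) : Set (Sph m) := {x | x.1 (Fin.ofNat (m + 1) k) < 0}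

/-- The cocycle on small simplices that represents the generator of the top cohomology of `S^m`. -/
noncomputable def sphereCochain (m : ℕ) : Cochain (Sph m) := flagCochain (hemisphere m) m

lemma abs_sub_coord_lt {ε : ℝ} {x y : Sph m} (h : dist x y < ε) (c : Fin (m + 1)) :
    |x.1 c - y.1 c| < ε :=
  (PiLp.norm_apply_le (x.1 - y.1) c).trans_lt (by rwa [← dist_eq_norm])

lemma exists_le_abs_coord {ε : ℝ} (hε : (m + 1) * (2 * ε) ^ 2 ≤ 1) (x : Sph m) :
    ∃ c, 2 * ε ≤ |x.1 c| := by
  by_contra! small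
  have norm_sq : ∑ c, x.1 c ^ 2 = 1 := by
    rw [← EuclideanSpace.real_norm_sq_eq, norm_eq_of_mem_sphere, one_pow]
  have lt : ∑ c, x.1 c ^ 2 < ∑ _c : Fin (m + 1), (2 * ε) ^ 2 :=
    sum_lt_sum_of_nonempty univ_nonempty fun c _ => by
      rw [← sq_abs]
      exact pow_lt_pow_left₀ (small c) (abs_nonneg _) two_ne_zero
  rw [sum_const, card_univ, Fintype.card_fin, nsmul_eq_mul, Nat.cast_succ] at lt
  linarith

theorem coboundary_sphereCochain_eq_zero {ε : ℝ} (hε : (m + 1) * (2 * ε) ^ 2 ≤ 1)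
    {x : ℕ → Sph m} (hx : x ∈ smallSeqs (Sph m) ε) :
    coboundary (m + 1) (sphereCochain m) x = 0 := by
  by_contra hne
  rw [sphereCochain, coboundary_flagCochain, cupProd, ← ne_eq, prod_ne_zero_iff] at hne
  obtain ⟨c, hc⟩ := exists_le_abs_coord hε (x 0)
  have crossing := coboundary_vertexIndicator_ne_zero_iff.mp (hne c (mem_range.mpr c.isLt))
  simp only [tail, hemisphere, Fin.ofNat_eq_cast, Fin.cast_val_eq_self,
    Set.mem_ofPred_eq] at crossing
  have near₀ := abs_lt.mp (abs_sub_coord_lt (hx 0 (c * 1 + 0)) c)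
  have near₁ := abs_lt.mp (abs_sub_coord_lt (hx (c * 1 + 0) (c * 1 + 1)) c)
  rcases le_abs'.mp hc with h | h <;> exact crossing (by constructor <;> intro <;> linarith)

end Sphere

/-! ### A map of degree one from the torus to the sphere -/

section TorusToSphere

variable {m : ℕ}

lemma one_sub_re_nonneg (z : Circle) : 0 ≤ 1 - (z : ℂ).re :=
  sub_nonneg.mpr ((Complex.re_le_norm _).trans z.norm_coe.le)

lemma im_sq_eq (z : Circle) : (z : ℂ).im ^ 2 = (1 - (z : ℂ).re) * (2 - (1 - (z : ℂ).re)) := by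
  have := z.normSq_coe
  rw [Complex.normSq_apply] at this
  linarith

lemma one_sub_re_le_sum (w : Fin m → Circle) (k : Fin m) :
    1 - (w k : ℂ).re ≤ ∑ l, (1 - (w l : ℂ).re) :=
  single_le_sum (f := fun l => 1 - (w l : ℂ).re) (fun l _ => one_sub_re_nonneg (w l)) (mem_univ k)

/-- The radial projection of this vector to `S^m` is a map of degree one on the torus: only points
near `(1, …, 1)` are mapped to the hemisphere where the zeroth coordinate is negative. -/
noncomputable def torusVector (w : Fin m → Circle) : EuclideanSpace ℝ (Fin (m + 1)) :=
  WithLp.toLp 2 (Fin.cons (∑ k, (1 - (w k : ℂ).re) - 1) fun k => (w k : ℂ).im)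

lemma torusVector_zero (w : Fin m → Circle) :
    torusVector w 0 = ∑ k, (1 - (w k : ℂ).re) - 1 := rfl

lemma torusVector_succ (w : Fin m → Circle) (k : Fin m) :
    torusVector w k.succ = (w k : ℂ).im := rfl

lemma torusVector_ne_zero (w : Fin m → Circle) : torusVector w ≠ 0 := by
  intro h
  have sum_eq : ∑ k, (1 - (w k : ℂ).re) = 1 := by
    rw [← sub_eq_zero, ← torusVector_zero, h]; rfl
  have term_eq : ∀ k, 1 - (w k : ℂ).re = 0 := fun k => by
    have im_eq : (w k : ℂ).im = 0 := by rw [← torusVector_succ, h]; rfl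
    have mul_eq := im_sq_eq (w k)
    rw [im_eq, zero_pow two_ne_zero, zero_eq_mul] at mul_eq
    exact mul_eq.resolve_right (by linarith [one_sub_re_le_sum w k])
  rw [sum_eq_zero fun k _ => term_eq k] at sum_eq
  exact zero_ne_one sum_eq

/-- The map of degree one from the torus to the sphere given by `torusVector`. -/
noncomputable def torusToSphere (w : Fin m → Circle) : Sph m :=
  ⟨NormedSpace.normalize (torusVector w),
    mem_sphere_zero_iff_norm.mpr (NormedSpace.norm_normalize (torusVector_ne_zero w))⟩

lemma continuous_torusToSphere : Continuous (torusToSphere (m := m)) := by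
  have continuous_torusVector : Continuous (torusVector (m := m)) := by
    refine (PiLp.continuous_toLp 2 _).comp (continuous_pi fun c => ?_)
    cases c using Fin.cases <;> simp only [Fin.cons_zero, Fin.cons_succ] <;> fun_prop
  exact ((continuous_torusVector.norm.inv₀ fun w => norm_ne_zero_iff.mpr
    (torusVector_ne_zero w)).smul continuous_torusVector).subtype_mk _

lemma torusToSphere_mem_hemisphere_iff (w : Fin m → Circle) (c : Fin (m + 1)) :
    torusToSphere w ∈ hemisphere m c ↔ torusVector w c < 0 := by
  have inv_pos : 0 < ‖torusVector w‖⁻¹ := inv_pos.mpr (norm_pos_iff.mpr (torusVector_ne_zero w))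
  rw [hemisphere, Set.mem_ofPred_eq, Fin.ofNat_eq_cast, Fin.cast_val_eq_self]
  exact smul_neg_iff_of_pos_left inv_pos

lemma torusToSphere_mem_hemisphere_zero_iff (w : Fin m → Circle) :
    torusToSphere w ∈ hemisphere m 0 ↔ ∑ k, (1 - (w k : ℂ).re) < 1 :=
  (torusToSphere_mem_hemisphere_iff w 0).trans sub_neg

lemma torusToSphere_mem_hemisphere_succ_iff (w : Fin m → Circle) (k : Fin m) :
    torusToSphere w ∈ hemisphere m (k + 1) ↔ (w k : ℂ).im < 0 :=
  torusToSphere_mem_hemisphere_iff w k.succ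

lemma sphereCochain_torusToSphere_ne_zero_iff (w : ℕ → Fin m → Circle) :
    sphereCochain m (fun a => torusToSphere (w a)) ≠ 0 ↔ ∑ k, (1 - (w 0 k : ℂ).re) < 1 ∧
      ∀ k : Fin m, ¬ ((w k k : ℂ).im < 0 ↔ (w (k + 1) k : ℂ).im < 0) := by
  rw [sphereCochain, flagCochain_ne_zero_iff, torusToSphere_mem_hemisphere_zero_iff,
    ← Fin.forall_iff (p := fun k : Fin m => ¬ (torusToSphere (w k) ∈ hemisphere m (k + 1) ↔
      torusToSphere (w (k + 1)) ∈ hemisphere m (k + 1)))]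
  simp only [torusToSphere_mem_hemisphere_succ_iff]

end TorusToSphere

section RootsOfUnity

variable {M : ℕ} [NeZero (2 * M)]

lemma toCircle_eq_exp_pi (v : ZMod (2 * M)) :
    ZMod.toCircle v = Circle.exp (v.val / M * Real.pi) := by
  have M_ne : (M : ℝ) ≠ 0 := by
    exact_mod_cast right_ne_zero_of_mul (NeZero.ne (2 * M))
  rw [ZMod.toCircle_eq_circleExp]
  congr 1
  push_cast
  field_simp

lemma im_toCircle_neg_iff (v : ZMod (2 * M)) :
    ((ZMod.toCircle v : Circle) : ℂ).im < 0 ↔ M < v.val := by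
  have M_pos : (0 : ℝ) < M := by
    exact_mod_cast Nat.pos_of_ne_zero (right_ne_zero_of_mul (NeZero.ne (2 * M)))
  have pi_pos := Real.pi_pos
  have val_lt : (v.val : ℝ) / M < 2 := by
    rw [div_lt_iff₀ M_pos]; exact_mod_cast v.val_lt
  rw [toCircle_eq_exp_pi, Circle.coe_exp, Complex.exp_ofReal_mul_I_im]
  constructor
  · contrapose!
    intro h
    have val_le : (v.val : ℝ) / M ≤ 1 := by
      rw [div_le_one M_pos]; exact_mod_cast h
    exact Real.sin_nonneg_of_nonneg_of_le_pi (by positivity) (by nlinarith)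
  · intro h
    have lt_val : 1 < (v.val : ℝ) / M := by
      rw [one_lt_div M_pos]; exact_mod_cast h
    rw [← Real.sin_sub_two_pi]
    exact Real.sin_neg_of_neg_of_neg_pi_lt (by nlinarith) (by nlinarith)

lemma val_ne_of_re_toCircle_pos {v : ZMod (2 * M)} (h : 0 < ((ZMod.toCircle v : Circle) : ℂ).re) :
    v.val ≠ M := by
  intro hv
  have M_ne : (M : ℝ) ≠ 0 := by
    exact_mod_cast right_ne_zero_of_mul (NeZero.ne (2 * M))
  rw [toCircle_eq_exp_pi, Circle.coe_exp, Complex.exp_ofReal_mul_I_re, hv, div_self M_ne, one_mul,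
    Real.cos_pi] at h
  linarith

lemma eq_neg_one_iff_val_add_one_eq {N : ℕ} [NeZero N] {v : ZMod N} :
    v = -1 ↔ v.val + 1 = N := by
  have cast_eq : ((v.val + 1 : ℕ) : ZMod N) = v + 1 := by
    rw [Nat.cast_succ, ZMod.natCast_zmod_val]
  rw [eq_neg_iff_add_eq_zero, ← cast_eq, ZMod.natCast_eq_zero_iff]
  exact ⟨fun h => le_antisymm v.val_lt (Nat.le_of_dvd v.val.succ_pos h), fun h => dvd_of_eq h.symm⟩

/-- The imaginary part only changes its sign at `-1` and `1`, and the condition on the real part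
excludes the former. -/
lemma eq_neg_one_of_im_toCircle_sign_change {v : ZMod (2 * M)}
    (hre : 0 < ((ZMod.toCircle v : Circle) : ℂ).re)
    (him : ¬ (((ZMod.toCircle v : Circle) : ℂ).im < 0 ↔
      ((ZMod.toCircle (v + 1) : Circle) : ℂ).im < 0)) : v = -1 := by
  by_contra hv
  have one_val : (1 : ZMod (2 * M)).val = 1 := ZMod.val_one'' (by omega)
  have lt : v.val + 1 < 2 * M := lt_of_le_of_ne v.val_lt (eq_neg_one_iff_val_add_one_eq.not.mp hv)
  rw [im_toCircle_neg_iff, im_toCircle_neg_iff, ZMod.val_add_of_lt (by omega), one_val] at him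
  have := val_ne_of_re_toCircle_pos hre
  omega

lemma im_toCircle_neg_one_sign_change (hM : 1 < M) :
    ¬ (((ZMod.toCircle (-1 : ZMod (2 * M)) : Circle) : ℂ).im < 0 ↔
      ((ZMod.toCircle (-1 + 1 : ZMod (2 * M)) : Circle) : ℂ).im < 0) := by
  have val_eq : (-1 : ZMod (2 * M)).val + 1 = 2 * M := eq_neg_one_iff_val_add_one_eq.mp rfl
  rw [im_toCircle_neg_iff, im_toCircle_neg_iff, neg_add_cancel, ZMod.val_zero]
  omega

lemma dist_toCircle_add_one {N : ℕ} [NeZero N] (v : ZMod N) :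
    dist (ZMod.toCircle (v + 1)) (ZMod.toCircle v) = dist (ZMod.toCircle (1 : ZMod N)) 1 :=
  calc dist (ZMod.toCircle (v + 1)) (ZMod.toCircle v)
      = ‖((ZMod.toCircle v : Circle) : ℂ) * (ZMod.toCircle (1 : ZMod N) - 1)‖ := by
        rw [mul_sub, mul_one, ← Circle.coe_mul, ← AddChar.map_add_eq_mul]
        exact dist_eq_norm (_ : ℂ) _
    _ = ‖((ZMod.toCircle (1 : ZMod N) : Circle) : ℂ) - 1‖ := by
        rw [norm_mul, Circle.norm_coe, one_mul]
    _ = dist (ZMod.toCircle (1 : ZMod N)) 1 := (dist_eq_norm (_ : ℂ) _).symm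

lemma one_sub_re_toCircle_neg_one_le {N : ℕ} [NeZero N] :
    1 - ((ZMod.toCircle (-1 : ZMod N) : Circle) : ℂ).re ≤ dist (ZMod.toCircle (1 : ZMod N)) 1 := by
  rw [AddChar.map_neg_eq_inv, Circle.coe_inv_eq_conj, Complex.conj_re, dist_comm]
  exact (Complex.re_le_norm (1 - _)).trans (dist_eq_norm (1 : ℂ) _).ge

lemma exists_dist_toCircle_one_lt {δ : ℝ} (hδ : 0 < δ) :
    ∃ M : ℕ, ∃ _ : NeZero (2 * M), 1 < M ∧
      dist (ZMod.toCircle (1 : ZMod (2 * M)) : Circle) 1 < δ := by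
  have tendsto_one : Filter.Tendsto (fun M : ℕ => Circle.exp (1 / M * Real.pi)) Filter.atTop
      (nhds 1) := by
    have := (Circle.exp.continuous.tendsto _).comp
      ((tendsto_one_div_atTop_nhds_zero_nat (𝕜 := ℝ)).mul_const Real.pi)
    rwa [zero_mul, Circle.exp_zero] at this
  obtain ⟨M, close, hM⟩ := ((tendsto_one.eventually (Metric.ball_mem_nhds 1 hδ)).and
    (Filter.eventually_gt_atTop 1)).exists
  have : NeZero (2 * M) := ⟨by omega⟩
  refine ⟨M, this, hM, ?_⟩
  rw [toCircle_eq_exp_pi, ZMod.val_one'' (by omega), Nat.cast_one]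
  exact close

end RootsOfUnity

/-! ### Evaluation on the torus -/

namespace Simplex

variable {ι : Type*} {N L : ℕ}

lemma vertex_of_le {T : Simplex ι N L} {i : ℕ} {c : ι} (h : i ≤ T.order c) :
    T.vertex i c = T.base c := by
  rw [vertex, if_neg h.not_gt, add_zero]

lemma vertex_of_lt {T : Simplex ι N L} {i : ℕ} {c : ι} (h : T.order c < i) :
    T.vertex i c = T.base c + 1 := by
  rw [vertex, if_pos h]

lemma order_eq_of_vertex_ne {T : Simplex ι N L} {i : ℕ} {c : ι}
    (h : T.vertex i c ≠ T.vertex (i + 1) c) : T.order c = i := by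
  rcases lt_trichotomy (T.order c : ℕ) i with lt | eq | gt
  · exact absurd ((vertex_of_lt lt).trans (vertex_of_lt (by omega)).symm) h
  · exact eq
  · exact absurd ((vertex_of_le gt.le).trans (vertex_of_le gt).symm) h

lemma dist_toCircle_vertex_lt [Fintype ι] [NeZero N] {δ : ℝ} (hδ : 0 < δ)
    (h : dist (ZMod.toCircle (1 : ZMod N)) 1 < δ) (T : Simplex ι N L) (i i' : ℕ) :
    dist (fun c => ZMod.toCircle (T.vertex i c)) (fun c => ZMod.toCircle (T.vertex i' c)) < δ := by
  refine (dist_pi_lt_iff hδ).mpr fun c => ?_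
  simp only [vertex]
  split_ifs
  · rwa [dist_self]
  · rwa [add_zero, dist_toCircle_add_one]
  · rwa [add_zero, dist_comm, dist_toCircle_add_one]
  · rwa [dist_self]

end Simplex

section Evaluation

variable {n m N M L : ℕ}

/-- The map from the torus `(S^1)^(n * m)` to `(S^m)^n` that is `torusToSphere` on each block of
`m` circles. -/
noncomputable def torusToSpheres (w : Fin n × Fin m → Circle) : Fin n → Sph m :=
  fun j => torusToSphere fun k => w (j, k)

/-- The restriction of `torusToSpheres` to the vertices of the triangulation of the torus. -/
noncomputable def gridMap [NeZero N] (v : Fin n × Fin m → ZMod N) : Fin n → Sph m :=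
  torusToSpheres fun c => ZMod.toCircle (v c)

lemma exists_gridMap_vertex_mem_smallSeqs (n m : ℕ) {δ η : ℝ} (hδ : 0 < δ) (hη : 0 < η) :
    ∃ M : ℕ, ∃ _ : NeZero (2 * M), 1 < M ∧ dist (ZMod.toCircle (1 : ZMod (2 * M))) 1 < η ∧
      ∀ (L : ℕ) (T : Simplex (Fin n × Fin m) (2 * M) L),
        (fun i => gridMap (T.vertex i)) ∈ smallSeqs (Fin n → Sph m) δ := by
  have continuous_torusToSpheres : Continuous (torusToSpheres (n := n) (m := m)) :=
    continuous_pi fun j => continuous_torusToSphere.comp <|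
      continuous_pi fun k => continuous_apply (j, k)
  obtain ⟨r, r_pos, hr⟩ := Metric.uniformContinuous_iff.mp
    (CompactSpace.uniformContinuous_of_continuous continuous_torusToSpheres) δ hδ
  obtain ⟨M, hM0, hM, close⟩ := exists_dist_toCircle_one_lt (lt_min r_pos hη)
  exact ⟨M, hM0, hM, close.trans_le (min_le_right _ _), fun L T i i' =>
    hr (T.dist_toCircle_vertex_lt r_pos (close.trans_le (min_le_left _ _)) i i')⟩

lemma isInvariant_comp_gridMap [NeZero N] {t : Cochain (Fin n → Sph m)}
    (ht : IsInvariant permTuple t) :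
    IsInvariant (fun (g : blockPerms (Fin n) (Fin m)) v => v ∘ (g : Equiv.Perm (Fin n × Fin m)))
      (fun x : ℕ → Fin n × Fin m → ZMod N => t fun i => gridMap (x i)) := by
  rintro ⟨_, g, rfl⟩ x
  exact ht g fun i => gridMap (x i)

lemma sphereCochain_gridMap_ne_zero_iff [NeZero (2 * M)] (hM : 1 < M)
    (close : dist (ZMod.toCircle (1 : ZMod (2 * M))) 1 < 1 / (m + 1))
    (T : Simplex (Fin n × Fin m) (2 * M) L) (i : ℕ) (j : Fin n) :
    sphereCochain m (fun a => gridMap (T.vertex (i * m + a)) j) ≠ 0 ↔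
      ∀ k, (T.order (j, k) : ℕ) = i * m + k ∧ T.base (j, k) = -1 := by
  refine (sphereCochain_torusToSphere_ne_zero_iff fun a k =>
    ZMod.toCircle (T.vertex (i * m + a) (j, k))).trans ⟨?_, fun h => ⟨?_, fun k => ?_⟩⟩
  · rintro ⟨near_one, crossing⟩ k
    have order_eq : (T.order (j, k) : ℕ) = i * m + k :=
      Simplex.order_eq_of_vertex_ne fun h => crossing k (by rw [h]; rfl)
    have re_pos : 0 < ((ZMod.toCircle (T.base (j, k)) : Circle) : ℂ).re := by
      have := one_sub_re_le_sum (fun k => ZMod.toCircle (T.vertex (i * m + 0) (j, k))) k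
      rw [Simplex.vertex_of_le (by omega)] at this
      linarith
    have crossing_k := crossing k
    rw [Simplex.vertex_of_le order_eq.ge, Simplex.vertex_of_lt (by omega)] at crossing_k
    exact ⟨order_eq, eq_neg_one_of_im_toCircle_sign_change re_pos crossing_k⟩
  · have vertex_eq : ∀ k, T.vertex (i * m + 0) (j, k) = -1 := fun k => by
      rw [Simplex.vertex_of_le (by rw [(h k).1]; omega), (h k).2]
    simp only [vertex_eq, sum_const, card_univ, Fintype.card_fin, nsmul_eq_mul]
    calc m * (1 - ((ZMod.toCircle (-1 : ZMod (2 * M)) : Circle) : ℂ).re)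
        ≤ m * (1 / (m + 1)) := mul_le_mul_of_nonneg_left
          (one_sub_re_toCircle_neg_one_le.trans close.le) m.cast_nonneg
      _ < 1 := by rw [mul_one_div, div_lt_one (by positivity)]; linarith
  · obtain ⟨order_eq, base_eq⟩ := h k
    rw [Simplex.vertex_of_le order_eq.ge, Simplex.vertex_of_lt (by omega), base_eq]
    exact im_toCircle_neg_one_sign_change hM

/-- The simplex on which the cup power of `coordSum n (sphereCochain m)` does not vanish. -/
def Simplex.standard (n m N : ℕ) : Simplex (Fin n × Fin m) N (n * m) :=
  ⟨fun _ => -1, finProdFinEquiv⟩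

lemma cupProd_gridMap_standard [NeZero (2 * M)] (hm : 0 < m) (hM : 1 < M)
    (close : dist (ZMod.toCircle (1 : ZMod (2 * M))) 1 < 1 / (m + 1)) :
    cupProd m (fun _ => coordSum n (sphereCochain m)) n
      (fun i => gridMap ((Simplex.standard n m (2 * M)).vertex i)) = 1 := by
  have eq_one : ∀ a : ZMod 2, a ≠ 0 → a = 1 := by decide
  have summand_ne_zero_iff : ∀ i j : Fin n, sphereCochain m (fun a =>
      gridMap ((Simplex.standard n m (2 * M)).vertex (i * m + a)) j) ≠ 0 ↔ j = i := fun i j => by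
    rw [sphereCochain_gridMap_ne_zero_iff hM close]
    constructor
    · intro h
      have : (0 : ℕ) + m * j = i * m + 0 := (finProdFinEquiv_apply_val _).symm.trans (h ⟨0, hm⟩).1
      exact Fin.ext (Nat.eq_of_mul_eq_mul_left hm (by linarith))
    · rintro rfl k
      exact ⟨(finProdFinEquiv_apply_val _).trans (by rw [mul_comm, add_comm]), rfl⟩
  refine prod_eq_one fun i hi => ?_
  obtain ⟨i, rfl⟩ : ∃ i' : Fin n, (i' : ℕ) = i := ⟨⟨i, mem_range.mp hi⟩, rfl⟩
  refine (Fintype.sum_eq_single i fun j hj => ?_).trans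
    (eq_one _ ((summand_ne_zero_iff i i).mpr rfl))
  exact not_not.mp ((summand_ne_zero_iff i j).not.mpr hj)

lemma exists_smul_standard_eq [NeZero (2 * M)] (hm : 0 < m) (hM : 1 < M)
    (close : dist (ZMod.toCircle (1 : ZMod (2 * M))) 1 < 1 / (m + 1))
    {T : Simplex (Fin n × Fin m) (2 * M) (n * m)}
    (hT : cupProd m (fun _ => coordSum n (sphereCochain m)) n
      (fun i => gridMap (T.vertex i)) ≠ 0) :
    ∃ g : blockPerms (Fin n) (Fin m), g • Simplex.standard n m (2 * M) = T := by
  have block : ∀ i : Fin n, ∃ j, ∀ k, (T.order (j, k) : ℕ) = i * m + k ∧ T.base (j, k) = -1 := by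
    intro i
    obtain ⟨j, -, hj⟩ := exists_ne_zero_of_sum_ne_zero
      (prod_ne_zero_iff.mp hT i (mem_range.mpr i.isLt))
    exact ⟨j, (sphereCochain_gridMap_ne_zero_iff hM close T i j).mp hj⟩
  choose J hJ using block
  have J_injective : Function.Injective J := fun i i' h => by
    have := (hJ i ⟨0, hm⟩).1
    rw [h, (hJ i' ⟨0, hm⟩).1] at this
    exact Fin.ext (Nat.eq_of_mul_eq_mul_right hm (by omega)).symm
  have J_bijective := Finite.injective_iff_bijective.mp J_injective
  refine ⟨⟨_, Equiv.ofBijective J J_bijective, rfl⟩,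
    (eq_inv_smul_iff (G := blockPerms _ _)).mp <|
      Simplex.ext (funext fun c => (hJ c.1 c.2).2.symm) (Equiv.ext fun c => Fin.ext ?_)⟩
  rw [Simplex.standard, finProdFinEquiv_apply_val, add_comm, mul_comm]
  exact (hJ c.1 c.2).1.symm

variable [NeZero (2 * M)]
  [Fintype (MulAction.orbitRel.Quotient (blockPerms (Fin n) (Fin m))
    (Simplex (Fin n × Fin m) (2 * M) (n * m)))]

theorem orbitSum_cupProd_coordSum_sphereCochain (hm : 0 < m) (hM : 1 < M)
    (close : dist (ZMod.toCircle (1 : ZMod (2 * M))) 1 < 1 / (m + 1)) :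
    orbitSum (blockPerms (Fin n) (Fin m))
      (fun T : Simplex (Fin n × Fin m) (2 * M) (n * m) =>
        cupProd m (fun _ => coordSum n (sphereCochain m)) n fun i => gridMap (T.vertex i)) = 1 := by
  rw [orbitSum_eq_of_support _ (fun g T => isInvariant_comp_gridMap
      (isInvariant_cupProd (fun _ => isInvariant_coordSum n _) m n) g⁻¹ T.vertex)
    (Simplex.standard n m (2 * M)) fun T => exists_smul_standard_eq hm hM close]
  exact cupProd_gridMap_standard hm hM close

end Evaluation

theorem lt_of_hasSymPlanners_sphere {n m k : ℕ} (hn : Even n) (hn0 : n ≠ 0) (hm : 1 < m)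
    (H : HasSymPlanners (Sph m) n k) : n < k := by
  by_contra! hk
  have : Nonempty (Sph m) := (NormedSpace.sphere_nonempty.mpr zero_le_one).to_subtype
  have : Nontrivial (Fin m) := Fin.nontrivial_iff_two_le.mpr hm
  have m_pos : 0 < m := by omega
  obtain ⟨ε, ε_pos, hε⟩ : ∃ ε : ℝ, 0 < ε ∧ (m + 1) * (2 * ε) ^ 2 ≤ 1 :=
    ⟨1 / (2 * (m + 1)), by positivity, by field_simp; linarith [m.cast_nonneg (α := ℝ)]⟩
  obtain ⟨δ, δ_pos, t, t_dep, t_inv, ht⟩ := exists_cupProd_coordSum_eq_coboundary hn m_pos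
    (dependsOn_flagCochain (hemisphere m) m) ε_pos
    (fun _ hx => coboundary_sphereCochain_eq_zero hε hx) H hk
  obtain ⟨M, _, hM, close, small⟩ :=
    exists_gridMap_vertex_mem_smallSeqs n m δ_pos (η := 1 / (m + 1)) (by positivity)
  have := Fintype.ofFinite (MulAction.orbitRel.Quotient (blockPerms (Fin n) (Fin m))
    (Simplex (Fin n × Fin m) (2 * M) (n * m)))
  have pullback_dep : DependsOn (fun x : ℕ → Fin n × Fin m → ZMod (2 * M) =>
      t fun i => gridMap (x i)) (Set.Iio (n * m)) :=
    fun _ _ hxy => t_dep fun i hi => congrArg gridMap (hxy i hi)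
  refine zero_ne_one (α := ZMod 2) ?_
  rw [← Simplex.orbitSum_coboundary_eq_zero (fun _ => not_isSwap_of_mem_blockPerms)
    (Nat.mul_ne_zero hn0 m_pos.ne') pullback_dep (isInvariant_comp_gridMap t_inv),
    ← orbitSum_cupProd_coordSum_sphereCochain (n := n) m_pos hM close]
  exact congrArg _ (funext fun T => (ht _ (small _ T)).symm)

/-! ### Planners from contractions of punctured spaces -/

section Upper

variable {X : Type*} [TopologicalSpace X]

lemma exists_forall_apply_ne {α β γ : Type*} [Fintype α] [Fintype β]
    (h : Fintype.card α < Fintype.card β) {q : β → γ} (hq : Function.Injective q) (x : α → γ) :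
    ∃ i, ∀ j, x j ≠ q i := by
  by_contra! hit
  choose f hf using hit
  exact h.not_ge <| Fintype.card_le_of_injective f fun i i' e => hq (by rw [← hf i, ← hf i', e])

lemma exists_isSymPlanner_of_contractibleSpace (n : ℕ) (A : Set X) [ContractibleSpace A] :
    ∃ s : C({x : Fin n → X | ∀ j, x j ∈ A}, Fin n → C(I, X)), IsSymPlanner _ s := by
  obtain ⟨p, ⟨H⟩⟩ := id_nullhomotopic A
  have continuous_path : ∀ j : Fin n, Continuous
      fun z : {x : Fin n → X | ∀ j, x j ∈ A} × I => (H (σ z.2, ⟨z.1.1 j, z.1.2 j⟩) : X) :=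
    fun j => continuous_subtype_val.comp <| H.continuous.comp <|
      .prodMk (by fun_prop) <| .subtype_mk
        ((continuous_apply j).comp (continuous_subtype_val.comp continuous_fst)) _
  refine ⟨⟨fun x j => ContinuousMap.curry ⟨_, continuous_path j⟩ x, by fun_prop⟩,
    fun x j j' => ?_, fun x j => ?_, fun _ _ _ => rfl⟩
  · simp
  · simp

theorem hasSymPlanners_succ_of_contractibleSpace_compl_singleton [T1Space X] [Infinite X]
    [∀ q : X, ContractibleSpace ({q}ᶜ : Set X)] (n : ℕ) : HasSymPlanners X n (n + 1) := by
  let q : ℕ ↪ X := Infinite.natEmbedding X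
  refine ⟨fun i => {x | ∀ j, x j ∈ ({q i}ᶜ : Set X)}, fun i => ?_, ?_, fun i g x hx j => hx (g j),
    fun i => ?_⟩
  · simp only [Set.ofPred_forall]
    exact isOpen_iInter_of_finite fun j => isOpen_compl_singleton.preimage (continuous_apply j)
  · refine Set.eq_univ_iff_forall.mpr fun x => Set.mem_iUnion.mpr ?_
    exact exists_forall_apply_ne (by simp) (q.injective.comp Fin.val_injective) x
  · obtain ⟨s, hs⟩ := exists_isSymPlanner_of_contractibleSpace n ({q i}ᶜ : Set X)
    exact ⟨s, hs.source_eq, hs.target_eq, hs.equivariant⟩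

instance contractibleSpace_compl_singleton_sphere {m : ℕ} (q : Sph m) :
    ContractibleSpace ({q}ᶜ : Set (Sph m)) := by
  have : Fact (Module.finrank ℝ (EuclideanSpace ℝ (Fin (m + 1))) = m + 1) :=
    ⟨finrank_euclideanSpace_fin⟩
  have e := (stereographic' m q).toHomeomorphSourceTarget
  rw [stereographic'_source, stereographic'_target] at e
  exact (e.trans (Homeomorph.Set.univ _)).contractibleSpace

lemma infinite_sphere {m : ℕ} (hm : 0 < m) : Infinite (Sph m) := by
  have one_lt_rank : 1 < Module.rank ℝ (EuclideanSpace ℝ (Fin (m + 1))) := by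
    rw [← Module.finrank_eq_rank, finrank_euclideanSpace_fin]
    exact_mod_cast Nat.lt_succ_of_le hm
  obtain ⟨x, hx⟩ := (isConnected_sphere one_lt_rank 0 zero_le_one).nonempty
  have nontrivial : (Metric.sphere (0 : EuclideanSpace ℝ (Fin (m + 1))) 1).Nontrivial :=
    ⟨x, hx, -x, mem_sphere_zero_iff_norm.mpr (by rwa [norm_neg, ← mem_sphere_zero_iff_norm]),
      fun h => ne_neg_of_mem_unit_sphere ℝ ⟨x, hx⟩ (Subtype.ext h)⟩
  exact ((isPreconnected_sphere one_lt_rank 0 1).infinite_of_nontrivial nontrivial).to_subtype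

end Upper

end SymTC

/-- For every even `n ≥ 2` and every `m > 1`,
`TC^Σ_n(S^m) = n + 1`. -/
theorem TCsym_sphere_even_n (n m : ℕ) (hn : 2 ≤ n) (hne : Even n) (hm : 1 < m) :
    TCsym (Sph m) n = (n : ℕ∞) + 1 := by
  have := SymTC.infinite_sphere (zero_lt_one.trans hm)
  refine le_antisymm (sInf_le ?_) (le_sInf ?_)
  · exact ⟨n + 1, Nat.cast_succ n,
      SymTC.hasSymPlanners_succ_of_contractibleSpace_compl_singleton n⟩
  · rintro _ ⟨k, rfl, hk⟩
    exact_mod_cast SymTC.lt_of_hasSymPlanners_sphere hne (by omega) hm hk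
end

section
/- For every even n ≥ 2 and every m = 2^e with e > 1, the n-th symmetrized topological complexity of real projective m-space equals nm+1: TC^Σ_n(ℝP^m) = nm+1. -/
open unitInterval

noncomputable section

/-- The antipodal setoid on the sphere `S^m`, identifying `x` with `-x`. -/
def antipodalSetoid (m : ℕ) : Setoid (Sph m) where
  r x y := (x : EuclideanSpace ℝ (Fin (m + 1))) = (y : EuclideanSpace ℝ (Fin (m + 1))) ∨
    (x : EuclideanSpace ℝ (Fin (m + 1))) = -(y : EuclideanSpace ℝ (Fin (m + 1)))
  iseqv := by
    constructor
    · intro x; exact Or.inl rfl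
    · intro x y h
      rcases h with h | h
      · exact Or.inl h.symm
      · exact Or.inr (by rw [h, neg_neg])
    · intro x y z h1 h2
      rcases h1 with h1 | h1 <;> rcases h2 with h2 | h2
      · exact Or.inl (h1.trans h2)
      · exact Or.inr (h1.trans h2)
      · exact Or.inr (by rw [h1, h2])
      · exact Or.inl (by rw [h1, h2, neg_neg])

/-- Real projective `m`-space, the quotient of the unit sphere `S^m ⊂ ℝ^{m+1}`
by the antipodal involution. -/
def RP (m : ℕ) : Type := Quotient (antipodalSetoid m)

instance (m : ℕ) : TopologicalSpace (RP m) := instTopologicalSpaceQuotient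

end

/-!
For the lower bound, suppose that `k ≤ nm` planners cover `(ℝP^m)^n`. Lift the reversals of their
paths to the sphere: starting at a tuple `x` of points of `S^m`, their end points `z j` agree up
to sign, since they all lie over the common initial point. Let `u : S^m → ℤ/2` be any, in general
discontinuous, function with `u (-y) = u y + 1`. As `n` is even, the label `∑ j, u (z j)` of a
planner does not change if all the `z j` jump to their antipodes together, so it is locally
constant on the domain of the planner. It is invariant under permutations of `x`, and changes by
one when one coordinate of `x` is replaced by its antipode.

View the labels as cochains of degree zero. The cup product of the coboundaries of `nm` labels, of
which at least one is constant near any given point, vanishes on all sufficiently small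
`nm`-simplices. On the other hand, two labels differ by a function which is invariant under
permutations and antipodes, so the cup product changes by the coboundary of an invariant cochain
when each label is replaced by `x ↦ ∑ j, u (x j)`. This last cup product is evaluated on a fine
fundamental chain of `(S^m)^n`, subdivided into simplices by shuffles of fundamental chains of
`S^m`: each word in `n` letters, each used `m` times, contributes one. Modulo permutations of the
letters there are `(nm)! / (m!^n n!)` such words, which is an odd number for `m = 2^e`. Evaluation
on one word from each orbit still annihilates coboundaries of invariant cochains, provided that
`m ≥ 2`: this is a contradiction.

For the upper bound, projective space minus a hyperplane contracts in projective space to a point.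
Of `nm + 1` hyperplanes in general position at most `m` contain a given point, hence any `n`
points lie in the complement of one and the same of them.
-/

namespace SymmetrizedTC

open Finset Function

section Cochains

variable {X R : Type*} {φ : (ℕ → X) → R}

/-- The increasing map `ℕ → ℕ` that omits the value `i`; `p ∘ skip i` is the `i`-th face of a
simplex with vertices `p 0, p 1, …`. -/
def skip (i k : ℕ) : ℕ := if k < i then k else k + 1

lemma skip_of_lt {i k : ℕ} (h : k < i) : skip i k = k := if_pos h

lemma skip_of_le {i k : ℕ} (h : i ≤ k) : skip i k = k + 1 := if_neg h.not_gt

lemma apply_comp_skip {K i : ℕ} (hφ : DependsOn φ (Set.Iio K)) (hi : K ≤ i) (p : ℕ → X) :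
    φ (p ∘ skip i) = φ p :=
  hφ fun _ hr ↦ congrArg p (skip_of_lt (hr.trans_le hi))

variable [CommRing R]

/-- The coboundary operator in characteristic two. A simplex with `K` vertices is encoded by any
sequence starting with these vertices, and a cochain on such simplices by a function of sequences
which depends on the first `K` entries only. -/
def coboundary (K : ℕ) (φ : (ℕ → X) → R) (p : ℕ → X) : R :=
  ∑ i ∈ range (K + 1), φ (p ∘ skip i)

/-- The cup product of the coboundaries of the `0`-cochains `s 0, …, s (K - 1)`. -/
def cupDiff (s : ℕ → X → R) (K : ℕ) (p : ℕ → X) : R :=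
  ∏ k ∈ range K, (s k (p k) + s k (p (k + 1)))

lemma coboundary_add (K : ℕ) (φ ψ : (ℕ → X) → R) (p : ℕ → X) :
    coboundary K (fun p ↦ φ p + ψ p) p = coboundary K φ p + coboundary K ψ p :=
  sum_add_distrib

lemma cupDiff_succ (s : ℕ → X → R) (K : ℕ) (p : ℕ → X) :
    cupDiff s (K + 1) p = cupDiff s K p * (s K (p K) + s K (p (K + 1))) :=
  prod_range_succ _ _

lemma dependsOn_cupDiff (s : ℕ → X → R) (K : ℕ) : DependsOn (cupDiff s K) (Set.Iio (K + 1)) := by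
  intro p p' h
  refine prod_congr rfl fun k hk ↦ ?_
  have hk : k < K := mem_range.1 hk
  rw [h k (Set.mem_Iio.2 (by omega)), h (k + 1) (Set.mem_Iio.2 (by omega))]

lemma cupDiff_comp {s : ℕ → X → R} {g : X → X}
    (hg : ∀ k x y, s k (g x) + s k (g y) = s k x + s k y) (K : ℕ) (p : ℕ → X) :
    cupDiff s K (g ∘ p) = cupDiff s K p :=
  prod_congr rfl fun _ _ ↦ hg _ _ _

variable [CharP R 2]

lemma coboundary_mul_diff {K : ℕ} (hφ : DependsOn φ (Set.Iio (K + 1))) (u : X → R) (p : ℕ → X) :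
    coboundary (K + 2) (fun p ↦ φ p * (u (p K) + u (p (K + 1)))) p =
      coboundary (K + 1) φ p * (u (p (K + 1)) + u (p (K + 2))) := by
  have inner : ∀ i ∈ range (K + 1), φ (p ∘ skip i) * (u (p (skip i K)) + u (p (skip i (K + 1)))) =
      φ (p ∘ skip i) * (u (p (K + 1)) + u (p (K + 2))) := fun i hi ↦ by
    have hi : i < K + 1 := mem_range.1 hi
    rw [skip_of_le (by omega), skip_of_le (by omega)]
  simp only [coboundary, comp_apply]
  rw [sum_range_succ, sum_range_succ, sum_range_succ _ (K + 1), sum_congr rfl inner, ← sum_mul,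
    apply_comp_skip hφ le_rfl, apply_comp_skip hφ (Nat.le_succ _), skip_of_lt (Nat.lt_succ_self K),
    skip_of_le le_rfl, skip_of_lt (by omega), skip_of_lt (Nat.lt_succ_self (K + 1))]
  linear_combination CharTwo.add_self_eq_zero (φ p * u (p K))

lemma coboundary_mul_vertex {K : ℕ} (hφ : DependsOn φ (Set.Iio (K + 1)))
    (hφ₀ : ∀ p, coboundary (K + 1) φ p = 0) (t : X → R) (p : ℕ → X) :
    coboundary (K + 1) (fun p ↦ φ p * t (p K)) p = φ p * (t (p K) + t (p (K + 1))) := by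
  have inner : ∀ i ∈ range (K + 1), φ (p ∘ skip i) * t (p (skip i K)) =
      φ (p ∘ skip i) * t (p (K + 1)) := fun i hi ↦ by
    rw [skip_of_le (Nat.lt_succ_iff.1 (mem_range.1 hi))]
  have closed : ∑ i ∈ range (K + 1), φ (p ∘ skip i) = φ p := by
    have h := hφ₀ p
    rwa [coboundary, sum_range_succ, apply_comp_skip hφ le_rfl, CharTwo.add_eq_zero] at h
  simp only [coboundary, comp_apply]
  rw [sum_range_succ, sum_congr rfl inner, ← sum_mul, closed, apply_comp_skip hφ le_rfl,
    skip_of_lt (Nat.lt_succ_self K)]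
  ring

lemma coboundary_cupDiff (s : ℕ → X → R) (K : ℕ) (p : ℕ → X) :
    coboundary (K + 1) (cupDiff s K) p = 0 := by
  induction K generalizing p with
  | zero => simp [coboundary, cupDiff, CharTwo.two_eq_zero]
  | succ K ih =>
    rw [funext (cupDiff_succ s K), coboundary_mul_diff (dependsOn_cupDiff s K), ih, zero_mul]

lemma coboundary_cupDiff_mul_vertex (s : ℕ → X → R) (K : ℕ) (p : ℕ → X) :
    coboundary (K + 1) (fun p ↦ cupDiff s K p * s K (p K)) p = cupDiff s (K + 1) p := by
  rw [coboundary_mul_vertex (dependsOn_cupDiff s K) (coboundary_cupDiff s K), cupDiff_succ]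

lemma exists_coboundary_eq_cupDiff_add_cupDiff (𝒢 : Set (X → X)) (s s' : ℕ → X → R)
    (hs : ∀ g ∈ 𝒢, ∀ k x y, s k (g x) + s k (g y) = s k x + s k y)
    (hs' : ∀ g ∈ 𝒢, ∀ k x y, s' k (g x) + s' k (g y) = s' k x + s' k y)
    (hss' : ∀ g ∈ 𝒢, ∀ k x, s k (g x) + s' k (g x) = s k x + s' k x) (K : ℕ) :
    ∃ β : (ℕ → X) → R, DependsOn β (Set.Iio (K + 1)) ∧ (∀ g ∈ 𝒢, ∀ p, β (g ∘ p) = β p) ∧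
      ∀ p, coboundary (K + 1) β p = cupDiff s (K + 1) p + cupDiff s' (K + 1) p := by
  induction K with
  | zero =>
    refine ⟨fun p ↦ s 0 (p 0) + s' 0 (p 0), fun p p' hp ↦ ?_, fun g hg p ↦ hss' g hg 0 (p 0),
      fun p ↦ ?_⟩
    · simp only [hp 0 (Set.mem_Iio.2 one_pos)]
    · simp only [coboundary, cupDiff, skip, sum_range_succ, prod_range_succ, comp_apply, range_zero,
        sum_empty, prod_empty, zero_add, one_mul, lt_self_iff_false, Order.lt_one_iff, if_false,
        if_true]
      ring
  | succ K ih =>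
    obtain ⟨β, hβ, hβ𝒢, hβK⟩ := ih
    refine ⟨fun p ↦ β p * (s (K + 1) (p K) + s (K + 1) (p (K + 1))) +
      cupDiff s' (K + 1) p * (s (K + 1) (p (K + 1)) + s' (K + 1) (p (K + 1))),
      fun p p' hp ↦ ?_, fun g hg p ↦ ?_, fun p ↦ ?_⟩
    · simp only [hβ fun i hi ↦ hp i (Set.Iio_subset_Iio (Nat.le_succ _) hi),
        dependsOn_cupDiff s' (K + 1) hp, hp K (Set.mem_Iio.2 (by omega)),
        hp (K + 1) (Set.mem_Iio.2 (by omega))]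
    · simp only [comp_apply, hs g hg, hss' g hg, hβ𝒢 g hg, cupDiff_comp (hs' g hg)]
    · rw [coboundary_add, coboundary_mul_diff hβ, hβK,
        coboundary_mul_vertex (dependsOn_cupDiff s' (K + 1)) (coboundary_cupDiff s' (K + 1))
          (fun x ↦ s (K + 1) x + s' (K + 1) x), cupDiff_succ s (K + 1), cupDiff_succ s' (K + 1)]
      linear_combination cupDiff s' (K + 1) p *
        CharTwo.add_self_eq_zero (s (K + 1) (p (K + 1)) + s (K + 1) (p (K + 2)))

end Cochains

section Prism

variable {X R : Type*} [CommRing R]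

/-- The `i`-th simplex of the standard triangulation of the prism between the simplices `f ∘ p`
and `g ∘ p`, with vertices `f (p 0), …, f (p i), g (p i), g (p (i + 1)), …`. -/
def prism (f g : X → X) (i : ℕ) (p : ℕ → X) (r : ℕ) : X :=
  if r ≤ i then f (p r) else g (p (r - 1))

/-- The interior face between the prism simplices `i - 1` and `i`, with vertices
`f (p 0), …, f (p (i - 1)), g (p i), g (p (i + 1)), …`. -/
def splice (f g : X → X) (i : ℕ) (p : ℕ → X) (r : ℕ) : X :=
  if r < i then f (p r) else g (p r)

lemma prism_comp_skip_self (f g : X → X) (i : ℕ) (p : ℕ → X) :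
    prism f g i p ∘ skip i = splice f g i p := by
  funext k
  simp only [comp_apply, prism, splice, skip]
  split_ifs <;> first | rfl | omega

lemma prism_comp_skip_succ (f g : X → X) (i : ℕ) (p : ℕ → X) :
    prism f g i p ∘ skip (i + 1) = splice f g (i + 1) p := by
  funext k
  simp only [comp_apply, prism, splice, skip]
  split_ifs <;> first | rfl | omega

lemma prism_comp_skip_of_lt (f g : X → X) {i r : ℕ} (h : r < i) (p : ℕ → X) :
    prism f g i p ∘ skip r = prism f g (i - 1) (p ∘ skip r) := by
  funext k
  simp only [comp_apply, prism, skip]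
  split_ifs <;> first | rfl | omega | (congr 2; omega)

lemma prism_comp_skip_of_gt (f g : X → X) {i r : ℕ} (h : i < r) (p : ℕ → X) :
    prism f g i p ∘ skip (r + 1) = prism f g i (p ∘ skip r) := by
  funext k
  simp only [comp_apply, prism, skip]
  split_ifs <;> first | rfl | omega | (congr 2; omega)

lemma coboundary_prism (f g : X → X) {i d : ℕ} (hi : i ≤ d) (φ : (ℕ → X) → R) (p : ℕ → X) :
    coboundary (d + 1) φ (prism f g i p) =
      (φ (splice f g i p) + φ (splice f g (i + 1) p)) +
        (∑ r ∈ range i, φ (prism f g (i - 1) (p ∘ skip r)) +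
          ∑ r ∈ Ico (i + 1) (d + 1), φ (prism f g i (p ∘ skip r))) := by
  have lower : ∑ r ∈ range i, φ (prism f g i p ∘ skip r) =
      ∑ r ∈ range i, φ (prism f g (i - 1) (p ∘ skip r)) :=
    sum_congr rfl fun r hr ↦ by rw [prism_comp_skip_of_lt f g (mem_range.1 hr)]
  have upper : ∑ r ∈ Ico (i + 1) (d + 1), φ (prism f g i p ∘ skip (r + 1)) =
      ∑ r ∈ Ico (i + 1) (d + 1), φ (prism f g i (p ∘ skip r)) :=
    sum_congr rfl fun r hr ↦ by rw [prism_comp_skip_of_gt f g (mem_Ico.1 hr).1]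
  rw [← lower, ← upper, ← prism_comp_skip_self, ← prism_comp_skip_succ, coboundary,
    ← sum_range_add_sum_Ico _ (show i ≤ d + 1 + 1 by omega), sum_eq_sum_Ico_succ_bot (by omega),
    sum_eq_sum_Ico_succ_bot (by omega), sum_Ico_add' (fun r ↦ φ (prism f g i p ∘ skip r))]
  ring

variable [CharP R 2]

lemma sum_range_add_succ (H : ℕ → R) (n : ℕ) :
    ∑ i ∈ range n, (H i + H (i + 1)) = H 0 + H n := by
  calc ∑ i ∈ range n, (H i + H (i + 1)) = ∑ i ∈ range n, (H (i + 1) - H i) :=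
        sum_congr rfl fun i _ ↦ by rw [CharTwo.sub_eq_add, add_comm]
    _ = H 0 + H n := by rw [sum_range_sub, CharTwo.sub_eq_add, add_comm]

lemma sum_coboundary_prism (f g : X → X) {d : ℕ} {φ : (ℕ → X) → R}
    (hφ : DependsOn φ (Set.Iio (d + 1))) (p : ℕ → X) :
    ∑ i ∈ range (d + 1), coboundary (d + 1) φ (prism f g i p) =
      φ (g ∘ p) + φ (f ∘ p) + ∑ i ∈ range d, coboundary d (fun p ↦ φ (prism f g i p)) p := by
  have first : splice f g 0 p = g ∘ p := rfl
  have last : φ (splice f g (d + 1) p) = φ (f ∘ p) := hφ fun r hr ↦ if_pos hr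
  have inner : ∑ i ∈ range (d + 1), (∑ r ∈ range i, φ (prism f g (i - 1) (p ∘ skip r)) +
        ∑ r ∈ Ico (i + 1) (d + 1), φ (prism f g i (p ∘ skip r))) =
      ∑ i ∈ range d, coboundary d (fun p ↦ φ (prism f g i p)) p := by
    rw [sum_add_distrib, sum_range_succ', sum_range_succ, Ico_self, sum_empty, add_zero,
      range_zero, sum_empty, add_zero, ← sum_add_distrib]
    refine sum_congr rfl fun i hi ↦ ?_
    have hi : i < d := mem_range.1 hi
    exact sum_range_add_sum_Ico _ (by omega)
  rw [sum_congr rfl fun i hi ↦ coboundary_prism f g (Nat.lt_succ_iff.1 (mem_range.1 hi)) φ p,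
    sum_add_distrib, sum_range_add_succ (fun i ↦ φ (splice f g i p)), first, last, inner]

end Prism

section Sweep

variable {X R ι : Type*} [CommRing R] [Fintype ι]

/-- The chain `∑ a, c a` of simplices with `k + 1` vertices is a cycle over `R` in the quotient
by `τ`: every `τ`-invariant coboundary vanishes on it. -/
def IsCycleMod (R : Type*) [CommRing R] (τ : X → X) (k : ℕ) (c : ι → ℕ → X) : Prop :=
  ∀ φ : (ℕ → X) → R, DependsOn φ (Set.Iio k) → (∀ p, φ (τ ∘ p) = φ p) →
    ∑ a, coboundary k φ (c a) = 0

/-- The chain `c + τ c`, that is, the preimage of the image of `c` modulo the involution `τ`. -/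
def double (τ : X → X) (c : ι → ℕ → X) (a : ι × Bool) : ℕ → X :=
  bif a.2 then τ ∘ c a.1 else c a.1

lemma sum_double (τ : X → X) (c : ι → ℕ → X) (F : (ℕ → X) → R) :
    ∑ a, F (double τ c a) = ∑ a, (F (τ ∘ c a) + F (c a)) := by
  simp [Fintype.sum_prod_type, double]

variable [CharP R 2]

lemma isCycleMod_id_double {τ : X → X} (hτ : Involutive τ) {k : ℕ} {c : ι → ℕ → X}
    (hc : 0 < k → IsCycleMod R τ k c) : IsCycleMod R id k (double τ c) := by
  intro φ hφ _
  rw [sum_double]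
  rcases k.eq_zero_or_pos with rfl | hk
  · refine sum_eq_zero fun a _ ↦ ?_
    rw [CharTwo.add_eq_zero]
    exact sum_congr rfl fun i _ ↦ hφ fun r hr ↦ absurd hr (Nat.not_lt_zero r)
  · rw [← hc hk (fun p ↦ φ (τ ∘ p) + φ p)]
    · exact sum_congr rfl fun a _ ↦ (coboundary_add k (fun p ↦ φ (τ ∘ p)) φ (c a)).symm
    · exact fun p p' h ↦ congrArg₂ _ (hφ fun r hr ↦ congrArg τ (h r hr)) (hφ h)
    · intro p
      rw [← comp_assoc, hτ.comp_self, id_comp, add_comm]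

/-- The chain swept out by the chain `c` of simplices with `d + 1` vertices which moves through
`f 0 ∘ c, f 1 ∘ c, …, f L ∘ c`. -/
def sweep (f : ℕ → X → X) (L d : ℕ) (c : ι → ℕ → X) (a : ι × Fin L × Fin (d + 1)) : ℕ → X :=
  prism (f a.2.1) (f (a.2.1 + 1)) a.2.2 (c a.1)

lemma sum_coboundary_sweep (f : ℕ → X → X) (L : ℕ) {d : ℕ} {c : ι → ℕ → X}
    (hc : IsCycleMod R id d c) {φ : (ℕ → X) → R} (hφ : DependsOn φ (Set.Iio (d + 1))) :
    ∑ a, coboundary (d + 1) φ (sweep f L d c a) = ∑ a, (φ (f 0 ∘ c a) + φ (f L ∘ c a)) := by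
  have column : ∀ a,
      ∑ l : Fin L, ∑ i : Fin (d + 1), coboundary (d + 1) φ (sweep f L d c (a, l, i)) =
        (φ (f 0 ∘ c a) + φ (f L ∘ c a)) + ∑ l ∈ range L, ∑ i ∈ range d,
          coboundary d (fun p ↦ φ (prism (f l) (f (l + 1)) i p)) (c a) := fun a ↦ by
    rw [← sum_range_add_succ (fun l ↦ φ (f l ∘ c a)), ← sum_add_distrib, sum_range]
    refine sum_congr rfl fun l _ ↦ ?_
    rw [add_comm (φ (f l ∘ c a)), ← sum_coboundary_prism _ _ hφ, sum_range]
    rfl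
  have walls : ∑ a, ∑ l ∈ range L, ∑ i ∈ range d,
      coboundary d (fun p ↦ φ (prism (f l) (f (l + 1)) i p)) (c a) = 0 := by
    rw [sum_comm]
    refine sum_eq_zero fun l _ ↦ ?_
    rw [sum_comm]
    refine sum_eq_zero fun i hi ↦ hc _ (fun p p' h ↦ hφ fun r hr ↦ ?_) fun _ ↦ rfl
    have hi : i < d := mem_range.1 hi
    have hr : r < d + 1 := hr
    unfold prism
    split_ifs
    · rw [h r (Set.mem_Iio.2 (by omega))]
    · rw [h (r - 1) (Set.mem_Iio.2 (by omega))]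
  simp_rw [Fintype.sum_prod_type, column]
  rw [sum_add_distrib, walls, add_zero]

end Sweep

section Sphere

variable {m : ℕ}

/-- The point of the sphere in the direction of `v`, with a junk value for `v = 0`. -/
noncomputable def toSphere (v : EuclideanSpace ℝ (Fin (m + 1))) : Sph m :=
  if h : v = 0 then ⟨EuclideanSpace.single 0 1, by simp⟩
  else ⟨‖v‖⁻¹ • v, by simp [norm_smul, h]⟩

lemma coe_toSphere {v : EuclideanSpace ℝ (Fin (m + 1))} (hv : v ≠ 0) :
    (toSphere v : EuclideanSpace ℝ (Fin (m + 1))) = ‖v‖⁻¹ • v := by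
  simp [toSphere, hv]

lemma coe_toSphere_of_norm_eq_one {v : EuclideanSpace ℝ (Fin (m + 1))} (hv : ‖v‖ = 1) :
    (toSphere v : EuclideanSpace ℝ (Fin (m + 1))) = v := by
  rw [coe_toSphere (norm_ne_zero_iff.1 (hv ▸ one_ne_zero)), hv, inv_one, one_smul]

/-- The point `e_k` of the sphere. -/
noncomputable def pole (k : Fin (m + 1)) : Sph m := ⟨EuclideanSpace.single k 1, by simp⟩

/-- Rotation by the angle `θ` of the equator `y k = 0` towards the pole `e_k`. -/
noncomputable def rotate (k : Fin (m + 1)) (θ : ℝ) (y : Sph m) : Sph m :=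
  toSphere (Real.cos θ • (y : EuclideanSpace ℝ (Fin (m + 1))) + Real.sin θ • pole k)

variable {k : Fin (m + 1)} {y y' : Sph m}

lemma coe_rotate (hy : y.1 k = 0) (θ : ℝ) : (rotate k θ y : EuclideanSpace ℝ (Fin (m + 1))) =
    Real.cos θ • (y : EuclideanSpace ℝ (Fin (m + 1))) + Real.sin θ • pole k := by
  refine coe_toSphere_of_norm_eq_one ?_
  have orthogonal : inner ℝ (Real.cos θ • y.1) (Real.sin θ • (pole k).1) = 0 := by
    simp [pole, inner_smul_left, inner_smul_right, EuclideanSpace.inner_single_right, hy]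
  rw [← sq_eq_sq₀ (norm_nonneg _) zero_le_one, sq, sq,
    norm_add_sq_eq_norm_sq_add_norm_sq_of_inner_eq_zero _ _ orthogonal, norm_smul, norm_smul,
    norm_eq_of_mem_sphere, norm_eq_of_mem_sphere, mul_one, mul_one, Real.norm_eq_abs,
    Real.norm_eq_abs, abs_mul_abs_self, abs_mul_abs_self]
  linear_combination Real.cos_sq_add_sin_sq θ

lemma rotate_zero (hy : y.1 k = 0) : rotate k 0 y = y :=
  Subtype.ext (by simp [coe_rotate hy])

lemma rotate_pi_div_two (hy : y.1 k = 0) : rotate k (Real.pi / 2) y = pole k :=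
  Subtype.ext (by simp [coe_rotate hy])

lemma rotate_apply_eq_zero {l : Fin (m + 1)} (hl : l ≠ k) (hy : y.1 k = 0) (hyl : y.1 l = 0)
    (θ : ℝ) : (rotate k θ y).1 l = 0 := by
  simp [coe_rotate hy, pole, hyl, hl]

lemma dist_rotate_le (hy : y.1 k = 0) (hy' : y'.1 k = 0) (θ θ' : ℝ) :
    dist (rotate k θ y) (rotate k θ' y') ≤ dist y y' + 2 * |θ - θ'| := by
  have split : (rotate k θ y).1 - (rotate k θ' y').1 = Real.cos θ • (y.1 - y'.1) +
      (Real.cos θ - Real.cos θ') • y'.1 + (Real.sin θ - Real.sin θ') • (pole k).1 := by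
    rw [coe_rotate hy, coe_rotate hy']
    module
  have cos_le : |Real.cos θ - Real.cos θ'| ≤ |θ - θ'| := by
    simpa [Real.dist_eq] using Real.lipschitzWith_cos.dist_le_mul θ θ'
  have sin_le : |Real.sin θ - Real.sin θ'| ≤ |θ - θ'| := by
    simpa [Real.dist_eq] using Real.lipschitzWith_sin.dist_le_mul θ θ'
  rw [Subtype.dist_eq, Subtype.dist_eq, dist_eq_norm, dist_eq_norm, split]
  refine norm_add₃_le.trans ?_
  simp only [norm_smul, norm_eq_of_mem_sphere, Real.norm_eq_abs, mul_one]
  linarith [mul_le_mul_of_nonneg_right (Real.abs_cos_le_one θ) (norm_nonneg (y.1 - y'.1))]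

end Sphere

section FundamentalChain

variable {m k : ℕ} {u : Sph m → ZMod 2} {ε : ℝ} {ι : Type*} {c : ι → ℕ → Sph m}

lemma exists_sweep_eq {X : Type*} (f : ℕ → X → X) (L d : ℕ) (c : ι → ℕ → X)
    (a : ι × Fin L × Fin (d + 1)) (r : ℕ) :
    ∃ δ ≤ 1, ∃ r', sweep f L d c a r = f (a.2.1 + δ) (c a.1 r') := by
  unfold sweep prism
  split_ifs
  · exact ⟨0, zero_le_one, r, rfl⟩
  · exact ⟨1, le_rfl, r - 1, rfl⟩

lemma double_neg_apply_eq_zero {l : Fin (m + 1)} (hc : ∀ a r, (c a r).1 l = 0) (a : ι × Bool)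
    (r : ℕ) : (double Neg.neg c a r).1 l = 0 := by
  rcases a with ⟨a, _ | _⟩ <;> simp [double, hc]

lemma dist_double_neg_lt (hc : ∀ a r r', dist (c a r) (c a r') < ε) (a : ι × Bool) (r r' : ℕ) :
    dist (double Neg.neg c a r) (double Neg.neg c a r') < ε := by
  rcases a with ⟨a, _ | _⟩
  · exact hc a r r'
  · simpa [double, Subtype.dist_eq] using hc a r r'

/-- The `L` steps of the quarter turn which moves the equator `y k = 0` to the pole `e_k`. -/
noncomputable def quarterTurn (k : Fin (m + 1)) (L l : ℕ) : Sph m → Sph m :=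
  rotate k (l * (Real.pi / 2 / L))

lemma dist_quarterTurn_lt {j : Fin (m + 1)} {L : ℕ} (hL : 2 * Real.pi / ε < L) (hε : 0 < ε)
    {y y' : Sph m} (hy : y.1 j = 0) (hy' : y'.1 j = 0) (hyy' : dist y y' < ε / 2) (l : ℕ)
    {δ δ' : ℕ} (hδ : δ ≤ 1) (hδ' : δ' ≤ 1) :
    dist (quarterTurn j L (l + δ) y) (quarterTurn j L (l + δ') y') < ε := by
  have hL₀ : (0 : ℝ) < L := lt_trans (by positivity) hL
  have angle : |((l + δ : ℕ) : ℝ) * (Real.pi / 2 / L) - (l + δ' : ℕ) * (Real.pi / 2 / L)| ≤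
      Real.pi / 2 / L := by
    rw [← sub_mul, abs_mul, abs_of_nonneg (show 0 ≤ Real.pi / 2 / L by positivity)]
    refine mul_le_of_le_one_left (by positivity) ?_
    interval_cases δ <;> interval_cases δ' <;> simp
  have small : 2 * (Real.pi / 2 / L) < ε / 2 := by
    rw [div_lt_iff₀ hε] at hL
    rw [show 2 * (Real.pi / 2 / L) = Real.pi / L by ring, div_lt_iff₀ hL₀]
    linarith
  have := dist_rotate_le hy hy' ((l + δ : ℕ) * (Real.pi / 2 / L)) ((l + δ' : ℕ) * (Real.pi / 2 / L))
  unfold quarterTurn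
  linarith

variable [Fintype ι]

lemma sum_coboundary_sweep_double {j : Fin (m + 1)} {L : ℕ} (hL : L ≠ 0)
    (hc : ∀ a r, (c a r).1 j = 0) (hcycle : 0 < k → IsCycleMod (ZMod 2) Neg.neg k c)
    {φ : (ℕ → Sph m) → ZMod 2} (hφ : DependsOn φ (Set.Iio (k + 1))) :
    ∑ a, coboundary (k + 1) φ (sweep (quarterTurn j L) L k (double Neg.neg c) a) =
      ∑ a, (φ (Neg.neg ∘ c a) + φ (c a)) := by
  have start (a) : quarterTurn j L 0 ∘ double Neg.neg c a = double Neg.neg c a := funext fun r ↦ by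
    simpa [quarterTurn] using rotate_zero (double_neg_apply_eq_zero hc a r)
  have finish (a) : quarterTurn j L L ∘ double Neg.neg c a = fun _ ↦ pole j := funext fun r ↦ by
    simpa [quarterTurn, mul_div_cancel₀ _ (Nat.cast_ne_zero (R := ℝ).2 hL)] using
      rotate_pi_div_two (double_neg_apply_eq_zero hc a r)
  rw [sum_coboundary_sweep _ L (isCycleMod_id_double neg_involutive hcycle) hφ]
  simp_rw [start, finish]
  rw [sum_double Neg.neg c fun p ↦ φ p + φ fun _ ↦ pole j]
  refine sum_congr rfl fun a _ ↦ ?_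
  linear_combination CharTwo.add_self_eq_zero (φ fun _ ↦ pole j)

/-- The chain `c` of simplices of diameter less than `ε` represents the fundamental class modulo
two of `ℝP^k ⊂ ℝP^m`. The last condition expresses that it is dual to the `k`-th power of the
generator of the cohomology, represented by the odd function `u`. -/
structure IsFundamentalChain (u : Sph m → ZMod 2) (k : ℕ) (ε : ℝ) (c : ι → ℕ → Sph m) : Prop where
  coord_eq_zero (a : ι) (r : ℕ) (l : Fin (m + 1)) : k < l → (c a r).1 l = 0
  dist_lt (a : ι) (r r' : ℕ) : dist (c a r) (c a r') < ε
  isCycleMod : 0 < k → IsCycleMod (ZMod 2) Neg.neg k c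
  sum_cupDiff : ∑ a, cupDiff (fun _ ↦ u) k (c a) = 1

lemma IsFundamentalChain.sweep (hu : ∀ y, u (-y) = u y + 1) (hε : 0 < ε) (hk : k + 1 < m + 1)
    {L : ℕ} (hL : 2 * Real.pi / ε < L) (hc : IsFundamentalChain u k (ε / 2) c) :
    IsFundamentalChain u (k + 1) ε
      (sweep (quarterTurn ⟨k + 1, hk⟩ L) L k (double Neg.neg c)) := by
  set j : Fin (m + 1) := ⟨k + 1, hk⟩
  have hL₀ : L ≠ 0 := by
    rintro rfl
    exact hL.not_ge (by simp only [Nat.cast_zero]; positivity)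
  have equator (a r) : (c a r).1 j = 0 := hc.coord_eq_zero a r j (Nat.lt_succ_self k)
  have boundary {φ : (ℕ → Sph m) → ZMod 2} (hφ : DependsOn φ (Set.Iio (k + 1))) :=
    sum_coboundary_sweep_double hL₀ equator hc.isCycleMod hφ
  refine ⟨fun a r l hl ↦ ?_, fun a r r' ↦ ?_, fun _ φ hφ hφτ ↦ ?_, ?_⟩
  · obtain ⟨δ, -, r', hr'⟩ := exists_sweep_eq (quarterTurn j L) L k (double Neg.neg c) a r
    rw [hr']
    exact rotate_apply_eq_zero (fun h ↦ hl.ne (congrArg Fin.val h).symm)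
      (double_neg_apply_eq_zero equator _ _)
      (double_neg_apply_eq_zero (fun a r ↦ hc.coord_eq_zero a r l (by omega)) _ _) _
  · obtain ⟨δ, hδ, q, hq⟩ := exists_sweep_eq (quarterTurn j L) L k (double Neg.neg c) a r
    obtain ⟨δ', hδ', q', hq'⟩ := exists_sweep_eq (quarterTurn j L) L k (double Neg.neg c) a r'
    rw [hq, hq']
    exact dist_quarterTurn_lt hL hε (double_neg_apply_eq_zero equator _ _)
      (double_neg_apply_eq_zero equator _ _) (dist_double_neg_lt hc.dist_lt _ _ _) _ hδ hδ'
  · rw [boundary hφ]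
    exact sum_eq_zero fun a _ ↦ by rw [hφτ, CharTwo.add_self_eq_zero]
  · have invariant (a) : cupDiff (fun _ ↦ u) k (Neg.neg ∘ c a) = cupDiff (fun _ ↦ u) k (c a) :=
      cupDiff_comp (fun _ x y ↦ by
        rw [hu, hu]
        linear_combination CharTwo.add_self_eq_zero (1 : ZMod 2)) _ _
    have dep : DependsOn (fun p ↦ cupDiff (fun _ ↦ u) k p * u (p k)) (Set.Iio (k + 1)) :=
      fun p p' h ↦ congrArg₂ _ (dependsOn_cupDiff _ k h) (congrArg u (h k (Nat.lt_succ_self k)))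
    rw [← hc.sum_cupDiff, sum_congr rfl fun a _ ↦
      (coboundary_cupDiff_mul_vertex (fun _ ↦ u) k _).symm, boundary dep]
    refine sum_congr rfl fun a _ ↦ ?_
    rw [invariant, comp_apply, hu]
    linear_combination CharTwo.add_self_eq_zero (cupDiff (fun _ ↦ u) k (c a) * u (c a k))

lemma exists_isFundamentalChain (hu : ∀ y, u (-y) = u y + 1) (hk : k ≤ m) (hε : 0 < ε) :
    ∃ (ι : Type) (_ : Fintype ι) (c : ι → ℕ → Sph m), IsFundamentalChain u k ε c := by
  induction k generalizing ε with
  | zero =>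
    refine ⟨Unit, inferInstance, fun _ _ ↦ pole 0, fun _ _ l hl ↦ ?_, fun _ _ _ ↦ by simpa,
      fun h ↦ absurd h (lt_irrefl 0), by simp [cupDiff]⟩
    have hl : l ≠ 0 := fun h ↦ by simp [h] at hl
    simp [pole, hl]
  | succ k ih =>
    obtain ⟨ι, _, c, hc⟩ := ih (Nat.le_of_succ_le hk) (half_pos hε)
    obtain ⟨L, hL⟩ := exists_nat_gt (2 * Real.pi / ε)
    exact ⟨_, inferInstance, _, hc.sweep hu hε (Nat.lt_succ_of_le hk) hL⟩

end FundamentalChain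

section Word

variable {J : Type*} {K : ℕ}

/-- The words of length `K` in the letters `J`. Letter `j` at place `t` of a word stands for a step
from vertex `t` to vertex `t + 1` in the direction of the factor `j` of a product. -/
abbrev Word (J : Type*) (K : ℕ) : Type _ := Fin K → J

lemma coe_succAbove (p : Fin (K + 1)) (t : Fin K) : (p.succAbove t : ℕ) = skip p t := by
  simp only [Fin.succAbove, skip, Fin.lt_def, Fin.val_castSucc]
  split_ifs <;> rfl

lemma insertNth_smul (p : Fin (K + 1)) (g : Equiv.Perm J) (j : J) (q : Word J K) :
    (p.insertNth (g • j) (g • q) : Word J (K + 1)) = g • (p.insertNth j q : Word J (K + 1)) :=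
  (Fin.insertNth_eq_iff).2 ⟨by simp, funext fun t ↦ by simp [Fin.removeNth]⟩

variable [DecidableEq J]

/-- The number of occurrences of `j` among the first `k` letters of `q`. -/
def letterCount (q : Word J K) (j : J) (k : ℕ) : ℕ := #{t : Fin K | t < k ∧ q t = j}

/-- Every letter occurs exactly `m` times in `q`. -/
def IsBalanced (m : ℕ) (q : Word J K) : Prop := ∀ j, letterCount q j K = m

lemma letterCount_zero (q : Word J K) (j : J) : letterCount q j 0 = 0 := by
  simp [letterCount]

lemma letterCount_mono (q : Word J K) (j : J) : Monotone (letterCount q j) := fun _ _ h ↦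
  card_le_card fun t ht ↦ by
    simp only [mem_filter, mem_univ, true_and] at ht ⊢
    exact ⟨ht.1.trans_le h, ht.2⟩

lemma letterCount_succ (q : Word J K) (j : J) (t : Fin K) :
    letterCount q j (t + 1) = letterCount q j t + if q t = j then 1 else 0 := by
  have split : (univ.filter fun s : Fin K ↦ (s : ℕ) < t + 1 ∧ q s = j) =
      (univ.filter fun s : Fin K ↦ (s : ℕ) < t ∧ q s = j) ∪
        univ.filter fun s ↦ s = t ∧ q t = j := by
    ext s
    simp only [mem_filter, mem_univ, true_and, mem_union, Fin.ext_iff, Nat.lt_succ_iff_lt_or_eq,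
      or_and_right]
    refine or_congr_right (and_congr_right fun h ↦ ?_)
    rw [Fin.ext h]
  rw [letterCount, split, card_union_of_disjoint]
  · split_ifs with h <;> simp [letterCount, h, filter_eq']
  · rw [disjoint_filter]
    rintro s - ⟨hs, -⟩ ⟨rfl, -⟩
    exact lt_irrefl _ hs

lemma letterCount_smul (g : Equiv.Perm J) (q : Word J K) (j : J) (k : ℕ) :
    letterCount (g • q) (g j) k = letterCount q j k := by
  simp [letterCount]

lemma isBalanced_smul {m : ℕ} (g : Equiv.Perm J) (q : Word J K) :
    IsBalanced m (g • q) ↔ IsBalanced m q := by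
  simp [IsBalanced, ← g.forall_congr_right (q := fun j ↦ letterCount (g • q) j K = m),
    letterCount_smul]

lemma letterCount_comp_swap (q : Word J K) (j : J) {t t' : Fin K} (h : (t' : ℕ) = t + 1) {k : ℕ}
    (hk : k ≠ t') : letterCount (q ∘ Equiv.swap t t') j k = letterCount q j k := by
  refine card_equiv (Equiv.swap t t') fun s ↦ ?_
  rw [mem_filter, mem_filter]
  simp only [mem_univ, true_and, comp_apply, Equiv.swap_apply_def]
  split_ifs with h₁ h₂ <;> refine and_congr_left fun _ ↦ ?_ <;> simp only [*] <;> omega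

lemma isBalanced_comp_swap {m : ℕ} (q : Word J K) {t t' : Fin K} (h : (t' : ℕ) = t + 1) :
    IsBalanced m (q ∘ Equiv.swap t t') ↔ IsBalanced m q := by
  simp only [IsBalanced, letterCount_comp_swap q _ h t'.2.ne']

lemma letterCount_eq_removeNth_add (w : Word J (K + 1)) (p : Fin (K + 1)) (j : J) {k l : ℕ}
    (hkl : ∀ t : ℕ, skip p t < k ↔ t < l) :
    letterCount w j k = letterCount (p.removeNth w) j l + if p < k ∧ w p = j then 1 else 0 := by
  rw [letterCount, letterCount, card_filter, card_filter, Fin.sum_univ_succAbove _ p, add_comm]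
  simp only [coe_succAbove, hkl, Fin.removeNth]
  congr!

lemma letterCount_removeNth_of_le (w : Word J (K + 1)) {p : Fin (K + 1)} (j : J) {k : ℕ}
    (hk : k ≤ p) : letterCount w j k = letterCount (p.removeNth w) j k := by
  rw [letterCount_eq_removeNth_add w p j (l := k) fun t ↦ ?_,
    if_neg fun h ↦ (h.1.trans_le hk).false, add_zero]
  unfold skip
  split_ifs <;> omega

lemma letterCount_succ_removeNth_of_ge (w : Word J (K + 1)) {p : Fin (K + 1)} (j : J) {k : ℕ}
    (hk : p ≤ k) :
    letterCount w j (k + 1) = letterCount (p.removeNth w) j k + if w p = j then 1 else 0 := by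
  rw [letterCount_eq_removeNth_add w p j (l := k) fun t ↦ ?_]
  · simp [Nat.lt_succ_of_le hk]
  · unfold skip
    split_ifs <;> omega

lemma sum_ite_letterCount {M : Type*} [AddCommMonoid M] (q : Word J K) (j : J) (F : ℕ → M) :
    ∑ t : Fin K, (if q t = j then F (letterCount q j (t + 1)) else 0) =
      ∑ r ∈ range (letterCount q j K), F (r + 1) := by
  suffices ∀ k (hk : k ≤ K), ∑ t : Fin k, (if q (t.castLE hk) = j
      then F (letterCount q j (t + 1)) else 0) = ∑ r ∈ range (letterCount q j k), F (r + 1) from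
    this K le_rfl
  intro k hk
  induction k with
  | zero => simp [letterCount_zero]
  | succ k ih =>
    have last := letterCount_succ q j ⟨k, hk⟩
    simp only at last
    rw [Fin.sum_univ_castSucc, Fin.val_last, last]
    refine (congrArg₂ _ (ih (Nat.le_of_succ_le hk)) rfl).trans ?_
    have e : q ((Fin.last k).castLE hk) = q ⟨k, hk⟩ := rfl
    rw [e]
    split_ifs
    · rw [sum_range_succ]
    · simp

end Word

section OrbitSum

variable {G α α' M ι : Type*} [Group G] [MulAction G α] [MulAction G α']

lemma apply_out_mk {F : α → M} (hF : ∀ (g : G) x, F (g • x) = F x) (a : α) :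
    F (Quotient.out (Quotient.mk (MulAction.orbitRel G α) a)) = F a := by
  obtain ⟨g, hg⟩ := Quotient.exact (Quotient.out_eq (Quotient.mk (MulAction.orbitRel G α) a))
  rw [← hg]
  exact hF g a

variable [Finite α] [Finite α'] [AddCommMonoid M]

noncomputable instance : Fintype (Quotient (MulAction.orbitRel G α)) := Fintype.ofFinite _

variable (G) in
/-- The sum of the values of `F` on a system of representatives of the orbits of `G`. -/
noncomputable def orbitSum (F : α → M) : M :=
  ∑ x : Quotient (MulAction.orbitRel G α), F x.out

lemma orbitSum_add (F F' : α → M) :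
    orbitSum G (fun a ↦ F a + F' a) = orbitSum G F + orbitSum G F' :=
  sum_add_distrib

lemma orbitSum_sum (s : Finset ι) (F : ι → α → M) :
    orbitSum G (fun a ↦ ∑ i ∈ s, F i a) = ∑ i ∈ s, orbitSum G (F i) :=
  sum_comm

lemma orbitSum_eq_zero {F : α → M} (hF : ∀ a, F a = 0) : orbitSum G F = 0 :=
  sum_eq_zero fun _ _ ↦ hF _

lemma orbitSum_comp_equiv (e : α ≃ α') (he : ∀ (g : G) x, e (g • x) = g • e x) {F : α' → M}
    (hF : ∀ (g : G) x, F (g • x) = F x) : orbitSum G (fun a ↦ F (e a)) = orbitSum G F := by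
  refine Fintype.sum_equiv (Quotient.congr e fun a b ↦ exists_congr fun g ↦ ?_) _ _ fun x ↦ ?_
  · simp only [← he, e.injective.eq_iff]
  · induction x using Quotient.inductionOn with
    | h a =>
      have hFe : ∀ (g : G) x, (F ∘ e) (g • x) = (F ∘ e) x := fun g x ↦ by
        rw [comp_apply, he, hF, comp_apply]
      exact (apply_out_mk hFe a).trans (apply_out_mk hF (e a)).symm

lemma orbitSum_eq_zero_of_involutive {R : Type*} [Semiring R] [CharP R 2] {T : α → α}
    (hT : Involutive T) (hTg : ∀ (g : G) a, T (g • a) = g • T a) {F : α → R}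
    (hF : ∀ (g : G) x, F (g • x) = F x) (hFT : ∀ a, F (T a) = F a)
    (hfix : ∀ a (g : G), T a = g • a → F a = 0) : orbitSum G F = 0 := by
  have map_out : ∀ a, (Quotient.mk (MulAction.orbitRel G α)
      (T (Quotient.out (Quotient.mk (MulAction.orbitRel G α) a)))) = Quotient.mk _ (T a) := by
    intro a
    obtain ⟨g, hg⟩ := Quotient.exact (Quotient.out_eq (Quotient.mk (MulAction.orbitRel G α) a))
    exact Quotient.sound ⟨g, by rw [← hg]; exact (hTg g a).symm⟩
  refine sum_involution (fun x _ ↦ Quotient.mk _ (T x.out)) (fun x _ ↦ ?_) (fun x _ hx h ↦ ?_)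
    (fun _ _ ↦ mem_univ _) fun x _ ↦ ?_
  · rw [apply_out_mk hF, hFT, CharTwo.add_self_eq_zero]
  · obtain ⟨g, hg⟩ := Quotient.exact (h.trans (Quotient.out_eq x).symm)
    exact hx (hfix _ g hg.symm)
  · rw [map_out, hT, Quotient.out_eq]

lemma sum_eq_card_nsmul_orbitSum [Fintype α] {F : α → M} (hF : ∀ (g : G) x, F (g • x) = F x)
    (hfree : ∀ a (g : G), F a ≠ 0 → g • a = a → g = 1) :
    ∑ a, F a = Nat.card G • orbitSum G F := by
  classical
  rw [orbitSum, smul_sum, ← sum_fiberwise univ (Quotient.mk (MulAction.orbitRel G α))]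
  refine sum_congr rfl fun x _ ↦ ?_
  have fiber : ∀ a, Quotient.mk (MulAction.orbitRel G α) a = x ↔ a ∈ MulAction.orbit G x.out :=
    fun a ↦ by rw [← MulAction.orbitRel_apply, ← Quotient.eq, Quotient.out_eq]
  have const : ∀ a ∈ univ.filter (fun a ↦ Quotient.mk (MulAction.orbitRel G α) a = x),
      F a = F x.out := fun a ha ↦ by
    obtain ⟨g, rfl⟩ := (fiber a).1 (mem_filter.1 ha).2
    exact hF g _
  rw [sum_congr rfl const, sum_const]
  by_cases h : F x.out = 0
  · rw [h, smul_zero, smul_zero]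
  · congr 1
    have hs : MulAction.stabilizer G x.out = ⊥ :=
      (Subgroup.eq_bot_iff_forall _).2 fun g hg ↦ hfree _ g h hg
    rw [← Subgroup.index_bot, ← hs, MulAction.index_stabilizer, ← Set.ncard_coe_finset]
    exact congrArg Set.ncard (Set.ext fun a ↦ by simp [fiber])

end OrbitSum

section Shuffle

variable {X J R ι : Type*} {K m : ℕ}

/-- The places `i - 1` and `i` of `q` exist and carry different letters, so that the `i`-th face
of a shuffle of type `q` crosses the interior of a product of two edges. -/
def IsMixed (i : ℕ) (q : Word J K) : Prop :=
  ∃ t t' : Fin K, (t' : ℕ) = t + 1 ∧ (t' : ℕ) = i ∧ q t ≠ q t'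

lemma isMixed_smul (i : ℕ) (g : Equiv.Perm J) (q : Word J K) :
    IsMixed i (g • q) ↔ IsMixed i q := by
  simp [IsMixed]

variable [DecidableEq J]

/-- The map of `J → X` which applies `τ` in the factor `j`. -/
def flipAt (τ : X → X) (j : J) (x : J → X) : J → X := update x j (τ (x j))

/-- The simplex of the shuffle triangulation of the product of the simplices `x j` which moves
along the factors in the order given by the word `q`. -/
def shuffle (q : Word J K) (x : J → ℕ → X) (k : ℕ) (j : J) : X := x j (letterCount q j k)

lemma shuffle_smul (g : Equiv.Perm J) (q : Word J K) (x : J → ℕ → X) :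
    (· ∘ g) ∘ shuffle (g • q) x = shuffle q (x ∘ g) := by
  funext k j
  simp [shuffle, letterCount_smul]

lemma shuffle_update_comp (τ : X → X) (q : Word J K) (x : J → ℕ → X) (j : J) (y : ℕ → X) :
    shuffle q (update x j (τ ∘ y)) = flipAt τ j ∘ shuffle q (update x j y) := by
  funext k j'
  rcases eq_or_ne j' j with rfl | h
  · simp [shuffle, flipAt]
  · simp [shuffle, flipAt, h]

lemma dependsOn_shuffle_update {β : (ℕ → J → X) → R} (hβ : DependsOn β (Set.Iio (K + 1)))
    {q : Word J K} {j : J} (hq : letterCount q j K < m) (x : J → ℕ → X) :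
    DependsOn (fun y ↦ β (shuffle q (update x j y))) (Set.Iio m) := by
  refine fun y y' hy ↦ hβ fun k hk ↦ funext fun j' ↦ ?_
  rcases eq_or_ne j' j with rfl | h
  · simpa only [shuffle, update_self] using
      hy _ ((letterCount_mono q j' (Nat.lt_succ_iff.1 hk)).trans_lt hq)
  · simp only [shuffle, update_of_ne h]

instance (i : ℕ) : DecidablePred (IsMixed i : Word J K → Prop) := fun q ↦
  inferInstanceAs (Decidable (∃ t t' : Fin K, (t' : ℕ) = t + 1 ∧ (t' : ℕ) = i ∧ q t ≠ q t'))

/-- The place of the letter which an unmixed word of length `K + 1` loses in its `i`-th face. -/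
def facePlace (K i : ℕ) : Fin (K + 1) := ⟨min i K, by omega⟩

lemma letterCount_lt_of_not_isMixed {w : Word J (K + 1)} {i k : ℕ} (hi : i ≤ K + 1)
    (hw : ¬ IsMixed i w) (hk : k < i) :
    letterCount w (w (facePlace K i)) k < letterCount w (w (facePlace K i)) i := by
  obtain ⟨t, rfl⟩ : ∃ t, i = t + 1 := ⟨i - 1, by omega⟩
  have hwt : w ⟨t, hi⟩ = w (facePlace K (t + 1)) := by
    rcases eq_or_ne t K with rfl | ht
    · exact congrArg w (Fin.ext (by simp [facePlace]))
    · by_contra h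
      exact hw ⟨_, _, by simp [facePlace]; omega, by simp [facePlace]; omega, h⟩
  rw [letterCount_succ w _ ⟨t, hi⟩, if_pos hwt]
  exact Nat.lt_succ_of_le (letterCount_mono w _ (Nat.lt_succ_iff.1 hk))

lemma shuffle_skip_of_not_isMixed {w : Word J (K + 1)} {i k : ℕ} (hi : i ≤ K + 1)
    (hw : ¬ IsMixed i w) (hk : k ≤ K) (x : J → ℕ → X) :
    shuffle w x (skip i k) = shuffle ((facePlace K i).removeNth w) (update x (w (facePlace K i))
      (x (w (facePlace K i)) ∘ skip (letterCount w (w (facePlace K i)) i))) k := by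
  have hp : (facePlace K i : ℕ) = min i K := rfl
  have mono := letterCount_mono ((facePlace K i).removeNth w) (w (facePlace K i))
  funext j
  rcases lt_or_ge k i with hki | hki
  · have hkp := letterCount_removeNth_of_le w (p := facePlace K i) j (k := k) (by omega)
    rw [skip_of_lt hki, shuffle, hkp, shuffle]
    rcases eq_or_ne j (w (facePlace K i)) with rfl | hj
    · rw [update_self, comp_apply, ← hkp, skip_of_lt (letterCount_lt_of_not_isMixed hi hw hki)]
    · rw [update_of_ne hj]
  · have hkp := letterCount_succ_removeNth_of_ge w (p := facePlace K i) j (k := k) (by omega)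
    rw [skip_of_le hki, shuffle, hkp, shuffle]
    rcases eq_or_ne j (w (facePlace K i)) with rfl | hj
    · rw [update_self, comp_apply, letterCount_removeNth_of_le w (p := facePlace K i) _ (k := i)
        (by omega), skip_of_le (mono hki), if_pos rfl]
    · rw [update_of_ne hj, if_neg hj.symm, add_zero]

lemma comp_swap_ne_smul {q : Word J K} (hq : IsBalanced m q) (hm : 2 ≤ m) {t t' : Fin K}
    (htt' : q t ≠ q t') (g : Equiv.Perm J) : q ∘ Equiv.swap t t' ≠ g • q := by
  intro hg
  have twice : 1 < #{s : Fin K | s < K ∧ q s = q t} := hm.trans_eq (hq (q t)).symm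
  obtain ⟨s, hs, hst⟩ := exists_mem_ne twice t
  have hs : q s = q t := (mem_filter.1 hs).2.2
  have hst' : s ≠ t' := fun h ↦ htt' (hs.symm.trans (congrArg q h))
  have ht := congrFun hg t
  have hs' := congrFun hg s
  simp only [comp_apply, Equiv.swap_apply_left, Equiv.swap_apply_of_ne_of_ne hst hst',
    Pi.smul_apply, hs] at ht hs'
  exact htt' (hs'.trans ht.symm)

variable [Fintype J] [Fintype ι] [CommRing R]

lemma sum_shuffle_update_eq_zero {τ : X → X} {c : ι → ℕ → X} (hc : IsCycleMod R τ m c)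
    {β : (ℕ → J → X) → R} (hβ : DependsOn β (Set.Iio (K + 1)))
    (hflip : ∀ j p, β (flipAt τ j ∘ p) = β p) {q : Word J K} {j : J} (hq : letterCount q j K < m) :
    ∑ r ∈ range (m + 1), ∑ ς : J → ι,
      β (shuffle q (update (c ∘ ς) j ((c ∘ ς) j ∘ skip r))) = 0 := by
  rw [sum_comm, ← (Equiv.funSplitAt j ι).symm.sum_comp, Fintype.sum_prod_type, sum_comm]
  refine sum_eq_zero fun ρ _ ↦ ?_
  let x (a : ι) : J → ℕ → X := c ∘ (Equiv.funSplitAt j ι).symm (a, ρ)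
  obtain _ | ⟨⟨a₀⟩⟩ := isEmpty_or_nonempty ι
  · exact sum_of_isEmpty _
  have x_update : ∀ a y, update (x a) j y = update (x a₀) j y := fun a y ↦ by
    funext j'
    rcases eq_or_ne j' j with rfl | h
    · simp
    · simp [x, h, Equiv.funSplitAt, Equiv.piSplitAt]
  have x_self : ∀ a, x a j = c a := fun a ↦ by simp [x, Equiv.funSplitAt, Equiv.piSplitAt]
  rw [← hc _ (dependsOn_shuffle_update hβ hq (x a₀)) fun y ↦ by rw [shuffle_update_comp, hflip]]
  refine sum_congr rfl fun a _ ↦ sum_congr rfl fun r _ ↦ ?_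
  change β (shuffle q (update (x a) j (x a j ∘ skip r))) =
    β (shuffle q (update (x a₀) j (c a ∘ skip r)))
  rw [x_update, x_self]

instance : DecidablePred (IsBalanced m : Word J K → Prop) := fun q ↦
  inferInstanceAs (Decidable (∀ j, letterCount q j K = m))

/-- The value of the cochain `Φ` on the sum of the shuffles of type `q` of simplices of the chain
`∑ a, c a`, with the convention that only balanced words have shuffles. -/
def shuffleSum (m : ℕ) (c : ι → ℕ → X) (Φ : (ℕ → J → X) → R) (q : Word J K) : R :=
  if IsBalanced m q then ∑ ς : J → ι, Φ (shuffle q (c ∘ ς)) else 0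

lemma shuffleSum_smul (m : ℕ) (c : ι → ℕ → X) {Φ : (ℕ → J → X) → R}
    (hΦ : ∀ (g : Equiv.Perm J) p, Φ ((· ∘ g) ∘ p) = Φ p) (g : Equiv.Perm J) (q : Word J K) :
    shuffleSum m c Φ (g • q) = shuffleSum m c Φ q := by
  simp only [shuffleSum, isBalanced_smul]
  congr 1
  refine Fintype.sum_equiv (Equiv.arrowCongr g.symm (Equiv.refl ι)) _ _ fun ς ↦ ?_
  rw [← hΦ g, shuffle_smul]
  rfl

lemma shuffleSum_coboundary (m : ℕ) (c : ι → ℕ → X) (k : ℕ) (β : (ℕ → J → X) → R) (q : Word J K) :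
    shuffleSum m c (coboundary k β) q =
      ∑ i ∈ range (k + 1), shuffleSum m c (fun p ↦ β (p ∘ skip i)) q := by
  simp only [shuffleSum, coboundary]
  split_ifs
  · exact sum_comm
  · exact sum_const_zero.symm

lemma shuffleSum_comp_swap (c : ι → ℕ → X) (β : (ℕ → J → X) → R) (q : Word J K) {t t' : Fin K}
    (h : (t' : ℕ) = t + 1) :
    shuffleSum m c (fun p ↦ β (p ∘ skip t')) (q ∘ Equiv.swap t t') =
      shuffleSum m c (fun p ↦ β (p ∘ skip t')) q := by
  simp only [shuffleSum, isBalanced_comp_swap q h]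
  congr 1
  refine sum_congr rfl fun ς _ ↦ congrArg β (funext fun k ↦ funext fun j ↦ ?_)
  have hk : skip t' k ≠ t' := by unfold skip; split_ifs <;> omega
  simp only [shuffle, comp_apply, letterCount_comp_swap q j h hk]

lemma orbitSum_isMixed_eq_zero [CharP R 2] (hm : 2 ≤ m) (c : ι → ℕ → X) {β : (ℕ → J → X) → R}
    (hperm : ∀ (g : Equiv.Perm J) p, β ((· ∘ g) ∘ p) = β p) (i : ℕ) :
    orbitSum (Equiv.Perm J) (fun q : Word J K ↦
      if IsMixed i q then shuffleSum m c (fun p ↦ β (p ∘ skip i)) q else 0) = 0 := by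
  by_cases hi : ∃ t t' : Fin K, (t' : ℕ) = t + 1 ∧ (t' : ℕ) = i
  swap
  · exact orbitSum_eq_zero fun q ↦ if_neg fun ⟨t, t', h, h', _⟩ ↦ hi ⟨t, t', h, h'⟩
  obtain ⟨t, t', h, rfl⟩ := hi
  have mixed : ∀ q : Word J K, IsMixed t' q ↔ q t ≠ q t' := fun q ↦ by
    refine ⟨?_, fun hq ↦ ⟨t, t', h, rfl, hq⟩⟩
    rintro ⟨s, s', hs, hs', hq⟩
    rwa [Fin.ext hs', show s = t from Fin.ext (by omega)] at hq
  refine orbitSum_eq_zero_of_involutive (T := (· ∘ Equiv.swap t t'))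
    (fun q ↦ by simp [comp_assoc, ← Equiv.coe_trans]) (fun _ _ ↦ rfl) (fun g q ↦ ?_)
    (fun q ↦ ?_) fun q g hg ↦ ?_
  · simp only [isMixed_smul, shuffleSum_smul m c (Φ := fun p ↦ β (p ∘ skip t'))
      fun g p ↦ hperm g (p ∘ skip t')]
  · simp only [shuffleSum_comp_swap c β q h, mixed, comp_apply, Equiv.swap_apply_left,
      Equiv.swap_apply_right, ne_comm]
  · rw [ite_eq_right_iff, mixed]
    exact fun hq ↦ if_neg fun hb ↦ comp_swap_ne_smul hb hm hq g hg

end Shuffle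

section ShuffleCycle

variable {X J R ι : Type*} {K m : ℕ}

lemma isMixed_insertNth_succ (t : Fin K) (j : J) (q : Word J K) :
    IsMixed (t + 1) (t.succ.insertNth j q : Word J (K + 1)) ↔ q t ≠ j := by
  have hj : (t.succ.insertNth j q : Word J (K + 1)) t.succ = j := Fin.insertNth_apply_same ..
  have hq : (t.succ.insertNth j q : Word J (K + 1)) t.castSucc = q t := by
    rw [← Fin.succAbove_succ_self, Fin.insertNth_apply_succAbove]
  constructor
  · rintro ⟨s, s', hs, hs', h⟩
    rwa [show s' = t.succ from Fin.ext hs', show s = t.castSucc from Fin.ext (by simp; omega), hj,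
      hq] at h
  · exact fun h ↦ ⟨t.castSucc, t.succ, rfl, rfl, by rwa [hj, hq]⟩

variable [DecidableEq J]

lemma isBalanced_insertNth (p : Fin (K + 1)) (j : J) (q : Word J K) :
    IsBalanced m (p.insertNth j q : Word J (K + 1)) ↔
      ∀ j', letterCount q j' K + (if j = j' then 1 else 0) = m := by
  refine forall_congr' fun j' ↦ ?_
  rw [letterCount_succ_removeNth_of_ge _ _ (Nat.le_of_lt_succ p.2), Fin.removeNth_insertNth,
    Fin.insertNth_apply_same]

variable [Fintype J] [Fintype ι] [CommRing R]

lemma shuffleSum_comp_skip_of_not_isMixed (c : ι → ℕ → X) {β : (ℕ → J → X) → R}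
    (hβ : DependsOn β (Set.Iio (K + 1))) {w : Word J (K + 1)} {i : ℕ} (hi : i ≤ K + 1)
    (hw : ¬ IsMixed i w) (hbal : IsBalanced m w) :
    shuffleSum m c (fun p ↦ β (p ∘ skip i)) w =
      ∑ ς : J → ι, β (shuffle ((facePlace K i).removeNth w) (update (c ∘ ς) (w (facePlace K i))
        ((c ∘ ς) (w (facePlace K i)) ∘ skip (letterCount w (w (facePlace K i)) i)))) := by
  rw [shuffleSum, if_pos hbal]
  exact sum_congr rfl fun ς _ ↦ hβ fun k hk ↦
    shuffle_skip_of_not_isMixed hi hw (Nat.lt_succ_iff.1 hk) _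

lemma sum_not_isMixed_eq_zero {τ : X → X} {c : ι → ℕ → X} (hc : IsCycleMod R τ m c)
    {β : (ℕ → J → X) → R} (hβ : DependsOn β (Set.Iio (K + 1)))
    (hflip : ∀ j p, β (flipAt τ j ∘ p) = β p) (j : J) (q : Word J K) :
    ∑ i ∈ range (K + 2), (if IsMixed i ((facePlace K i).insertNth j q : Word J (K + 1)) then 0 else
      shuffleSum m c (fun p ↦ β (p ∘ skip i)) ((facePlace K i).insertNth j q)) = 0 := by
  by_cases hbal : ∀ j', letterCount q j' K + (if j = j' then 1 else 0) = m
  swap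
  · refine sum_eq_zero fun i _ ↦ ?_
    rw [shuffleSum, if_neg (mt (isBalanced_insertNth _ j q).1 hbal), ite_self]
  have hm : letterCount q j K + 1 = m := by simpa using hbal j
  let w (i : ℕ) : Word J (K + 1) := (facePlace K i).insertNth j q
  let face (r : ℕ) : R := ∑ ς : J → ι, β (shuffle q (update (c ∘ ς) j ((c ∘ ς) j ∘ skip r)))
  have term : ∀ i ≤ K + 1, (if IsMixed i (w i) then 0 else
      shuffleSum m c (fun p ↦ β (p ∘ skip i)) (w i)) =
        if IsMixed i (w i) then 0 else face (letterCount (w i) j i) := fun i hi ↦ by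
    split_ifs with hw
    · rfl
    · rw [shuffleSum_comp_skip_of_not_isMixed c hβ hi hw ((isBalanced_insertNth _ j q).2 hbal)]
      simp only [w, Fin.insertNth_apply_same, Fin.removeNth_insertNth, face]
  have first : (if IsMixed 0 (w 0) then 0 else face (letterCount (w 0) j 0)) = face 0 := by
    rw [letterCount_zero, if_neg]
    rintro ⟨t, t', h, h', -⟩
    omega
  have last : (if IsMixed (K + 1) (w (K + 1)) then 0 else
      face (letterCount (w (K + 1)) j (K + 1))) = face m := by
    rw [((isBalanced_insertNth _ j q).2 hbal) j, if_neg]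
    rintro ⟨t, t', -, h', -⟩
    exact t'.2.ne h'
  have middle : ∀ t : Fin K, (if IsMixed (t + 1) (w (t + 1)) then 0 else
      face (letterCount (w (t + 1)) j (t + 1))) =
        if q t = j then face (letterCount q j (t + 1)) else 0 := fun t ↦ by
    have hp : facePlace K (t + 1) = t.succ := Fin.ext (by simp [facePlace])
    simp only [w, hp, isMixed_insertNth_succ, ite_not]
    rw [letterCount_removeNth_of_le _ j (p := t.succ) (Fin.val_succ t).ge, Fin.removeNth_insertNth]
  rw [sum_congr rfl fun i hi ↦ term i (Nat.lt_succ_iff.1 (mem_range.1 hi)), sum_range_succ,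
    sum_range_succ', first, last, sum_range, sum_congr rfl fun t _ ↦ middle t, sum_ite_letterCount,
    ← sum_range_succ', hm, ← sum_range_succ]
  exact sum_shuffle_update_eq_zero hc hβ hflip (by omega)

variable [CharP R 2]

theorem orbitSum_shuffleSum_coboundary_eq_zero (hm : 2 ≤ m) {τ : X → X} {c : ι → ℕ → X}
    (hc : IsCycleMod R τ m c) {β : (ℕ → J → X) → R} (hβ : DependsOn β (Set.Iio (K + 1)))
    (hperm : ∀ (g : Equiv.Perm J) p, β ((· ∘ g) ∘ p) = β p)
    (hflip : ∀ j p, β (flipAt τ j ∘ p) = β p) :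
    orbitSum (Equiv.Perm J) (shuffleSum m c (coboundary (K + 1) β) : Word J (K + 1) → R) = 0 := by
  let S (i : ℕ) : Word J (K + 1) → R := shuffleSum m c fun p ↦ β (p ∘ skip i)
  have S_smul : ∀ i (g : Equiv.Perm J) q, S i (g • q) = S i q := fun i ↦
    shuffleSum_smul m c fun g p ↦ hperm g (p ∘ skip i)
  have decompose : shuffleSum m c (coboundary (K + 1) β) = fun q : Word J (K + 1) ↦
      ∑ i ∈ range (K + 2), ((if IsMixed i q then S i q else 0) +
        if IsMixed i q then 0 else S i q) := funext fun q ↦ by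
    rw [shuffleSum_coboundary]
    refine sum_congr rfl fun i _ ↦ ?_
    split_ifs
    exacts [(add_zero _).symm, (zero_add _).symm]
  have regroup : ∀ i, orbitSum (Equiv.Perm J) (fun q ↦ if IsMixed i q then 0 else S i q) =
      orbitSum (Equiv.Perm J) fun x : J × Word J K ↦
        if IsMixed i ((facePlace K i).insertNth x.1 x.2 : Word J (K + 1)) then 0 else
          S i ((facePlace K i).insertNth x.1 x.2) := fun i ↦
    (orbitSum_comp_equiv (Fin.insertNthEquiv (fun _ ↦ J) (facePlace K i))
      (fun g x ↦ insertNth_smul _ g x.1 x.2) fun g q ↦ by simp only [isMixed_smul, S_smul]).symm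
  rw [decompose, orbitSum_sum]
  simp only [orbitSum_add]
  rw [sum_add_distrib, sum_eq_zero fun i _ ↦ orbitSum_isMixed_eq_zero hm c hperm i,
    sum_congr rfl fun i _ ↦ regroup i, ← orbitSum_sum, zero_add]
  exact orbitSum_eq_zero fun x ↦ sum_not_isMixed_eq_zero hc hβ hflip x.1 x.2

end ShuffleCycle

section BalancedWords

variable {J : Type*} {K m : ℕ}

/-- A bijection onto `J × Fin m` consists of a word, given by the first coordinate, and of
numberings of the occurrences of each of its letters. -/
def equivProdFinEquiv (J : Type*) (K m : ℕ) :
    (Fin K ≃ J × Fin m) ≃ Σ q : Word J K, ∀ j, {t // q t = j} ≃ Fin m where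
  toFun e := ⟨fun t ↦ (e t).1, fun j ↦
    { toFun t := (e t).2
      invFun s := ⟨e.symm (j, s), by simp⟩
      left_inv := by rintro ⟨t, rfl⟩; simp
      right_inv s := by simp }⟩
  invFun x :=
    { toFun t := (x.1 t, x.2 (x.1 t) ⟨t, rfl⟩)
      invFun y := (x.2 y.1).symm y.2
      left_inv t := congrArg Subtype.val ((x.2 (x.1 t)).symm_apply_apply ⟨t, rfl⟩)
      right_inv := by
        rintro ⟨j, s⟩
        obtain ⟨⟨t, rfl⟩, rfl⟩ := (x.2 j).surjective s
        dsimp only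
        rw [(x.2 (x.1 t)).symm_apply_apply] }
  left_inv e := by ext t <;> rfl
  right_inv := by
    rintro ⟨q, f⟩
    exact Sigma.ext rfl (heq_of_eq (funext fun j ↦ Equiv.ext fun ⟨t, ht⟩ ↦ by subst ht; rfl))

variable [DecidableEq J]

lemma letterCount_eq_card (q : Word J K) (j : J) :
    letterCount q j K = Fintype.card {t // q t = j} := by
  simp [letterCount, Fintype.card_subtype]

lemma eq_one_of_smul_eq {q : Word J K} (hq : IsBalanced m q) (hm : m ≠ 0) {g : Equiv.Perm J}
    (hg : g • q = q) : g = 1 := by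
  ext j
  have : 0 < Fintype.card {t // q t = j} := by
    rw [← letterCount_eq_card, hq j]
    exact Nat.pos_of_ne_zero hm
  obtain ⟨t, rfl⟩ := Fintype.card_pos_iff.1 this
  exact congrFun hg t

variable [Fintype J]

lemma card_isBalanced_mul_pow (hK : K = Fintype.card J * m) :
    #{q : Word J K | IsBalanced m q} * m.factorial ^ Fintype.card J = K.factorial := by
  have numberings : ∀ q : Word J K, Fintype.card (∀ j, {t // q t = j} ≃ Fin m) =
      if IsBalanced m q then m.factorial ^ Fintype.card J else 0 := fun q ↦ by
    split_ifs with hq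
    · have : ∀ j, Fintype.card ({t // q t = j} ≃ Fin m) = m.factorial := fun j ↦ by
        have hj := (letterCount_eq_card q j).symm.trans (hq j)
        rw [Fintype.card_equiv (Fintype.equivFinOfCardEq hj), hj]
      simp [Fintype.card_pi, this]
    · refine Fintype.card_eq_zero_iff.2 ⟨fun f ↦ hq fun j ↦ ?_⟩
      rw [letterCount_eq_card, Fintype.card_congr (f j), Fintype.card_fin]
  have total : Fintype.card (Fin K ≃ J × Fin m) = K.factorial := by
    rw [Fintype.card_equiv (Fintype.equivOfCardEq (by simp [hK])), Fintype.card_fin]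
  rw [card_filter, sum_mul, ← total, Fintype.card_congr (equivProdFinEquiv J K m),
    Fintype.card_sigma]
  simp only [numberings, ite_mul, one_mul, zero_mul]

lemma orbitSum_isBalanced (hm : m ≠ 0) (hK : K = Fintype.card J * m) (R : Type*) [Semiring R] :
    orbitSum (Equiv.Perm J) (fun q : Word J K ↦ if IsBalanced m q then (1 : R) else 0) =
      ((Fintype.card J).uniformBell m : ℕ) := by
  let N : ℕ := orbitSum (Equiv.Perm J) fun q : Word J K ↦ if IsBalanced m q then 1 else 0
  suffices N = (Fintype.card J).uniformBell m by
    rw [← this]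
    simp [N, orbitSum]
  have orbits : #{q : Word J K | IsBalanced m q} = (Fintype.card J).factorial * N := by
    rw [card_filter, sum_eq_card_nsmul_orbitSum (G := Equiv.Perm J), Nat.card_eq_fintype_card,
      Fintype.card_perm, smul_eq_mul]
    · simp only [isBalanced_smul, implies_true]
    · exact fun q g hq ↦ eq_one_of_smul_eq (by_contra fun h ↦ hq (if_neg h)) hm
  have total := card_isBalanced_mul_pow hK
  rw [orbits, hK, ← Nat.uniformBell_mul_eq _ hm] at total
  refine Nat.eq_of_mul_eq_mul_left
    (mul_pos (Fintype.card J).factorial_pos (pow_pos m.factorial_pos (Fintype.card J))) ?_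
  linarith

end BalancedWords

lemma odd_choose_mul_two_pow (p e : ℕ) : Odd ((p * 2 ^ e + 2 ^ e - 1).choose (2 ^ e - 1)) := by
  induction e with
  | zero => simp
  | succ e ih =>
    have := Fact.mk Nat.prime_two
    have pos : 0 < 2 ^ e := by positivity
    have lucas := Choose.choose_modEq_choose_mod_mul_choose_div_nat (p := 2)
      (n := p * 2 ^ (e + 1) + 2 ^ (e + 1) - 1) (k := 2 ^ (e + 1) - 1)
    rw [pow_succ, ← mul_assoc] at lucas ⊢
    rw [show (p * 2 ^ e * 2 + 2 ^ e * 2 - 1) % 2 = 1 by omega,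
      show (p * 2 ^ e * 2 + 2 ^ e * 2 - 1) / 2 = p * 2 ^ e + 2 ^ e - 1 by omega,
      show (2 ^ e * 2 - 1) % 2 = 1 by omega, show (2 ^ e * 2 - 1) / 2 = 2 ^ e - 1 by omega,
      Nat.choose_self, one_mul] at lucas
    exact Nat.odd_iff.2 (Eq.trans lucas (Nat.odd_iff.1 ih))

lemma odd_uniformBell_two_pow (n e : ℕ) : Odd (n.uniformBell (2 ^ e)) := by
  rw [Nat.uniformBell_eq]
  exact prod_induction _ Odd (fun _ _ ↦ Odd.mul) odd_one fun p _ ↦ odd_choose_mul_two_pow p e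

section Evaluation

variable {X J R ι : Type*} [DecidableEq J] [Fintype J] [CommRing R] {K m : ℕ}

/-- The sum over all factors of a power of `X` of a function on `X`. -/
def coordSum (u : X → R) (x : J → X) : R := ∑ j, u (x j)

variable [CharP R 2]

lemma coordSum_shuffle_add (u : X → R) (q : Word J K) (x : J → ℕ → X) (t : Fin K) :
    coordSum u (shuffle q x t) + coordSum u (shuffle q x (t + 1)) =
      u (x (q t) (letterCount q (q t) t)) + u (x (q t) (letterCount q (q t) t + 1)) := by
  rw [coordSum, coordSum, ← sum_add_distrib, sum_eq_single (q t)]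
  · simp [shuffle, letterCount_succ]
  · intro j _ hj
    rw [shuffle, shuffle, letterCount_succ, if_neg hj.symm, add_zero, CharTwo.add_self_eq_zero]
  · simp

lemma cupDiff_coordSum_shuffle (u : X → R) (q : Word J K) (x : J → ℕ → X) :
    cupDiff (fun _ ↦ coordSum u) K (shuffle q x) =
      ∏ j, cupDiff (fun _ ↦ u) (letterCount q j K) (x j) := by
  suffices ∀ k ≤ K, cupDiff (fun _ ↦ coordSum u) k (shuffle q x) =
    ∏ j, cupDiff (fun _ ↦ u) (letterCount q j k) (x j) from this K le_rfl
  intro k hk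
  induction k with
  | zero => simp [cupDiff, letterCount_zero]
  | succ k ih =>
    have step : ∀ j, letterCount q j (k + 1) =
      letterCount q j k + if q ⟨k, hk⟩ = j then 1 else 0 := (letterCount_succ q · ⟨k, hk⟩)
    have others : ∀ j ∈ univ.erase (q ⟨k, hk⟩), cupDiff (fun _ ↦ u) (letterCount q j (k + 1))
        (x j) = cupDiff (fun _ ↦ u) (letterCount q j k) (x j) := fun j hj ↦ by
      rw [step, if_neg (ne_of_mem_erase hj).symm, add_zero]
    rw [cupDiff_succ, ih (by omega), coordSum_shuffle_add u q x ⟨k, hk⟩,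
      ← mul_prod_erase _ _ (mem_univ (q ⟨k, hk⟩)), ← mul_prod_erase univ
        (fun j ↦ cupDiff (fun _ ↦ u) (letterCount q j (k + 1)) (x j)) (mem_univ (q ⟨k, hk⟩)),
      step, if_pos rfl, cupDiff_succ, prod_congr rfl others]
    ring

lemma shuffleSum_cupDiff_coordSum [Fintype ι] (u : X → R) {c : ι → ℕ → X}
    (hc : ∑ a, cupDiff (fun _ ↦ u) m (c a) = 1) (q : Word J K) :
    shuffleSum m c (cupDiff (fun _ ↦ coordSum u) K) q = if IsBalanced m q then 1 else 0 := by
  unfold shuffleSum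
  split_ifs with hq
  · simp only [cupDiff_coordSum_shuffle, hq _]
    have expand := prod_univ_sum (fun _ : J ↦ univ) fun _ a ↦ cupDiff (fun _ ↦ u) m (c a)
    simp only [hc, prod_const_one, Fintype.piFinset_univ] at expand
    exact expand.symm
  · rfl

end Evaluation

section LusternikSchnirelmann

open Topology

variable {X Y J : Type*}

lemma exists_odd {τ : X → X} (hτ : Involutive τ) (hfix : ∀ x, τ x ≠ x) :
    ∃ u : X → ZMod 2, ∀ x, u (τ x) = u x + 1 := by
  obtain ⟨_, -⟩ := exists_wellFoundedLT X
  refine ⟨fun x ↦ if x < τ x then 0 else 1, fun x ↦ ?_⟩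
  rcases (hfix x).lt_or_gt with h | h
  · simp [hτ x, h, h.not_gt, CharTwo.two_eq_zero, one_add_one_eq_two]
  · simp [hτ x, h, h.not_gt]

lemma exists_dist_lt_imp_eq [PseudoMetricSpace X] [CompactSpace X] {N : ℕ} {s : ℕ → X → Y}
    (hs : ∀ x, ∃ i < N, ∀ᶠ y in 𝓝 x, s i y = s i x) :
    ∃ δ > 0, ∀ x, ∃ i < N, ∃ a, ∀ y, dist y x < δ → s i y = a := by
  obtain ⟨δ, hδ, h⟩ := lebesgue_number_lemma_of_metric (isCompact_univ (X := X))
    (c := fun p : Fin N × Y ↦ interior {y | s p.1 y = p.2}) (fun _ ↦ isOpen_interior) fun x _ ↦ by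
      obtain ⟨i, hi, hx⟩ := hs x
      exact Set.mem_iUnion.2 ⟨(⟨i, hi⟩, s i x), mem_interior_iff_mem_nhds.2 hx⟩
  refine ⟨δ, hδ, fun x ↦ ?_⟩
  obtain ⟨⟨i, a⟩, hia⟩ := h x (Set.mem_univ x)
  exact ⟨i, i.2, a, fun y hy ↦ interior_subset (s := {y | s i y = a}) (hia hy)⟩

variable [DecidableEq J]

/-- A function on a power of `X` with values modulo two is symmetric and odd in each variable, with
respect to the involution `τ`. -/
structure IsOddSymmetric (τ : X → X) (s : (J → X) → ZMod 2) : Prop where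
  apply_comp_perm (g : Equiv.Perm J) (x : J → X) : s (x ∘ g) = s x
  apply_flipAt (j : J) (x : J → X) : s (flipAt τ j x) = s x + 1

lemma IsOddSymmetric.apply_flipAt_add_apply_flipAt {τ : X → X} {s s' : (J → X) → ZMod 2}
    (hs : IsOddSymmetric τ s) (hs' : IsOddSymmetric τ s') (j : J) (x y : J → X) :
    s (flipAt τ j x) + s' (flipAt τ j y) = s x + s' y := by
  rw [hs.apply_flipAt, hs'.apply_flipAt]
  linear_combination CharTwo.two_eq_zero (R := ZMod 2)

variable [Fintype J]

lemma isOddSymmetric_coordSum {τ : X → X} {u : X → ZMod 2} (hu : ∀ x, u (τ x) = u x + 1) :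
    IsOddSymmetric τ (coordSum u : (J → X) → ZMod 2) where
  apply_comp_perm g x := Equiv.sum_comp g fun j ↦ u (x j)
  apply_flipAt j x := by
    have off : ∀ i ∈ univ.erase j, u (flipAt τ j x i) = u (x i) := fun i hi ↦ by
      rw [flipAt, update_of_ne (ne_of_mem_erase hi)]
    rw [coordSum, coordSum, ← add_sum_erase _ _ (mem_univ j), ← add_sum_erase univ _ (mem_univ j),
      sum_congr rfl off, flipAt, update_self, hu]
    ring

variable {m : ℕ} {s : ℕ → (J → Sph m) → ZMod 2}

lemma exists_coboundary_eq_cupDiff_add_cupDiff_coordSum {u : Sph m → ZMod 2}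
    (hu : ∀ y, u (-y) = u y + 1) (hs : ∀ i, IsOddSymmetric Neg.neg (s i)) (K : ℕ) :
    ∃ β : (ℕ → J → Sph m) → ZMod 2, DependsOn β (Set.Iio (K + 1)) ∧
      (∀ (g : Equiv.Perm J) p, β ((· ∘ g) ∘ p) = β p) ∧ (∀ j p, β (flipAt Neg.neg j ∘ p) = β p) ∧
        ∀ p, coboundary (K + 1) β p =
          cupDiff s (K + 1) p + cupDiff (fun _ ↦ coordSum u) (K + 1) p := by
  have odd := isOddSymmetric_coordSum hu (J := J)
  let 𝒢 : Set ((J → Sph m) → J → Sph m) :=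
    Set.range (flipAt Neg.neg) ∪ Set.range fun (g : Equiv.Perm J) ↦ (· ∘ g)
  have invariant : ∀ s s' : (J → Sph m) → ZMod 2, IsOddSymmetric Neg.neg s →
      IsOddSymmetric Neg.neg s' → ∀ g ∈ 𝒢, ∀ x y, s (g x) + s' (g y) = s x + s' y := by
    rintro s s' hs hs' _ (⟨j, rfl⟩ | ⟨g, rfl⟩) x y
    · exact hs.apply_flipAt_add_apply_flipAt hs' j x y
    · simp only [hs.apply_comp_perm, hs'.apply_comp_perm]
  obtain ⟨β, hβ, hβ𝒢, hδβ⟩ := exists_coboundary_eq_cupDiff_add_cupDiff 𝒢 s (fun _ ↦ coordSum u)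
    (fun g hg k ↦ invariant _ _ (hs k) (hs k) g hg) (fun g hg _ ↦ invariant _ _ odd odd g hg)
    (fun g hg k x ↦ invariant _ _ (hs k) odd g hg x x) K
  exact ⟨β, hβ, fun g ↦ hβ𝒢 _ (Or.inr ⟨g, rfl⟩), fun j ↦ hβ𝒢 _ (Or.inl ⟨j, rfl⟩), hδβ⟩

theorem exists_forall_not_eventually_eq (hm : 2 ≤ m) (hodd : Odd ((Fintype.card J).uniformBell m))
    (hs : ∀ i, IsOddSymmetric Neg.neg (s i)) :
    ∃ x, ∀ i < Fintype.card J * m, ¬ ∀ᶠ y in 𝓝 x, s i y = s i x := by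
  by_contra! h
  obtain ⟨K, hK⟩ : ∃ K, Fintype.card J * m = K + 1 := by
    obtain ⟨i, hi, -⟩ := h fun _ ↦ pole 0
    exact Nat.exists_eq_add_one.2 (Nat.zero_lt_of_lt hi)
  obtain ⟨u, hu⟩ := exists_odd (neg_involutive (G := Sph m)) fun y ↦
    (ne_neg_of_mem_unit_sphere ℝ y).symm
  obtain ⟨β, hβ, hperm, hflip, hδβ⟩ :=
    exists_coboundary_eq_cupDiff_add_cupDiff_coordSum hu hs K
  obtain ⟨δ, hδ, hs_const⟩ := exists_dist_lt_imp_eq h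
  obtain ⟨ι, _, c, hc⟩ := exists_isFundamentalChain hu le_rfl hδ
  have vanish : ∀ (q : Word J (K + 1)) (ς : J → ι),
      cupDiff s (K + 1) (shuffle q (c ∘ ς)) = 0 := fun q ς ↦ by
    obtain ⟨i, hi, a, ha⟩ := hs_const (shuffle q (c ∘ ς) 0)
    have const : ∀ t, s i (shuffle q (c ∘ ς) t) = a := fun t ↦
      ha _ ((dist_pi_lt_iff hδ).2 fun j ↦ hc.dist_lt _ _ _)
    exact prod_eq_zero (mem_range.2 (hK ▸ hi)) (by rw [const, const, CharTwo.add_self_eq_zero])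
  have evaluate : (shuffleSum m c (coboundary (K + 1) β) : Word J (K + 1) → ZMod 2) =
      fun q ↦ if IsBalanced m q then 1 else 0 := funext fun q ↦ by
    rw [← shuffleSum_cupDiff_coordSum u hc.sum_cupDiff q]
    simp only [shuffleSum, hδβ, vanish, zero_add]
  have even := orbitSum_shuffleSum_coboundary_eq_zero hm (hc.isCycleMod (by omega)) hβ hperm hflip
  rw [evaluate, orbitSum_isBalanced (by omega) hK.symm, ZMod.natCast_eq_zero_iff_even] at even
  exact Nat.not_even_iff_odd.2 hodd even

end LusternikSchnirelmann

section LiftEnd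

open Topology

variable {E X Y : Type*} [TopologicalSpace E] [TopologicalSpace X] [TopologicalSpace Y] {p : E → X}

open Classical in
/-- The end point of the lift of `γ` to the covering space that starts at `e`; the junk value `e`
if `e` does not lie over the initial point of `γ`. -/
noncomputable def liftEnd (hp : IsCoveringMap p) (γ : C(I, X)) (e : E) : E :=
  if h : γ 0 = p e then hp.liftPath γ e h 1 else e

lemma map_liftEnd (hp : IsCoveringMap p) {γ : C(I, X)} {e : E} (h : γ 0 = p e) :
    p (liftEnd hp γ e) = γ 1 := by
  rw [liftEnd, dif_pos h]
  exact congrFun (hp.liftPath_lifts γ e h) 1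

lemma liftEnd_apply_of_comp_eq (hp : IsCoveringMap p) {τ : E → E} (hτ : Continuous τ)
    (hpτ : ∀ e, p (τ e) = p e) (γ : C(I, X)) (e : E) :
    liftEnd hp γ (τ e) = τ (liftEnd hp γ e) := by
  by_cases h : γ 0 = p e
  · rw [liftEnd, liftEnd, dif_pos h, dif_pos (h.trans (hpτ e).symm)]
    have lift : (⟨τ, hτ⟩ : C(E, E)).comp (hp.liftPath γ e h) =
        hp.liftPath γ (τ e) (h.trans (hpτ e).symm) := by
      refine (hp.eq_liftPath_iff' _).2 ⟨?_, congrArg τ (hp.liftPath_zero γ e h)⟩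
      rw [← hp.liftPath_lifts γ e h]
      exact funext fun t ↦ hpτ _
    exact (DFunLike.congr_fun lift 1).symm
  · rw [liftEnd, liftEnd, dif_neg h, dif_neg (by rwa [hpτ])]

lemma continuous_liftEnd (hp : IsCoveringMap p) {γ : Y → C(I, X)} {e : Y → E} (hγ : Continuous γ)
    (he : Continuous e) (h : ∀ y, γ y 0 = p (e y)) :
    Continuous fun y ↦ liftEnd hp (γ y) (e y) := by
  let H : C(I × Y, X) := ⟨fun q ↦ γ q.2 q.1, by fun_prop⟩
  let f : C(Y, E) := ⟨e, he⟩
  let L := hp.liftHomotopy H f h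
  suffices (fun y ↦ liftEnd hp (γ y) (e y)) = fun y ↦ L (1, y) by
    rw [this]
    fun_prop
  funext y
  rw [liftEnd, dif_pos (h y)]
  rfl

end LiftEnd

section Labels

open Topology

variable {E X Y J : Type*} [Fintype J] [TopologicalSpace E] {τ : E → E} {u : E → ZMod 2}

lemma eventually_add_eq [T2Space E] [TopologicalSpace Y] (hτ : Continuous τ)
    (hu : ∀ e, u (τ e) = u e + 1) {z z' : Y → E} {y : Y} (hz : ContinuousAt z y)
    (hz' : ContinuousAt z' y) (hzz' : ∀ᶠ y' in 𝓝 y, z y' = z' y' ∨ z y' = τ (z' y')) :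
    ∀ᶠ y' in 𝓝 y, u (z y') + u (z' y') = u (z y) + u (z' y) := by
  have hτ_ne : ∀ e, e ≠ τ e := fun e h ↦ by simpa [← h] using hu e
  rcases hzz'.self_of_nhds with h | h
  · filter_upwards [hzz', (hz.ne_iff_eventually_ne (hτ.continuousAt.comp hz')).1
      (h ▸ hτ_ne _)] with y' h₁ h₂
    rw [h₁.resolve_right h₂, h, CharTwo.add_self_eq_zero, CharTwo.add_self_eq_zero]
  · filter_upwards [hzz', (hz.ne_iff_eventually_ne hz').1 (h ▸ (hτ_ne _).symm)] with y' h₁ h₂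
    rw [h₁.resolve_left h₂, h, hu, hu]
    linear_combination CharTwo.add_self_eq_zero (u (z' y')) - CharTwo.add_self_eq_zero (u (z' y))

lemma eventually_coordSum_eq [T2Space E] [TopologicalSpace Y] (hJ : Even (Fintype.card J))
    (hτ : Continuous τ) (hu : ∀ e, u (τ e) = u e + 1) {z : Y → J → E} {y : Y}
    (hz : ContinuousAt z y)
    (hzτ : ∀ᶠ y' in 𝓝 y, ∀ j j', z y' j = z y' j' ∨ z y' j = τ (z y' j')) :
    ∀ᶠ y' in 𝓝 y, coordSum u (z y') = coordSum u (z y) := by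
  rcases isEmpty_or_nonempty J with _ | ⟨⟨o⟩⟩
  · simp [coordSum]
  have relative : ∀ y', coordSum u (z y') = ∑ j, (u (z y' j) + u (z y' o)) := fun y' ↦ by
    rw [sum_add_distrib, sum_const, card_univ, nsmul_eq_mul, ZMod.natCast_eq_zero_iff_even.2 hJ,
      zero_mul, add_zero, coordSum]
  have hz : ∀ j, ContinuousAt (z · j) y := continuousAt_pi.1 hz
  filter_upwards [Filter.eventually_all.2 fun j ↦
    eventually_add_eq hτ hu (hz j) (hz o) (hzτ.mono fun y' h ↦ h j o)] with y' h
  rw [relative, relative, sum_congr rfl fun j _ ↦ h j]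

variable [TopologicalSpace X] {p : E → X}

/-- The sum modulo two of the values of `u` at the points obtained from the coordinates of `y` by
transport along the reversals of the paths `s (p ∘ y) j` which end at their images in `X`. -/
noncomputable def transportSum (hp : IsCoveringMap p) (u : E → ZMod 2)
    (s : (J → X) → J → C(I, X)) (y : J → E) : ZMod 2 :=
  coordSum u fun j ↦ liftEnd hp (rpath (s (p ∘ y) j)) (y j)

lemma rpath_zero (γ : C(I, X)) : rpath γ 0 = γ 1 := by simp [rpath]

lemma rpath_one (γ : C(I, X)) : rpath γ 1 = γ 0 := by simp [rpath]

lemma isOddSymmetric_transportSum [DecidableEq J] (hp : IsCoveringMap p) (hτ : Continuous τ)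
    (hpτ : ∀ e, p (τ e) = p e) (hu : ∀ e, u (τ e) = u e + 1) {s : (J → X) → J → C(I, X)}
    (hs : ∀ (g : Equiv.Perm J) x, s (x ∘ g) = s x ∘ g) :
    IsOddSymmetric τ (transportSum hp u s) where
  apply_comp_perm g y := by
    simp only [transportSum, ← comp_assoc, hs]
    exact Equiv.sum_comp g fun j ↦ u (liftEnd hp (rpath (s (p ∘ y) j)) (y j))
  apply_flipAt j y := by
    have image : p ∘ flipAt τ j y = p ∘ y := by
      rw [flipAt, comp_update, hpτ]
      exact update_eq_self j (p ∘ y)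
    rw [transportSum, transportSum, image, ← (isOddSymmetric_coordSum hu).apply_flipAt j]
    congr 1
    funext i
    rcases eq_or_ne i j with rfl | hi
    · simp only [flipAt, update_self, liftEnd_apply_of_comp_eq hp hτ hpτ]
    · simp only [flipAt, update_of_ne hi]

lemma eventually_transportSum_eq [T2Space E] (hJ : Even (Fintype.card J))
    (hp : IsCoveringMap p) (hτ : Continuous τ) (hpτ : ∀ e e', p e = p e' ↔ e = e' ∨ e = τ e')
    (hu : ∀ e, u (τ e) = u e + 1) {U : Set (J → X)} (hU : IsOpen U)
    {s : (J → X) → J → C(I, X)} (hs : ContinuousOn s U)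
    (hs₀ : ∀ x ∈ U, ∀ j j', s x j 0 = s x j' 0) (hs₁ : ∀ x j, s x j 1 = x j) {y : J → E}
    (hy : p ∘ y ∈ U) : ∀ᶠ y' in 𝓝 y, transportSum hp u s y' = transportSum hp u s y := by
  let z (y : J → E) (j : J) : E := liftEnd hp (rpath (s (p ∘ y) j)) (y j)
  have h : ∀ y j, rpath (s (p ∘ y) j) 0 = p (y j) := fun y j ↦ by rw [rpath_zero, hs₁, comp_apply]
  let A : Set (J → E) := (p ∘ ·) ⁻¹' U
  have hpc : Continuous fun y : J → E ↦ p ∘ y := by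
    have := hp.continuous
    fun_prop
  have hA : A ∈ 𝓝 y := (hU.preimage hpc).mem_nhds hy
  have hz : ContinuousOn z A := by
    rw [continuousOn_iff_continuous_domRestrict]
    have hsA : Continuous fun y : A ↦ s (p ∘ y.1) :=
      hs.comp_continuous (hpc.comp continuous_subtype_val) fun y ↦ y.2
    refine continuous_pi fun j ↦ continuous_liftEnd hp ?_
      ((continuous_apply j).comp continuous_subtype_val) fun y ↦ h y.1 j
    exact (ContinuousMap.continuous_precomp _).comp ((continuous_apply j).comp hsA)
  refine eventually_coordSum_eq hJ hτ hu (hz.continuousAt hA) ?_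
  filter_upwards [hA] with y' hy' j j'
  rw [← hpτ, map_liftEnd hp (h y' j), map_liftEnd hp (h y' j'), rpath_one, rpath_one]
  exact hs₀ _ hy' j j'

end Labels

section Planners

open Topology

variable {E X : Type*} [TopologicalSpace X] {n k : ℕ}

lemma exists_total_of_hasSymPlanners (h : HasSymPlanners X n k) :
    ∃ (U : Fin k → Set (Fin n → X)) (s : Fin k → (Fin n → X) → Fin n → C(I, X)),
      (∀ i, IsOpen (U i)) ∧ (∀ x, ∃ i, x ∈ U i) ∧ (∀ i, ContinuousOn (s i) (U i)) ∧
      (∀ i, ∀ x ∈ U i, ∀ j j', s i x j 0 = s i x j' 0) ∧ (∀ i x j, s i x j 1 = x j) ∧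
      ∀ i (g : Equiv.Perm (Fin n)) x, s i (x ∘ g) = s i x ∘ g := by
  classical
  obtain ⟨U, hU, hcover, hperm, hs⟩ := h
  choose s hs₀ hs₁ hsperm using hs
  let t (i : Fin k) (x : Fin n → X) : Fin n → C(I, X) :=
    if hx : x ∈ U i then s i ⟨x, hx⟩ else fun j ↦ .const I (x j)
  have t_of_mem : ∀ i (x : U i), t i x = s i x := fun i x ↦ dif_pos x.2
  refine ⟨U, t, hU, fun x ↦ Set.mem_iUnion.1 (hcover ▸ Set.mem_univ x), fun i ↦ ?_,
    fun i x hx ↦ t_of_mem i ⟨x, hx⟩ ▸ hs₀ i ⟨x, hx⟩, fun i x j ↦ ?_, fun i g x ↦ ?_⟩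
  · rw [continuousOn_iff_continuous_domRestrict]
    exact (s i).continuous.congr fun x ↦ (t_of_mem i x).symm
  · by_cases hx : x ∈ U i
    · exact t_of_mem i ⟨x, hx⟩ ▸ hs₁ i ⟨x, hx⟩ j
    · simp [t, hx]
  · by_cases hx : x ∈ U i
    · rw [t_of_mem i ⟨x, hx⟩]
      exact (t_of_mem i ⟨_, hperm i g x hx⟩).trans (hsperm i ⟨x, hx⟩ g (hperm i g x hx))
    · have hxg : x ∘ g ∉ U i := by
        have cancel : permTuple g⁻¹ (x ∘ g) = x := funext fun j ↦ by simp [permTuple]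
        exact fun h ↦ hx (cancel ▸ hperm i g⁻¹ _ h)
      simp only [t, dif_neg hx, dif_neg hxg]
      rfl

theorem exists_isOddSymmetric_of_hasSymPlanners [TopologicalSpace E] [T2Space E] {p : E → X}
    (hp : IsCoveringMap p) {τ : E → E} (hτ : Continuous τ) (hτ_inv : Involutive τ)
    (hτ_ne : ∀ e, τ e ≠ e) (hpτ : ∀ e e', p e = p e' ↔ e = e' ∨ e = τ e') (hn : Even n)
    (h : HasSymPlanners X n k) : ∃ s : ℕ → (Fin n → E) → ZMod 2,
      (∀ i, IsOddSymmetric τ (s i)) ∧ ∀ y, ∃ i < k, ∀ᶠ y' in 𝓝 y, s i y' = s i y := by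
  obtain ⟨u, hu⟩ := exists_odd hτ_inv hτ_ne
  obtain ⟨U, s, hU, hcover, hs, hs₀, hs₁, hsperm⟩ := exists_total_of_hasSymPlanners h
  refine ⟨fun i ↦ if hi : i < k then transportSum hp u (s ⟨i, hi⟩) else coordSum u, fun i ↦ ?_,
    fun y ↦ ?_⟩
  · dsimp only
    split_ifs with hi
    · exact isOddSymmetric_transportSum hp hτ (fun e ↦ (hpτ _ _).2 (Or.inr rfl)) hu (hsperm _)
    · exact isOddSymmetric_coordSum hu
  · obtain ⟨i, hi⟩ := hcover (p ∘ y)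
    have := eventually_transportSum_eq (by rwa [Fintype.card_fin]) hp hτ hpτ hu (hU i) (hs i)
      (hs₀ i) (hs₁ i) hi
    exact ⟨i, i.2, by simpa only [i.2, dif_pos] using this⟩

end Planners

section ProjectiveSpace

variable {m : ℕ}

/-- The canonical projection of the sphere onto projective space. -/
def toRP (m : ℕ) : Sph m → RP m := Quotient.mk (antipodalSetoid m)

lemma toRP_eq_iff {y z : Sph m} : toRP m y = toRP m z ↔ y = z ∨ y = -z :=
  (Quotient.eq (r := antipodalSetoid m)).trans
    (or_congr Subtype.ext_iff.symm (Subtype.ext_iff (a2 := -z)).symm)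

lemma toRP_surjective : Surjective (toRP m) := Quotient.mk_surjective

/-- The group `{1, -1}`, written as the unit sphere of `ℝ`, acts on the sphere by multiplication. -/
lemma isQuotientCoveringMap_toRP : IsQuotientCoveringMap (toRP m) (Metric.sphere (0 : ℝ) 1) := by
  have eq_one_or : ∀ g : Metric.sphere (0 : ℝ) 1, g = 1 ∨ g = -1 := fun g ↦ by
    simpa [Subtype.ext_iff] using eq_or_eq_neg_of_abs_eq (norm_eq_of_mem_sphere g)
  have : Finite (Metric.sphere (0 : ℝ) 1) :=
    Set.finite_univ_iff.1 ((Set.toFinite {1, -1}).subset fun g _ ↦ eq_one_or g)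
  have neg_one_smul : ∀ y : Sph m, (-1 : Metric.sphere (0 : ℝ) 1) • y = -y := fun y ↦
    Subtype.ext (neg_one_smul ℝ y.1)
  have : IsCancelSMul (Metric.sphere (0 : ℝ) 1) (Sph m) := by
    refine isCancelSMul_iff_eq_one_of_smul_eq.2 fun g y hg ↦ (eq_one_or g).resolve_right ?_
    rintro rfl
    exact (ne_neg_of_mem_unit_sphere ℝ y) ((neg_one_smul y).symm.trans hg).symm
  have quotient : Topology.IsQuotientMap (toRP m) := isQuotientMap_quotient_mk'
  refine quotient.isQuotientCoveringMap_of_properlyDiscontinuousSMul fun {y z} ↦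
    toRP_eq_iff.trans ⟨?_, ?_⟩
  · rintro (rfl | rfl)
    · exact MulAction.mem_orbit_self _
    · exact ⟨-1, neg_one_smul z⟩
  · rintro ⟨g, rfl⟩
    exact (eq_one_or g).imp (fun h ↦ by simp [h]) fun h ↦ by simp [h, neg_one_smul]

theorem lt_of_hasSymPlanners {n k : ℕ} (hn : Even n) (hm : 2 ≤ m) (hodd : Odd (n.uniformBell m))
    (h : HasSymPlanners (RP m) n k) : n * m < k := by
  obtain ⟨s, hs, hlocal⟩ := exists_isOddSymmetric_of_hasSymPlanners
    isQuotientCoveringMap_toRP.isCoveringMap continuous_neg (neg_involutive (G := Sph m))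
    (fun y ↦ (ne_neg_of_mem_unit_sphere ℝ y).symm) (fun y z ↦ toRP_eq_iff) hn h
  obtain ⟨x, hx⟩ := exists_forall_not_eventually_eq hm (by rwa [Fintype.card_fin]) hs
  obtain ⟨i, hik, hi⟩ := hlocal x
  rw [Fintype.card_fin] at hx
  exact (not_lt.1 fun h ↦ hx i h hi).trans_lt hik

end ProjectiveSpace

section UpperBound

open Polynomial

lemma hasSymPlanners_of_contractions {X : Type*} [TopologicalSpace X] {n k : ℕ}
    {W : Fin k → Set X} {c : Fin k → X} {H : Fin k → X × I → X} (hW : ∀ i, IsOpen (W i))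
    (hcover : ∀ x : Fin n → X, ∃ i, ∀ j, x j ∈ W i)
    (hH : ∀ i, ContinuousOn (H i) (W i ×ˢ Set.univ))
    (hH₀ : ∀ i, ∀ x ∈ W i, H i (x, 0) = c i) (hH₁ : ∀ i, ∀ x ∈ W i, H i (x, 1) = x) :
    HasSymPlanners X n k := by
  refine ⟨fun i ↦ Set.univ.pi fun _ ↦ W i, fun i ↦ isOpen_set_pi Set.finite_univ fun _ _ ↦ hW i,
    Set.iUnion_eq_univ_iff.2 fun x ↦ (hcover x).imp fun i hi j _ ↦ hi j,
    fun i g x hx j _ ↦ hx (g j) trivial, fun i ↦ ?_⟩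
  have motion (j : Fin n) :
      Continuous fun q : (Set.univ.pi fun _ : Fin n ↦ W i) × I ↦ H i (q.1.1 j, q.2) :=
    (hH i).comp_continuous (((continuous_apply j).comp
      (continuous_subtype_val.comp continuous_fst)).prodMk continuous_snd)
      fun q ↦ ⟨q.1.2 j trivial, trivial⟩
  exact ⟨⟨fun x j ↦ ContinuousMap.curry ⟨_, motion j⟩ x,
      continuous_pi fun j ↦ ContinuousMap.continuous _⟩,
    fun x j j' ↦ (hH₀ i _ (x.2 j trivial)).trans (hH₀ i _ (x.2 j' trivial)).symm,
    fun x j ↦ hH₁ i _ (x.2 j trivial), fun x g hx ↦ rfl⟩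

variable {m : ℕ} {a : EuclideanSpace ℝ (Fin (m + 1))} {y : Sph m}

lemma continuousAt_toSphere (ha : a ≠ 0) : ContinuousAt toSphere a := by
  rw [Topology.IsInducing.subtypeVal.continuousAt_iff]
  have normalize : ContinuousAt (fun v : EuclideanSpace ℝ (Fin (m + 1)) ↦ ‖v‖⁻¹ • v) a :=
    (continuous_norm.continuousAt.inv₀ (norm_ne_zero_iff.2 ha)).smul continuousAt_id
  exact normalize.congr ((eventually_ne_nhds ha).mono fun v hv ↦ (coe_toSphere hv).symm)

lemma toRP_toSphere_smul {r : ℝ} (hr : r ≠ 0) (y : Sph m) :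
    toRP m (toSphere (r • (y : EuclideanSpace ℝ (Fin (m + 1))))) = toRP m y := by
  have hy : ‖y.1‖ = 1 := norm_eq_of_mem_sphere y
  have hv := coe_toSphere (smul_ne_zero hr (norm_ne_zero_iff.1 (hy ▸ one_ne_zero)))
  rw [norm_smul, hy, mul_one, smul_smul] at hv
  rw [toRP_eq_iff, Subtype.ext_iff, Subtype.ext_iff, hv, coe_neg_sphere]
  rcases abs_choice r with h | h
  · exact Or.inl (by rw [Real.norm_eq_abs, h, inv_mul_cancel₀ hr, one_smul])
  · exact Or.inr (by rw [Real.norm_eq_abs, h, inv_neg, neg_mul, inv_mul_cancel₀ hr, neg_one_smul])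

/-- The segment from `a` to the orthogonal projection of `a` to the line spanned by `y`. -/
noncomputable def projSegment (a : EuclideanSpace ℝ (Fin (m + 1))) (q : Sph m × I) :
    EuclideanSpace ℝ (Fin (m + 1)) :=
  (1 - (q.2 : ℝ)) • a + ((q.2 : ℝ) * inner ℝ a q.1.1) • q.1.1

lemma projSegment_ne_zero (hy : inner ℝ a y.1 ≠ 0) (t : I) : projSegment a (y, t) ≠ 0 := by
  have ha : a ≠ 0 := fun h ↦ hy (by rw [h, inner_zero_left])
  suffices 0 < inner ℝ a (projSegment a (y, t)) from fun h ↦ by simp [h] at this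
  have expand : inner ℝ a (projSegment a (y, t)) =
      (1 - (t : ℝ)) * inner ℝ a a + t * (inner ℝ a y.1 * inner ℝ a y.1) := by
    simp only [projSegment, inner_add_right, inner_smul_right]
    ring
  rw [expand]
  rcases t.2.1.eq_or_lt with h | h
  · rw [← h, sub_zero, one_mul, zero_mul, add_zero]
    exact real_inner_self_pos.2 ha
  · exact add_pos_of_nonneg_of_pos (mul_nonneg (sub_nonneg.2 t.2.2) real_inner_self_nonneg)
      (mul_pos h (mul_self_pos.2 hy))

/-- The motion of projective space from the point `[a]` to `[y]` which follows `projSegment`. -/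
noncomputable def projMotion (a : EuclideanSpace ℝ (Fin (m + 1))) (q : RP m × I) : RP m :=
  Quotient.lift (s := antipodalSetoid m) (fun y ↦ toRP m (toSphere (projSegment a (y, q.2))))
    (fun y z h ↦ by
      rcases h with h | h
      · rw [Subtype.ext h]
      · simp only [projSegment, h, inner_neg_right, mul_neg, neg_smul, smul_neg, neg_neg]) q.1

lemma projMotion_toRP (q : Sph m × I) :
    projMotion a (toRP m q.1, q.2) = toRP m (toSphere (projSegment a q)) := rfl

lemma projMotion_zero (x : RP m) : projMotion a (x, 0) = toRP m (toSphere a) := by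
  obtain ⟨y, rfl⟩ := toRP_surjective x
  rw [projMotion_toRP (y, 0)]
  simp [projSegment]

/-- The complement in projective space of the hyperplane orthogonal to `a`. -/
def hyperplaneCompl (a : EuclideanSpace ℝ (Fin (m + 1))) : Set (RP m) :=
  toRP m '' {y | inner ℝ a y.1 ≠ 0}

lemma isOpen_hyperplaneCompl : IsOpen (hyperplaneCompl a) :=
  isQuotientCoveringMap_toRP.isOpenQuotientMap.isOpenMap _
    (isOpen_ne_fun (by fun_prop) continuous_const)

lemma projMotion_one {x : RP m} (hx : x ∈ hyperplaneCompl a) : projMotion a (x, 1) = x := by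
  obtain ⟨y, hy, rfl⟩ := hx
  rw [projMotion_toRP (y, 1)]
  simpa [projSegment] using toRP_toSphere_smul hy y

lemma continuousOn_projMotion :
    ContinuousOn (projMotion a) (hyperplaneCompl a ×ˢ Set.univ) := by
  rintro ⟨_, t⟩ ⟨⟨y, hy, rfl⟩, -⟩
  refine ContinuousAt.continuousWithinAt ?_
  have quotient : IsOpenQuotientMap (Prod.map (toRP m) (id : I → I)) :=
    isQuotientCoveringMap_toRP.isOpenQuotientMap.prodMap .id
  have segment : Continuous (projSegment a) := by
    unfold projSegment
    fun_prop
  refine (quotient.continuousAt_comp_iff (x := (y, t))).1 ?_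
  exact isQuotientCoveringMap_toRP.continuous.continuousAt.comp
    ((continuousAt_toSphere (projSegment_ne_zero hy t)).comp segment.continuousAt)

/-- The point `(1, t, …, t ^ m)` of the moment curve. -/
noncomputable def momentCurve (m : ℕ) (t : ℝ) : EuclideanSpace ℝ (Fin (m + 1)) :=
  WithLp.toLp 2 fun l ↦ t ^ (l : ℕ)

lemma card_filter_inner_momentCurve_le (ha : a ≠ 0) (s : Finset ℝ) :
    #{t ∈ s | inner ℝ (momentCurve m t) a = 0} ≤ m := by
  let P : ℝ[X] := ∑ l : Fin (m + 1), C (a l) * X ^ (l : ℕ)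
  have eval : ∀ t, P.eval t = inner ℝ (momentCurve m t) a := fun t ↦ by
    simp [P, momentCurve, eval_finsetSum, PiLp.inner_apply]
  have coeff : ∀ l : Fin (m + 1), P.coeff l = a l := fun l ↦ by simp [P, coeff_X_pow, Fin.val_inj]
  have hP : P ≠ 0 := fun h ↦ ha (by ext l; rw [← coeff, h]; simp)
  have degree : P.natDegree ≤ m := natDegree_sum_le_of_forall_le _ _ fun l _ ↦
    (natDegree_C_mul_X_pow_le _ _).trans (Nat.le_of_lt_succ l.2)
  refine (card_le_card fun t ht ↦ ?_).trans
    ((Multiset.toFinset_card_le P.roots).trans (P.card_roots'.trans degree))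
  rw [Multiset.mem_toFinset, mem_roots hP, IsRoot, eval]
  exact (mem_filter.1 ht).2

lemma exists_forall_mem_hyperplaneCompl {n : ℕ} (x : Fin n → RP m) :
    ∃ i : Fin (n * m + 1), ∀ j, x j ∈ hyperplaneCompl (momentCurve m i) := by
  choose y hy using fun j ↦ toRP_surjective (x j)
  let T : Finset ℝ := (range (n * m + 1)).map Nat.castEmbedding
  let B (j : Fin n) : Finset ℝ := {t ∈ T | inner ℝ (momentCurve m t) (y j).1 = 0}
  have few : #(univ.biUnion B) < #T := by
    rw [card_map, card_range, Nat.lt_succ_iff]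
    simpa using card_biUnion_le_card_mul univ B m fun j _ ↦
      card_filter_inner_momentCurve_le (ne_zero_of_mem_unit_sphere (y j)) T
  obtain ⟨_, hT, hB⟩ := exists_mem_notMem_of_card_lt_card few
  obtain ⟨i, hi, rfl⟩ := mem_map.1 hT
  exact ⟨⟨i, mem_range.1 hi⟩, fun j ↦ ⟨y j, fun h ↦
    hB (mem_biUnion.2 ⟨j, mem_univ _, mem_filter.2 ⟨hT, h⟩⟩), hy j⟩⟩

theorem hasSymPlanners_RP (n m : ℕ) : HasSymPlanners (RP m) n (n * m + 1) :=
  hasSymPlanners_of_contractions (H := fun i ↦ projMotion (momentCurve m i))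
    (fun _ ↦ isOpen_hyperplaneCompl) exists_forall_mem_hyperplaneCompl
    (fun _ ↦ continuousOn_projMotion) (fun _ x _ ↦ projMotion_zero x) fun _ _ ↦ projMotion_one

end UpperBound

end SymmetrizedTC

theorem TCsym_projective_space_general (n e : ℕ) (hn : Even n) (he : 1 ≤ e) :
    TCsym (RP (2 ^ e)) n = ((n * 2 ^ e + 1 : ℕ) : ℕ∞) := by
  refine le_antisymm (sInf_le ⟨_, rfl, SymmetrizedTC.hasSymPlanners_RP n (2 ^ e)⟩) (le_sInf ?_)
  rintro _ ⟨k, rfl, h⟩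
  exact_mod_cast SymmetrizedTC.lt_of_hasSymPlanners hn (Nat.le_self_pow (by omega) 2)
    (SymmetrizedTC.odd_uniformBell_two_pow n e) h

/-- For every even `n ≥ 2` and every `m = 2^e` with `e > 1`,
`TC^Σ_n(ℝP^m) = nm + 1`. -/
theorem TCsym_projective_space (n m e : ℕ) (hn : 2 ≤ n) (hne : Even n)
    (he : 1 < e) (hm : m = 2 ^ e) :
    TCsym (RP m) n = ((n * m + 1 : ℕ) : ℕ∞) := by
  subst hm
  exact TCsym_projective_space_general n e hne he.le
end
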